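/- arXiv:1809.08539 — 3 statements merged into one kernel-verified Lean document; each statement's English description precedes it below -/
import Mathlib

section
/- Let ρ₀ ∈ (0,1) be a constant and let X = (X_1,…,X_n) be a centered Gaussian random vector in ℝ^n with var(X_i) = 1 for all i and whose correlation matrix R satisfies R_{ij} ≤ ρ₀ for all i ≠ j. Then there is a universal constant c₀ > 0 such that E[max_{1≤i≤n} X_i] ≥ √(2(1−ρ₀)log n) − c₀ √(log log(max{n,3})). -/
open MeasureTheory ProbabilityTheory Real

/-- `X` is a centered Gaussian random vector with standardized entries and
correlation (= covariance) matrix `R`: every linear combination of the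
coordinates is a centered real Gaussian with the corresponding variance,
and `R` has unit diagonal. -/
def IsCenteredGaussianVec {Ω : Type*} [MeasureSpace Ω] {n : ℕ}
    (X : Fin n → Ω → ℝ) (R : Matrix (Fin n) (Fin n) ℝ) : Prop :=
  (∀ i, Measurable (X i)) ∧ (∀ i, R i i = 1) ∧
    ∀ a : Fin n → ℝ,
      Measure.map (fun ω => ∑ i, a i * X i ω) (ℙ : Measure Ω) =
        gaussianReal 0 (Real.toNNReal (∑ i, ∑ j, a i * R i j * a j))



lemma stein1 (h h' : ℝ → ℝ) (M : ℝ) (hd : ∀ x, HasDerivAt h (h' x) x)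
    (hb : ∀ x, |h x| ≤ M) (hb' : ∀ x, |h' x| ≤ M) :
    ∫ v, v * h v ∂(gaussianReal 0 1) = ∫ v, h' v ∂(gaussianReal 0 1) := by
  have hm : Measurable h' := by
    have : h' = deriv h := by ext x; exact (hd x).deriv.symm
    rw [this]; exact measurable_deriv h
  have hc : Continuous h := continuous_iff_continuousAt.2 fun x => (hd x).continuousAt
  have hpd : ∀ x, HasDerivAt (gaussianPDFReal 0 1) (-(x * gaussianPDFReal 0 1 x)) x := by
    intro x
    have h1 : HasDerivAt (fun x : ℝ => -(x - 0) ^ 2 / (2 * ((1 : NNReal) : ℝ))) (-x) x := by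
      have := (((hasDerivAt_id x).sub_const 0).pow 2).neg.div_const (2 * ((1 : NNReal) : ℝ))
      refine this.congr_deriv ?_
      simp
      ring
    have := h1.exp.const_mul ((√(2 * π * ((1 : NNReal) : ℝ)))⁻¹)
    rw [gaussianPDFReal_def]
    refine this.congr_deriv ?_
    ring
  have hpi := integrable_gaussianPDFReal 0 1
  have hxp : Integrable (fun x => x * gaussianPDFReal 0 1 x) := by
    have := (memLp_id_gaussianReal (μ := 0) (v := 1) 1).integrable (by simp)
    rw [gaussianReal_of_var_ne_zero _ one_ne_zero] at this
    rw [integrable_withDensity_iff_integrable_smul' (measurable_gaussianPDF 0 1)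
      (by filter_upwards with x using gaussianPDF_lt_top)] at this
    simpa [toReal_gaussianPDF, mul_comm] using this
  rw [integral_gaussianReal_eq_integral_smul one_ne_zero,
    integral_gaussianReal_eq_integral_smul one_ne_zero]
  have key := integral_mul_deriv_eq_deriv_mul_of_integrable (u := h) (u' := h')
    (v := gaussianPDFReal 0 1) (v' := fun x => -(x * gaussianPDFReal 0 1 x))
    (fun x _ => hd x) (fun x _ => hpd x)
    (hxp.neg.bdd_mul (c := M) hc.aestronglyMeasurable (by filter_upwards with x using hb x))
    (hpi.bdd_mul (c := M) hm.aestronglyMeasurable (by filter_upwards with x using hb' x))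
    (hpi.bdd_mul (c := M) hc.aestronglyMeasurable (by filter_upwards with x using hb x))
  simp only [smul_eq_mul]
  calc _ = -∫ x, h x * -(x * gaussianPDFReal 0 1 x) := by
        rw [← integral_neg]; congr 1; ext x; ring
    _ = _ := by rw [key, neg_neg]; congr 1; ext x; ring

noncomputable def sm {n : ℕ} (x : Fin n → ℝ) (i : Fin n) : ℝ := exp (x i) / ∑ j, exp (x j)
noncomputable def lse {n : ℕ} (x : Fin n → ℝ) : ℝ := log (∑ j, exp (x j))

lemma sumexp_pos {n : ℕ} [NeZero n] (x : Fin n → ℝ) : 0 < ∑ j, exp (x j) :=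
  Finset.sum_pos (fun _ _ => exp_pos _) Finset.univ_nonempty

lemma sm_nonneg {n : ℕ} (x : Fin n → ℝ) (i : Fin n) : 0 ≤ sm x i := by
  unfold sm; positivity

lemma sm_sum {n : ℕ} [NeZero n] (x : Fin n → ℝ) : ∑ i, sm x i = 1 := by
  unfold sm
  rw [← Finset.sum_div, div_self (sumexp_pos x).ne']

lemma sm_le_one {n : ℕ} [NeZero n] (x : Fin n → ℝ) (i : Fin n) : sm x i ≤ 1 := by
  rw [← sm_sum x]
  exact Finset.single_le_sum (fun i _ => sm_nonneg x i) (Finset.mem_univ i)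

lemma sm_cont {n : ℕ} [NeZero n] (i : Fin n) : Continuous (fun x : Fin n → ℝ => sm x i) := by
  unfold sm
  exact Continuous.div (by fun_prop) (by fun_prop) (fun x => (sumexp_pos x).ne')

lemma lse_cont {n : ℕ} [NeZero n] : Continuous (fun x : Fin n → ℝ => lse x) := by
  unfold lse
  exact Continuous.log (by fun_prop) (fun x => (sumexp_pos x).ne')

lemma lse_deriv {n : ℕ} [NeZero n] (W : ℝ → Fin n → ℝ) (w : Fin n → ℝ) (t : ℝ)
    (hW : ∀ j, HasDerivAt (fun t => W t j) (w j) t) :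
    HasDerivAt (fun t => lse (W t)) (∑ i, sm (W t) i * w i) t := by
  unfold lse
  have := (HasDerivAt.fun_sum (u := Finset.univ) fun j _ => (hW j).exp).log (sumexp_pos (W t)).ne'
  convert this using 1
  rw [Finset.sum_div]
  refine Finset.sum_congr rfl fun i _ => ?_
  unfold sm; ring

lemma sm_deriv {n : ℕ} [NeZero n] (W : ℝ → Fin n → ℝ) (w : Fin n → ℝ) (t : ℝ)
    (hW : ∀ j, HasDerivAt (fun t => W t j) (w j) t) (i : Fin n) :
    HasDerivAt (fun t => sm (W t) i) (sm (W t) i * (w i - ∑ j, sm (W t) j * w j)) t := by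
  have h := (hW i).sub (lse_deriv W w t hW)
  have h2 := h.exp
  have e : ∀ x : Fin n → ℝ, sm x i = exp (x i - lse x) := by
    intro x; rw [exp_sub, lse, exp_log (sumexp_pos x)]; rfl
  have e2 : (fun t => sm (W t) i) = fun t => exp (W t i - lse (W t)) := by
    ext t; exact e _
  rw [e2]
  refine h2.congr_deriv ?_
  rw [e]; rfl

lemma le_lse {n : ℕ} [NeZero n] (x : Fin n → ℝ) : (⨆ i, x i) ≤ lse x := by
  refine ciSup_le fun i => ?_
  unfold lse
  rw [le_log_iff_exp_le (sumexp_pos x)]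
  exact Finset.single_le_sum (f := fun i => exp (x i)) (fun i _ => (exp_pos _).le) (Finset.mem_univ i)

lemma lse_le {n : ℕ} [NeZero n] (x : Fin n → ℝ) : lse x ≤ (⨆ i, x i) + log n := by
  unfold lse
  rw [log_le_iff_le_exp (sumexp_pos x), exp_add, exp_log (by exact_mod_cast NeZero.pos n)]
  calc _ ≤ ∑ j : Fin n, exp (⨆ i, x i) := Finset.sum_le_sum fun j _ =>
        exp_le_exp.2 (le_ciSup (Set.finite_range x).bddAbove j)
    _ = _ := by simp [mul_comm]

lemma abs_sup_le {n : ℕ} [NeZero n] (x : Fin n → ℝ) : |⨆ i, x i| ≤ ∑ i, |x i| := by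
  obtain ⟨i, hi⟩ := exists_eq_ciSup_of_finite (f := x)
  rw [← hi]
  exact Finset.single_le_sum (f := fun i => |x i|) (fun i _ => abs_nonneg _) (Finset.mem_univ i)

lemma abs_lse_le {n : ℕ} [NeZero n] (x : Fin n → ℝ) : |lse x| ≤ ∑ i, |x i| + log n := by
  have h1 := le_lse x
  have h2 := lse_le x
  have h3 := abs_le.1 (abs_sup_le x)
  have : 0 ≤ log n := log_natCast_nonneg n
  rw [abs_le]; constructor <;> linarith

lemma ibp_sm {n : ℕ} [NeZero n] (μ : Measure (Fin n → ℝ)) [IsGaussian μ]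
    (h0 : ∀ i, ∫ x, x i ∂μ = 0) (C : Fin n → Fin n → ℝ)
    (hC : ∀ i j, cov[fun x : Fin n → ℝ => x i, fun x => x j; μ] = C i j) (hC1 : ∀ i, C i i = 1)
    (a : ℝ) (b : Fin n → ℝ) (i : Fin n) :
    ∫ x, x i * sm (a • x + b) i ∂μ =
      ∫ x, a * (sm (a • x + b) i * (1 - ∑ j, sm (a • x + b) j * C i j)) ∂μ := by
  have hG : HasGaussianLaw (fun x : Fin n → ℝ => x) μ := IsGaussian.hasGaussianLaw_id
  have hL2 : ∀ j, MemLp (fun x : Fin n → ℝ => x j) 2 μ := fun j =>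
    (hG.map_fun (ContinuousLinearMap.proj j : (Fin n → ℝ) →L[ℝ] ℝ)).memLp_two
  set U : (Fin n → ℝ) → (Fin n → ℝ) := fun x j => x j - C i j * x i with hU
  have hUm : Measurable U := by fun_prop
  have hind : IndepFun (fun x : Fin n → ℝ => x i) U μ := by
    have h1 : HasGaussianLaw (fun x : Fin n → ℝ =>
        ((fun _ : Unit => x i), fun j => x j - C i j * x i)) μ :=
      hG.map_fun ((ContinuousLinearMap.pi fun _ : Unit =>
        (ContinuousLinearMap.proj i : (Fin n → ℝ) →L[ℝ] ℝ)).prod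
        (ContinuousLinearMap.pi fun j => (ContinuousLinearMap.proj j : (Fin n → ℝ) →L[ℝ] ℝ)
          - C i j • ContinuousLinearMap.proj i))
    have h2 := h1.indepFun_of_covariance_eval (X := fun (_ : Unit) (x : Fin n → ℝ) => x i)
      (Y := fun j (x : Fin n → ℝ) => x j - C i j * x i) (by
        intro _ j
        rw [covariance_fun_sub_right (hL2 i) (hL2 j) ((hL2 i).const_mul _),
          covariance_const_mul_right, hC, hC, hC1]
        ring)
    exact h2.comp (φ := fun f : Unit → ℝ => f ()) (measurable_pi_apply _) measurable_id
  have hlaw : μ.map (fun x : Fin n → ℝ => x i) = gaussianReal 0 1 := by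
    have h1 := (hG.map_fun (ContinuousLinearMap.proj i : (Fin n → ℝ) →L[ℝ] ℝ)).map_eq_gaussianReal
    have hv : Var[fun x : Fin n → ℝ => x i; μ] = 1 := by
      rw [← covariance_self (measurable_pi_apply i).aemeasurable, hC, hC1]
    simpa [h0, hv] using h1
  have hprod : μ.map (fun x => (x i, U x)) = (gaussianReal 0 1).prod (μ.map U) := by
    rw [← hlaw]
    exact (indepFun_iff_map_prod_eq_prod_map_map (measurable_pi_apply i).aemeasurable (by fun_prop)).1 hind
  have : IsProbabilityMeasure (μ.map U) := Measure.isProbabilityMeasure_map (by fun_prop)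
  -- the reconstruction
  let G : ℝ × (Fin n → ℝ) → (Fin n → ℝ) := fun p => a • (fun j => p.2 j + C i j * p.1) + b
  have hGc : Continuous G := by fun_prop
  have hGU : ∀ x, G (x i, U x) = a • x + b := by
    intro x; ext j; simp [G, hU]
  have hsc : ∀ j, Continuous fun p => sm (G p) j := fun j => (sm_cont j).comp hGc
  have hpm : Measurable (fun x : Fin n → ℝ => (x i, U x)) := by fun_prop
  have bd : ∀ p, |sm (G p) i * (1 - ∑ j, sm (G p) j * C i j)| ≤ 1 + ∑ j, |C i j| := by
    intro p
    rw [abs_mul, abs_of_nonneg (sm_nonneg _ _)]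
    have h1 : |∑ j, sm (G p) j * C i j| ≤ ∑ j, |C i j| := by
      refine (Finset.abs_sum_le_sum_abs _ _).trans (Finset.sum_le_sum fun j _ => ?_)
      rw [abs_mul, abs_of_nonneg (sm_nonneg _ _)]
      exact mul_le_of_le_one_left (abs_nonneg _) (sm_le_one _ _)
    have h2 : |1 - ∑ j, sm (G p) j * C i j| ≤ 1 + ∑ j, |C i j| :=
      (abs_sub _ _).trans (by simpa using h1)
    exact (mul_le_of_le_one_left (abs_nonneg _) (sm_le_one _ _)).trans h2
  calc ∫ x, x i * sm (a • x + b) i ∂μ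
      = ∫ p, p.1 * sm (G p) i ∂(μ.map (fun x => (x i, U x))) := by
        rw [integral_map hpm.aemeasurable
          (Continuous.aestronglyMeasurable (by fun_prop))]
        simp [hGU]
    _ = ∫ u, ∫ v, v * sm (G (v, u)) i ∂(gaussianReal 0 1) ∂(μ.map U) := by
        rw [hprod, integral_prod_symm]
        have h1 : Integrable (fun p : ℝ × (Fin n → ℝ) => p.1)
            ((gaussianReal 0 1).prod (μ.map U)) := by
          have := (memLp_id_gaussianReal (μ := 0) (v := 1) 1).integrable (by simp)
          exact this.comp_fst _
        exact h1.mul_bdd (c := 1) (hsc i).aestronglyMeasurable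
          (by filter_upwards with p; rw [norm_eq_abs, abs_of_nonneg (sm_nonneg _ _)]; exact sm_le_one _ _)
    _ = ∫ u, ∫ v, a * (sm (G (v, u)) i * (1 - ∑ j, sm (G (v, u)) j * C i j))
          ∂(gaussianReal 0 1) ∂(μ.map U) := by
        congr 1; ext u
        refine stein1 _ _ (1 + |a| * (1 + ∑ j, |C i j|)) (fun v => ?_) (fun v => ?_) (fun v => ?_)
        · have := sm_deriv (fun v => G (v, u)) (fun j => a * C i j) v (fun j => by
            have := (((hasDerivAt_id v).const_mul (C i j)).const_add (u j)).const_mul a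
              |>.add_const (b j)
            refine (this.congr_deriv (by simp)).congr_of_eventuallyEq ?_
            filter_upwards with t
            simp [G]) i
          refine this.congr_deriv ?_
          have e : ∑ j, sm (G (v, u)) j * (a * C i j) = a * ∑ j, sm (G (v, u)) j * C i j := by
            rw [Finset.mul_sum]
            exact Finset.sum_congr rfl fun j _ => by ring
          rw [hC1, e]; ring
        · rw [abs_of_nonneg (sm_nonneg _ _)]
          have : 0 ≤ |a| * (1 + ∑ j, |C i j|) := by positivity
          linarith [sm_le_one (G (v, u)) i]
        · rw [abs_mul]
          linarith [mul_le_mul_of_nonneg_left (bd (v, u)) (abs_nonneg a)]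
    _ = ∫ p, a * (sm (G p) i * (1 - ∑ j, sm (G p) j * C i j)) ∂(μ.map (fun x => (x i, U x))) := by
        rw [hprod, integral_prod_symm]
        refine Integrable.const_mul (Integrable.of_bound (C := 1 + ∑ j, |C i j|) ?_ ?_) a
        · refine Continuous.aestronglyMeasurable ?_
          fun_prop
        · filter_upwards with p using bd p
    _ = _ := by
        rw [integral_map hpm.aemeasurable (by
          refine Continuous.aestronglyMeasurable ?_
          fun_prop)]
        simp [hGU]

lemma gauss_coord_int {n : ℕ} (μ : Measure (Fin n → ℝ)) [IsGaussian μ] (i : Fin n) :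
    Integrable (fun x : Fin n → ℝ => x i) μ := by
  have hG : HasGaussianLaw (fun x : Fin n → ℝ => x) μ := IsGaussian.hasGaussianLaw_id
  exact (hG.map_fun (ContinuousLinearMap.proj i : (Fin n → ℝ) →L[ℝ] ℝ)).integrable

lemma sm_int {n : ℕ} [NeZero n] {Ω : Type*} [MeasurableSpace Ω] (μ : Measure Ω) (f : Ω → ℝ)
    (hf : Integrable f μ) (g : Ω → Fin n → ℝ) (hg : Measurable g) (i : Fin n) :
    Integrable (fun x => f x * sm (g x) i) μ :=
  hf.mul_bdd (c := 1) ((sm_cont i).measurable.comp hg).aestronglyMeasurable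
    (by filter_upwards with p; rw [norm_eq_abs, abs_of_nonneg (sm_nonneg _ _)]; exact sm_le_one _ _)

lemma rhs_int {n : ℕ} [NeZero n] {Ω : Type*} [MeasurableSpace Ω] (μ : Measure Ω)
    [IsProbabilityMeasure μ] (g : Ω → Fin n → ℝ) (hg : Measurable g) (i : Fin n) (a : ℝ)
    (C : Fin n → ℝ) :
    Integrable (fun x => a * (sm (g x) i * (1 - ∑ j, sm (g x) j * C j))) μ := by
  have h1 : Integrable (fun x => (1 - ∑ j, sm (g x) j * C j)) μ := by
    refine (integrable_const _).sub (integrable_finsetSum _ fun j _ => ?_)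
    have := sm_int μ (fun _ => C j) (integrable_const _) g hg j
    simpa [mul_comm] using this
  have := (sm_int μ _ h1 g hg i).const_mul a
  simpa [mul_comm] using this

lemma ibp_prod {n : ℕ} [NeZero n] (μ ν : Measure (Fin n → ℝ)) [IsGaussian μ]
    [IsProbabilityMeasure ν]
    (h0 : ∀ i, ∫ x, x i ∂μ = 0) (C : Fin n → Fin n → ℝ)
    (hC : ∀ i j, cov[fun x : Fin n → ℝ => x i, fun x => x j; μ] = C i j) (hC1 : ∀ i, C i i = 1)
    (a b : ℝ) (i : Fin n) :
    ∫ p, p.1 i * sm (a • p.1 + b • p.2) i ∂(μ.prod ν) =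
      ∫ p, a * (sm (a • p.1 + b • p.2) i * (1 - ∑ j, sm (a • p.1 + b • p.2) j * C i j))
        ∂(μ.prod ν) := by
  rw [integral_prod_symm, integral_prod_symm]
  · congr 1; ext y
    exact ibp_sm μ h0 C hC hC1 a (b • y) i
  · exact rhs_int _ (fun p : (Fin n → ℝ) × (Fin n → ℝ) => a • p.1 + b • p.2) (by fun_prop) i a _
  · exact sm_int _ (fun p : (Fin n → ℝ) × (Fin n → ℝ) => p.1 i) ((gauss_coord_int μ i).comp_fst _)
      (fun p : (Fin n → ℝ) × (Fin n → ℝ) => a • p.1 + b • p.2) (by fun_prop) i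

lemma ibp_prod' {n : ℕ} [NeZero n] (μ ν : Measure (Fin n → ℝ)) [IsGaussian ν]
    [IsProbabilityMeasure μ]
    (h0 : ∀ i, ∫ x, x i ∂ν = 0) (C : Fin n → Fin n → ℝ)
    (hC : ∀ i j, cov[fun x : Fin n → ℝ => x i, fun x => x j; ν] = C i j) (hC1 : ∀ i, C i i = 1)
    (a b : ℝ) (i : Fin n) :
    ∫ p, p.2 i * sm (a • p.1 + b • p.2) i ∂(μ.prod ν) =
      ∫ p, b * (sm (a • p.1 + b • p.2) i * (1 - ∑ j, sm (a • p.1 + b • p.2) j * C i j))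
        ∂(μ.prod ν) := by
  rw [integral_prod, integral_prod]
  · congr 1; ext y
    have := ibp_sm ν h0 C hC hC1 b (a • y) i
    simpa only [add_comm] using this
  · exact rhs_int _ (fun p : (Fin n → ℝ) × (Fin n → ℝ) => a • p.1 + b • p.2) (by fun_prop) i b _
  · exact sm_int _ (fun p : (Fin n → ℝ) × (Fin n → ℝ) => p.2 i) ((gauss_coord_int ν i).comp_snd _)
      (fun p : (Fin n → ℝ) × (Fin n → ℝ) => a • p.1 + b • p.2) (by fun_prop) i

lemma sm_quad {n : ℕ} [NeZero n] (p : Fin n → ℝ) (hp : ∀ i, 0 ≤ p i) (hp1 : ∑ i, p i = 1)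
    (C : Fin n → Fin n → ℝ) (ρ : ℝ) (hC1 : ∀ i, C i i = 1) (hCρ : ∀ i j, i ≠ j → C i j ≤ ρ) :
    (1 - ρ) * ∑ i, p i * (1 - ∑ j, p j * (if i = j then 1 else 0))
      ≤ ∑ i, p i * (1 - ∑ j, p j * C i j) := by
  rw [Finset.mul_sum]
  have key : ∀ i, p i * ((1 - ρ) * (1 - p i)) ≤ p i * (1 - ∑ j, p j * C i j) := by
    intro i
    refine mul_le_mul_of_nonneg_left ?_ (hp i)
    have h1 : ∑ j, p j * C i j ≤ ∑ j, (p j * ρ + if i = j then p j * (1 - ρ) else 0) := by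
      refine Finset.sum_le_sum fun j _ => ?_
      by_cases hij : i = j
      · subst hij; simp [hC1]; ring_nf; rfl
      · simp only [hij, if_false, add_zero]
        exact mul_le_mul_of_nonneg_left (hCρ i j hij) (hp j)
    rw [Finset.sum_add_distrib, ← Finset.sum_mul, hp1] at h1
    simp at h1
    linarith
  refine Finset.sum_le_sum fun i _ => ?_
  refine le_trans (le_of_eq ?_) (key i)
  simp; ring

lemma compare_lse {n : ℕ} [NeZero n] (μ ν : Measure (Fin n → ℝ)) [IsGaussian μ] [IsGaussian ν]
    (h0 : ∀ i, ∫ x, x i ∂μ = 0) (C : Fin n → Fin n → ℝ)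
    (hC : ∀ i j, cov[fun x : Fin n → ℝ => x i, fun x => x j; μ] = C i j) (hC1 : ∀ i, C i i = 1)
    (h0' : ∀ i, ∫ x, x i ∂ν = 0)
    (hC' : ∀ i j, cov[fun x : Fin n → ℝ => x i, fun x => x j; ν] = if i = j then 1 else 0)
    (ρ : ℝ) (hρ : ρ < 1) (hCρ : ∀ i j, i ≠ j → C i j ≤ ρ) (β : ℝ) (hβ : 0 < β) :
    ∫ y, lse ((β * √(1 - ρ)) • y) ∂ν ≤ ∫ x, lse (β • x) ∂μ := by
  set σ := √(1 - ρ) with hσ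
  have hσ0 : 0 ≤ σ := Real.sqrt_nonneg _
  have hσ2 : σ * σ = 1 - ρ := Real.mul_self_sqrt (by linarith)
  let W : ℝ → (Fin n → ℝ) × (Fin n → ℝ) → Fin n → ℝ := fun θ p =>
    (β * cos θ) • p.1 + (β * σ * sin θ) • p.2
  let F' : ℝ → (Fin n → ℝ) × (Fin n → ℝ) → ℝ := fun θ p =>
    ∑ i, sm (W θ p) i * (-(β * sin θ) * p.1 i + (β * σ * cos θ) * p.2 i)
  let φ : ℝ → ℝ := fun θ => ∫ p, lse (W θ p) ∂(μ.prod ν)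
  have hWm : ∀ θ, Measurable (W θ) := fun θ => by fun_prop
  have hi1 : ∀ i, Integrable (fun p : (Fin n → ℝ) × (Fin n → ℝ) => p.1 i) (μ.prod ν) := fun i =>
    (gauss_coord_int μ i).comp_fst _
  have hi2 : ∀ i, Integrable (fun p : (Fin n → ℝ) × (Fin n → ℝ) => p.2 i) (μ.prod ν) := fun i =>
    (gauss_coord_int ν i).comp_snd _
  have hWi : ∀ θ i, Integrable (fun p => W θ p i) (μ.prod ν) := fun θ i =>
    ((hi1 i).const_mul (β * cos θ)).add ((hi2 i).const_mul (β * σ * sin θ))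
  have hderiv : ∀ θ, Integrable (F' θ) (μ.prod ν) ∧
      HasDerivAt φ (∫ p, F' θ p ∂(μ.prod ν)) θ := by
    intro θ
    refine hasDerivAt_integral_of_dominated_loc_of_deriv_le (F := fun θ p => lse (W θ p))
      (s := Set.univ) (bound := fun p => ∑ i, (β * |p.1 i| + β * σ * |p.2 i|)) Filter.univ_mem
      ?_ ?_ ?_ ?_ ?_ ?_
    · filter_upwards with t
      exact (lse_cont.measurable.comp (hWm t)).aestronglyMeasurable
    · have hb : Integrable (fun p => ∑ i, |W θ p i| + log n) (μ.prod ν) :=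
        (integrable_finsetSum _ fun i _ => (hWi θ i).abs).add (integrable_const _)
      refine hb.mono' (lse_cont.measurable.comp (hWm θ)).aestronglyMeasurable ?_
      filter_upwards with p using abs_lse_le _
    · refine Measurable.aestronglyMeasurable ?_
      refine Finset.measurable_sum _ fun i _ => ?_
      exact ((sm_cont i).measurable.comp (hWm θ)).mul (by fun_prop)
    · filter_upwards with p t _
      refine (Finset.abs_sum_le_sum_abs _ _).trans (Finset.sum_le_sum fun i _ => ?_)
      rw [abs_mul, abs_of_nonneg (sm_nonneg _ _)]
      refine (mul_le_of_le_one_left (abs_nonneg _) (sm_le_one _ _)).trans ?_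
      refine (abs_add_le _ _).trans ?_
      rw [abs_mul, abs_mul, abs_neg, abs_mul, abs_mul (β * σ), abs_of_pos hβ,
        abs_of_nonneg (mul_nonneg hβ.le hσ0)]
      refine add_le_add ?_ ?_
      · exact mul_le_mul_of_nonneg_right (mul_le_of_le_one_right hβ.le (abs_sin_le_one t))
          (abs_nonneg _)
      · exact mul_le_mul_of_nonneg_right (mul_le_of_le_one_right (by positivity)
          (abs_cos_le_one t)) (abs_nonneg _)
    · exact integrable_finsetSum _ fun i _ =>
        ((hi1 i).abs.const_mul _).add ((hi2 i).abs.const_mul _)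
    · filter_upwards with p t _
      refine lse_deriv (fun θ => W θ p) _ t fun j => ?_
      have := (((hasDerivAt_cos t).const_mul β).mul_const (p.1 j)).add
        (((hasDerivAt_sin t).const_mul (β * σ)).mul_const (p.2 j))
      refine (this.congr_deriv (by ring)).congr_of_eventuallyEq ?_
      filter_upwards with t
      simp [W]
  have hneg : ∀ θ ∈ Set.Icc 0 (π / 2), ∫ p, F' θ p ∂(μ.prod ν) ≤ 0 := by
    intro θ hθ
    have hs : 0 ≤ sin θ := sin_nonneg_of_nonneg_of_le_pi hθ.1 (by linarith [hθ.2, pi_pos])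
    have hc : 0 ≤ cos θ := cos_nonneg_of_mem_Icc ⟨by linarith [hθ.1, pi_pos], hθ.2⟩
    have e1 : ∫ p, F' θ p ∂(μ.prod ν) =
        ∑ i, (-(β * sin θ) * ∫ p, p.1 i * sm (W θ p) i ∂(μ.prod ν) +
          (β * σ * cos θ) * ∫ p, p.2 i * sm (W θ p) i ∂(μ.prod ν)) := by
      have ia := fun i => sm_int (μ.prod ν) _ (hi1 i) (W θ) (hWm θ) i
      have ib := fun i => sm_int (μ.prod ν) _ (hi2 i) (W θ) (hWm θ) i
      simp only [← integral_const_mul]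
      rw [← Finset.sum_congr rfl fun i _ => integral_add ((ia i).const_mul _) ((ib i).const_mul _),
        ← integral_finsetSum]
      · congr 1; ext p
        exact Finset.sum_congr rfl fun i _ => by ring
      · exact fun i _ => ((ia i).const_mul _).add ((ib i).const_mul _)
    have e2 := fun i => ibp_prod μ ν h0 C hC hC1 (β * cos θ) (β * σ * sin θ) i
    have e3 := fun i => ibp_prod' μ ν h0' _ hC' (by simp) (β * cos θ) (β * σ * sin θ) i
    change ∀ i, ∫ p, p.1 i * sm (W θ p) i ∂(μ.prod ν) =
      ∫ p, (β * cos θ) * (sm (W θ p) i * (1 - ∑ j, sm (W θ p) j * C i j)) ∂(μ.prod ν) at e2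
    change ∀ i, ∫ p, p.2 i * sm (W θ p) i ∂(μ.prod ν) =
      ∫ p, (β * σ * sin θ) * (sm (W θ p) i * (1 - ∑ j, sm (W θ p) j * (if i = j then 1 else 0)))
        ∂(μ.prod ν) at e3
    rw [e1]
    simp only [e2, e3, ← integral_const_mul]
    have ia := fun i => rhs_int (μ.prod ν) (W θ) (hWm θ) i (β * cos θ) (C i)
    have ib := fun i => rhs_int (μ.prod ν) (W θ) (hWm θ) i (β * σ * sin θ)
      (fun j => if i = j then 1 else 0)
    rw [← Finset.sum_congr rfl fun i _ => integral_add ((ia i).const_mul _) ((ib i).const_mul _),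
        ← integral_finsetSum]
    swap
    · exact fun i _ => ((ia i).const_mul _).add ((ib i).const_mul _)
    refine integral_nonpos fun p => ?_
    have q := sm_quad (sm (W θ p)) (sm_nonneg _) (sm_sum _) C ρ hC1 hCρ
    have e4 : ∑ i, (-(β * sin θ) * ((β * cos θ) * (sm (W θ p) i *
          (1 - ∑ j, sm (W θ p) j * C i j))) +
        (β * σ * cos θ) * ((β * σ * sin θ) * (sm (W θ p) i *
          (1 - ∑ j, sm (W θ p) j * (if i = j then 1 else 0))))) =
        (β * β * sin θ * cos θ) * ((1 - ρ) * ∑ i, sm (W θ p) i *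
          (1 - ∑ j, sm (W θ p) j * (if i = j then 1 else 0))
          - ∑ i, sm (W θ p) i * (1 - ∑ j, sm (W θ p) j * C i j)) := by
      rw [Finset.mul_sum, ← Finset.sum_sub_distrib, Finset.mul_sum]
      refine Finset.sum_congr rfl fun i _ => ?_
      rw [← hσ2]; ring
    change _ ≤ (0:ℝ)
    refine (le_of_eq e4).trans ?_
    exact mul_nonpos_of_nonneg_of_nonpos (by positivity) (by linarith)
  have hanti : AntitoneOn φ (Set.Icc 0 (π / 2)) := by
    refine antitoneOn_of_deriv_nonpos (convex_Icc _ _)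
      (fun x _ => (hderiv x).2.continuousAt.continuousWithinAt)
      (fun x _ => (hderiv x).2.differentiableAt.differentiableWithinAt) fun x hx => ?_
    rw [(hderiv x).2.deriv]
    exact hneg x (interior_subset hx)
  have hfin := hanti (Set.left_mem_Icc.2 (by positivity)) (Set.right_mem_Icc.2 (by positivity))
    (by positivity : (0:ℝ) ≤ π / 2)
  have l1 : φ 0 = ∫ x, lse (β • x) ∂μ := by
    have : φ 0 = ∫ p : (Fin n → ℝ) × (Fin n → ℝ), lse (β • p.1) ∂(μ.prod ν) := by
      simp [φ, W]
    rw [this, integral_fun_fst (fun x : Fin n → ℝ => lse (β • x))]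
    simp
  have l2 : φ (π / 2) = ∫ y, lse ((β * σ) • y) ∂ν := by
    have : φ (π / 2) = ∫ p : (Fin n → ℝ) × (Fin n → ℝ), lse ((β * σ) • p.2) ∂(μ.prod ν) := by
      simp [φ, W]
    rw [this, integral_fun_snd (fun x : Fin n → ℝ => lse ((β * σ) • x))]
    simp
  rw [← l1, ← l2]; exact hfin

lemma sup_meas {n : ℕ} : Measurable (fun x : Fin n → ℝ => ⨆ i, x i) :=
  Measurable.iSup fun i => measurable_pi_apply i

lemma sup_int {n : ℕ} [NeZero n] (μ : Measure (Fin n → ℝ)) [IsGaussian μ] :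
    Integrable (fun x : Fin n → ℝ => ⨆ i, x i) μ := by
  have hb : Integrable (fun x : Fin n → ℝ => ∑ i, |x i|) μ :=
    integrable_finsetSum _ fun i _ => (gauss_coord_int μ i).abs
  exact hb.mono' sup_meas.aestronglyMeasurable (by filter_upwards with x using abs_sup_le x)

lemma lse_int {n : ℕ} [NeZero n] (μ : Measure (Fin n → ℝ)) [IsGaussian μ] (c : ℝ) :
    Integrable (fun x : Fin n → ℝ => lse (c • x)) μ := by
  have hb : Integrable (fun x : Fin n → ℝ => ∑ i, |(c • x) i| + log n) μ :=
    (integrable_finsetSum _ fun i _ => ((gauss_coord_int μ i).const_mul c).abs).add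
      (integrable_const _)
  refine hb.mono' ?_ (by filter_upwards with x using abs_lse_le _)
  exact (lse_cont.comp (by fun_prop)).aestronglyMeasurable

lemma sup_smul {n : ℕ} (c : ℝ) (hc : 0 ≤ c) (x : Fin n → ℝ) :
    (⨆ i, (c • x) i) = c * ⨆ i, x i := by
  rw [Real.mul_iSup_of_nonneg hc]; rfl

lemma compare_max {n : ℕ} [NeZero n] (μ ν : Measure (Fin n → ℝ)) [IsGaussian μ] [IsGaussian ν]
    (h0 : ∀ i, ∫ x, x i ∂μ = 0) (C : Fin n → Fin n → ℝ)
    (hC : ∀ i j, cov[fun x : Fin n → ℝ => x i, fun x => x j; μ] = C i j) (hC1 : ∀ i, C i i = 1)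
    (h0' : ∀ i, ∫ x, x i ∂ν = 0)
    (hC' : ∀ i j, cov[fun x : Fin n → ℝ => x i, fun x => x j; ν] = if i = j then 1 else 0)
    (ρ : ℝ) (hρ : ρ < 1) (hCρ : ∀ i j, i ≠ j → C i j ≤ ρ) :
    √(1 - ρ) * ∫ y, (⨆ i, y i) ∂ν ≤ ∫ x, (⨆ i, x i) ∂μ := by
  have key : ∀ β : ℝ, 0 < β → β * (√(1 - ρ) * ∫ y, (⨆ i, y i) ∂ν - ∫ x, (⨆ i, x i) ∂μ) ≤ log n := by
    intro β hβ
    have h1 := compare_lse μ ν h0 C hC hC1 h0' hC' ρ hρ hCρ β hβ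
    have h2 : (β * √(1 - ρ)) * ∫ y, (⨆ i, y i) ∂ν ≤ ∫ y, lse ((β * √(1 - ρ)) • y) ∂ν := by
      rw [← integral_const_mul]
      refine integral_mono ((sup_int ν).const_mul _) (lse_int ν _) fun y => ?_
      change _ * _ ≤ _
      rw [← sup_smul _ (by positivity)]
      exact le_lse _
    have h3 : ∫ x, lse (β • x) ∂μ ≤ β * ∫ x, (⨆ i, x i) ∂μ + log n := by
      have : ∫ x : Fin n → ℝ, (β * (⨆ i, x i) + log n) ∂μ = β * ∫ x, (⨆ i, x i) ∂μ + log n := by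
        rw [integral_add ((sup_int μ).const_mul _) (integrable_const _), integral_const_mul]
        simp
      rw [← this]
      refine integral_mono (lse_int μ _) (((sup_int μ).const_mul _).add (integrable_const _))
        fun y => ?_
      change _ ≤ β * _ + _
      rw [← sup_smul _ hβ.le]
      exact lse_le _
    nlinarith
  by_contra hcon
  push Not at hcon
  set d := √(1 - ρ) * ∫ y, (⨆ i, y i) ∂ν - ∫ x, (⨆ i, x i) ∂μ with hd
  have hd0 : 0 < d := by rw [hd]; linarith
  have hl : 0 ≤ log (n : ℝ) := log_natCast_nonneg n
  have := key ((log n + 1) / d) (by positivity)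
  rw [div_mul_cancel₀ _ hd0.ne'] at this
  linarith

noncomputable abbrev stdg (n : ℕ) : Measure (Fin n → ℝ) := Measure.pi fun _ => gaussianReal 0 1

instance stdg_gauss (n : ℕ) : IsGaussian (stdg n) := by
  have h : iIndepFun (fun (i : Fin n) (x : Fin n → ℝ) => x i) (stdg n) :=
    iIndepFun_pi (X := fun _ x => x) (fun i => aemeasurable_id)
  have h2 := iIndepFun.hasGaussianLaw (fun i => by
    refine ⟨?_⟩
    rw [(measurePreserving_eval (fun _ : Fin n => gaussianReal 0 1) i).map_eq]
    infer_instance) h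
  have := h2.isGaussian_map
  simpa using this

lemma stdg_map {n : ℕ} (i : Fin n) : (stdg n).map (fun x => x i) = gaussianReal 0 1 :=
  (measurePreserving_eval (fun _ : Fin n => gaussianReal 0 1) i).map_eq

lemma map_gauss_mean {Ω : Type*} [MeasurableSpace Ω] (μ : Measure Ω) (f : Ω → ℝ) (hf : Measurable f)
    (v : NNReal) (h : μ.map f = gaussianReal 0 v) : ∫ x, f x ∂μ = 0 := by
  have := integral_map (μ := μ) hf.aemeasurable (f := fun x : ℝ => x) (by fun_prop)
  rw [← this, h, integral_id_gaussianReal]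

lemma map_gauss_var {Ω : Type*} [MeasurableSpace Ω] (μ : Measure Ω) (f : Ω → ℝ) (hf : Measurable f)
    (v : NNReal) (h : μ.map f = gaussianReal 0 v) : Var[f; μ] = v := by
  have := variance_map (μ := μ) (Y := f) (X := id) (by fun_prop) hf.aemeasurable
  rw [h, variance_id_gaussianReal] at this
  simpa using this.symm

lemma stdg_cov {n : ℕ} (i j : Fin n) :
    cov[fun x : Fin n → ℝ => x i, fun x => x j; stdg n] = if i = j then 1 else 0 := by
  split_ifs with h
  · subst h
    rw [covariance_self (measurable_pi_apply i).aemeasurable,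
      map_gauss_var _ _ (measurable_pi_apply i) _ (stdg_map i)]
    simp
  · have h1 : iIndepFun (fun (i : Fin n) (x : Fin n → ℝ) => x i) (stdg n) :=
      iIndepFun_pi (X := fun _ x => x) (fun i => aemeasurable_id)
    have hG : HasGaussianLaw (fun x : Fin n → ℝ => x) (stdg n) := IsGaussian.hasGaussianLaw_id
    have hL2 : ∀ j, MemLp (fun x : Fin n → ℝ => x j) 2 (stdg n) := fun j =>
      (hG.map_fun (ContinuousLinearMap.proj j : (Fin n → ℝ) →L[ℝ] ℝ)).memLp_two
    exact (h1.indepFun h).covariance_eq_zero (hL2 i) (hL2 j)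

lemma tail_bound (u : ℝ) (hu : 0 ≤ u) :
    (√(2 * π))⁻¹ * exp (-(u + 1) ^ 2 / 2) ≤ (gaussianReal 0 1).real (Set.Ici u) := by
  have h1 : (gaussianReal 0 1).real (Set.Icc u (u + 1)) ≤ (gaussianReal 0 1).real (Set.Ici u) :=
    measureReal_mono Set.Icc_subset_Ici_self
  refine le_trans ?_ h1
  rw [measureReal_def, gaussianReal_apply_eq_integral _ one_ne_zero, ENNReal.toReal_ofReal
    (setIntegral_nonneg measurableSet_Icc fun x _ => gaussianPDFReal_nonneg _ _ _)]
  have h2 : ∫ x in Set.Icc u (u + 1), (√(2 * π))⁻¹ * exp (-(u + 1) ^ 2 / 2)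
      ≤ ∫ x in Set.Icc u (u + 1), gaussianPDFReal 0 1 x := by
    refine setIntegral_mono_on (integrableOn_const (by simp)) (integrable_gaussianPDFReal 0 1).integrableOn
      measurableSet_Icc fun x hx => ?_
    simp only [gaussianPDFReal, NNReal.coe_one, mul_one, sub_zero]
    gcongr
    · linarith [hx.1]
    · exact hx.2
  simpa using h2

lemma stdg_max_nonneg {n : ℕ} [NeZero n] (μ : Measure (Fin n → ℝ)) [IsGaussian μ]
    (h0 : ∀ i, ∫ x, x i ∂μ = 0) : 0 ≤ ∫ x, (⨆ i, x i) ∂μ := by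
  rw [← h0 0]
  exact integral_mono (gauss_coord_int μ 0) (sup_int μ) fun x =>
    le_ciSup (f := fun i => x i) (Set.finite_range x).bddAbove 0

lemma stdg_lower {n : ℕ} [NeZero n] (u : ℝ) (hu : 0 ≤ u) :
    u - u * (1 - (gaussianReal 0 1).real (Set.Ici u)) ^ n - 1 ≤ ∫ x, (⨆ i, x i) ∂(stdg n) := by
  let B : Set (Fin n → ℝ) := Set.pi Set.univ fun _ => Set.Iio u
  have hBm : MeasurableSet B := MeasurableSet.univ_pi fun _ => measurableSet_Iio
  have hB : (stdg n).real B = (1 - (gaussianReal 0 1).real (Set.Ici u)) ^ n := by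
    rw [measureReal_def, Measure.pi_pi]
    rw [← probReal_compl_eq_one_sub measurableSet_Ici, Set.compl_Ici]
    simp [measureReal_def]
  have habs : ∫ x : Fin n → ℝ, |x 0| ∂(stdg n) ≤ 1 := by
    have hG : HasGaussianLaw (fun x : Fin n → ℝ => x) (stdg n) := IsGaussian.hasGaussianLaw_id
    have hL2 : MemLp (fun x : Fin n → ℝ => x 0) 2 (stdg n) :=
      (hG.map_fun (ContinuousLinearMap.proj 0 : (Fin n → ℝ) →L[ℝ] ℝ)).memLp_two
    have hv := map_gauss_var _ _ (measurable_pi_apply 0) _ (stdg_map (0 : Fin n))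
    have hm := map_gauss_mean _ _ (measurable_pi_apply 0) _ (stdg_map (0 : Fin n))
    rw [variance_of_integral_eq_zero (measurable_pi_apply 0).aemeasurable hm] at hv
    have hsq : Integrable (fun x : Fin n → ℝ => x 0 ^ 2) (stdg n) := hL2.integrable_sq
    have h2 : ∫ x : Fin n → ℝ, (1 + x 0 ^ 2) / 2 ∂(stdg n) = 1 := by
      rw [integral_div, integral_add (integrable_const _) hsq]
      simp only [NNReal.coe_one] at hv
      rw [hv]; simp
    rw [← h2]
    refine integral_mono (gauss_coord_int _ 0).abs (((integrable_const _).add hsq).div_const 2)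
      fun x => ?_
    change |x 0| ≤ (1 + x 0 ^ 2) / 2
    nlinarith [sq_nonneg (|x 0| - 1), sq_abs (x 0)]
  have hi : Integrable (fun x => u - u * B.indicator 1 x - |x 0|) (stdg n) :=
    ((integrable_const _).sub (((integrable_const (1 : ℝ)).indicator hBm).const_mul u)).sub
      (gauss_coord_int _ 0).abs
  have h3 : ∫ x, (u - u * B.indicator 1 x - |x 0|) ∂(stdg n) =
      u - u * (stdg n).real B - ∫ x : Fin n → ℝ, |x 0| ∂(stdg n) := by
    rw [integral_sub, integral_sub, integral_const_mul, integral_indicator_one hBm]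
    · simp
    · exact integrable_const _
    · exact ((integrable_const (1 : ℝ)).indicator hBm).const_mul u
    · exact (integrable_const _).sub (((integrable_const (1 : ℝ)).indicator hBm).const_mul u)
    · exact (gauss_coord_int _ 0).abs
  rw [← hB]
  have h4 : ∫ x, (u - u * B.indicator 1 x - |x 0|) ∂(stdg n) ≤ ∫ x, (⨆ i, x i) ∂(stdg n) := by
    refine integral_mono hi (sup_int _) fun x => ?_
    change u - u * B.indicator 1 x - |x 0| ≤ ⨆ i, x i
    by_cases hx : x ∈ B
    · have : x 0 ≤ ⨆ i, x i := le_ciSup (f := fun i => x i) (Set.finite_range x).bddAbove 0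
      simp only [Set.indicator_of_mem hx, Pi.one_apply]
      linarith [neg_abs_le (x 0)]
    · simp only [Set.indicator_of_notMem hx]
      have : ∃ i, u ≤ x i := by
        by_contra hcon
        push Not at hcon
        exact hx fun i _ => hcon i
      obtain ⟨i, hi⟩ := this
      have : x i ≤ ⨆ i, x i := le_ciSup (f := fun i => x i) (Set.finite_range x).bddAbove i
      linarith [abs_nonneg (x 0)]
  linarith

lemma stdg_max {n : ℕ} [NeZero n] (hn : 3 ≤ n) :
    √(2 * log n) - √2 * √(log (log n)) - 6 ≤ ∫ x, (⨆ i, x i) ∂(stdg n) := by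
  set L := log (n : ℝ) with hL
  have hn0 : (0 : ℝ) < n := by positivity
  have hL1 : 1 ≤ L := by
    rw [hL, le_log_iff_exp_le hn0]
    have : (3 : ℝ) ≤ n := by exact_mod_cast hn
    linarith [exp_one_lt_d9]
  set l := log L with hl
  have hl0 : 0 ≤ l := log_nonneg hL1
  have hlL : l ≤ L - 1 := log_le_sub_one_of_pos (by linarith)
  have hsq : √(2 * L) - √2 * √l ≤ √(2 * (L - l)) := by
    rw [← Real.sqrt_mul (by norm_num : (0:ℝ) ≤ 2)]
    have : √(2 * L) ≤ √(2 * (L - l)) + √(2 * l) := by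
      have ha : 0 ≤ 2 * (L - l) := by linarith
      have hb : 0 ≤ 2 * l := by linarith
      refine Real.sqrt_le_iff.2 ⟨by positivity, ?_⟩
      nlinarith [Real.sq_sqrt ha, Real.sq_sqrt hb, mul_nonneg (Real.sqrt_nonneg (2 * (L - l)))
        (Real.sqrt_nonneg (2 * l))]
    linarith
  by_cases hu : √(2 * (L - l)) - 1 ≤ 0
  · have := stdg_max_nonneg (stdg n)
      (fun i => map_gauss_mean _ _ (measurable_pi_apply i) _ (stdg_map i))
    linarith
  push Not at hu
  set u := √(2 * (L - l)) - 1 with hudef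
  set q := (gaussianReal 0 1).real (Set.Ici u) with hq
  have h1 := stdg_lower (n := n) u hu.le
  have hq1 : q ≤ 1 := measureReal_le_one
  have htail := tail_bound u hu.le
  have husq : (u + 1) ^ 2 = 2 * (L - l) := by
    rw [hudef, sub_add_cancel, Real.sq_sqrt (by linarith)]
  have he : exp (-(u + 1) ^ 2 / 2) = L / n := by
    rw [husq, show -(2 * (L - l)) / 2 = l - L by ring, exp_sub, hl, exp_log (by linarith), hL,
      exp_log hn0]
  rw [he] at htail
  have hnq : L ≤ √(2 * π) * (n * q) := by
    have h2 : (√(2 * π))⁻¹ * (L / n) * (√(2 * π) * n) ≤ q * (√(2 * π) * n) := by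
      gcongr
    have hs : 0 < √(2 * π) := by positivity
    have e : (√(2 * π))⁻¹ * (L / n) * (√(2 * π) * n) = L := by field_simp
    rw [e] at h2
    linarith
  have hpow : (1 - q) ^ n * (n * q) ≤ 1 := by
    have h3 : (1 - q) ^ n ≤ exp (-(n * q)) := by
      have : 1 - q ≤ exp (-q) := one_sub_le_exp_neg q
      calc (1 - q) ^ n ≤ exp (-q) ^ n := pow_le_pow_left₀ (by linarith) this n
        _ = _ := by rw [← exp_nat_mul]; congr 1; ring
    have h4 : n * q ≤ exp (n * q) := by linarith [add_one_le_exp (n * q)]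
    have hq0 : 0 ≤ q := measureReal_nonneg
    calc (1 - q) ^ n * (n * q) ≤ exp (-(n * q)) * exp (n * q) := by gcongr
      _ = 1 := by rw [← exp_add]; simp
  have hP0 : 0 ≤ (1 - q) ^ n := pow_nonneg (by linarith) n
  have hPL : (1 - q) ^ n * L ≤ √(2 * π) := by
    calc (1 - q) ^ n * L ≤ (1 - q) ^ n * (√(2 * π) * (n * q)) := by gcongr
      _ = √(2 * π) * ((1 - q) ^ n * (n * q)) := by ring
      _ ≤ √(2 * π) * 1 := by gcongr
      _ = _ := mul_one _
  have h2pi : √(2 * π) ≤ 2.6 := by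
    rw [Real.sqrt_le_left (by norm_num)]
    nlinarith [pi_lt_d2]
  have hu2 : u ≤ 1.5 * L := by
    have : u ^ 2 ≤ 2 * L := by nlinarith
    nlinarith
  have hfin : u * (1 - q) ^ n ≤ 4 := by
    calc u * (1 - q) ^ n ≤ (1.5 * L) * (1 - q) ^ n := by gcongr
      _ = 1.5 * ((1 - q) ^ n * L) := by ring
      _ ≤ 1.5 * 2.6 := by gcongr; linarith
      _ ≤ 4 := by norm_num
  linarith

lemma quad_two {n : ℕ} (R : Fin n → Fin n → ℝ) (hR1 : ∀ i, R i i = 1) (i j : Fin n) :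
    ∑ k, ∑ l, (Pi.single i 1 + Pi.single j 1 : Fin n → ℝ) k * R k l *
      (Pi.single i 1 + Pi.single j 1 : Fin n → ℝ) l = 2 + R i j + R j i := by
  simp [add_mul, mul_add, Finset.sum_add_distrib, Pi.single_apply, hR1]
  ring

theorem lower_bound_on_expectation_of_max :
    ∃ c₀ : ℝ, 0 < c₀ ∧
      ∀ (Ω : Type) [MeasureSpace Ω], IsProbabilityMeasure (ℙ : Measure Ω) →
        ∀ (n : ℕ), 2 ≤ n →
          ∀ (X : Fin n → Ω → ℝ) (R : Matrix (Fin n) (Fin n) ℝ) (ρ₀ : ℝ),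
            ρ₀ ∈ Set.Ioo (0 : ℝ) 1 →
            IsCenteredGaussianVec X R →
            (∀ i j, i ≠ j → R i j ≤ ρ₀) →
            Real.sqrt (2 * (1 - ρ₀) * Real.log n)
                - c₀ * Real.sqrt (Real.log (Real.log (max (n : ℝ) 3)))
              ≤ ∫ ω, (⨆ i, X i ω) ∂(ℙ : Measure Ω) := by
  refine ⟨100, by norm_num, ?_⟩
  intro Ω _ hP n hn X R ρ hρ hX hR
  have : NeZero n := ⟨by omega⟩
  obtain ⟨hXm, hR1, hlaw⟩ := hX
  have hXm' : Measurable (fun ω i => X i ω) := measurable_pi_lambda _ hXm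
  set μ : Measure (Fin n → ℝ) := Measure.map (fun ω i => X i ω) ℙ with hμ
  have hlaw' : ∀ a : Fin n → ℝ, μ.map (fun x => ∑ i, a i * x i) =
      gaussianReal 0 (Real.toNNReal (∑ i, ∑ j, a i * R i j * a j)) := by
    intro a
    rw [← hlaw a, hμ, Measure.map_map (by fun_prop) hXm']
    rfl
  have hG : IsGaussian μ := by
    refine isGaussian_of_map_eq_gaussianReal fun l => ⟨0, Real.toNNReal
      (∑ i, ∑ j, l (Pi.single i 1) * R i j * l (Pi.single j 1)), ?_⟩
    · rw [← hlaw' fun i => l (Pi.single i 1)]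
      congr 1
      ext x
      have := LinearMap.pi_apply_eq_sum_univ (l : (Fin n → ℝ) →ₗ[ℝ] ℝ) x
      simp only [ContinuousLinearMap.coe_coe, smul_eq_mul] at this
      rw [this]
      refine Finset.sum_congr rfl fun i _ => ?_
      rw [mul_comm]
      congr 2
      ext j
      simp [Pi.single_apply, eq_comm]
  have hm1 : ∀ i, μ.map (fun x => x i) = gaussianReal 0 1 := by
    intro i
    have := hlaw' (Pi.single i 1)
    simpa [Pi.single_apply, hR1] using this
  have h0 : ∀ i, ∫ x, x i ∂μ = 0 := fun i =>
    map_gauss_mean _ _ (measurable_pi_apply i) _ (hm1 i)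
  have hv1 : ∀ i, Var[fun x : Fin n → ℝ => x i; μ] = 1 := fun i => by
    simpa using map_gauss_var _ _ (measurable_pi_apply i) _ (hm1 i)
  have hL2 : ∀ j, MemLp (fun x : Fin n → ℝ => x j) 2 μ := fun j =>
    ((IsGaussian.hasGaussianLaw_id (μ := μ)).map_fun
      (ContinuousLinearMap.proj j : (Fin n → ℝ) →L[ℝ] ℝ)).memLp_two
  have hcov : ∀ i j, i ≠ j → cov[fun x : Fin n → ℝ => x i, fun x => x j; μ] ≤ ρ := by
    intro i j hij
    have h1 : μ.map (fun x => x i + x j) =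
        gaussianReal 0 (Real.toNNReal (2 + R i j + R j i)) := by
      have := hlaw' (Pi.single i 1 + Pi.single j 1)
      rw [quad_two (fun i j => R i j) hR1 i j] at this
      rw [← this]
      congr 1
      ext x
      simp [add_mul, Finset.sum_add_distrib, Pi.single_apply]
    have h2 := map_gauss_var _ _ (by fun_prop) _ h1
    rw [variance_fun_add (hL2 i) (hL2 j), hv1, hv1, Real.coe_toNNReal'] at h2
    have h3 := hR i j hij
    have h4 := hR j i hij.symm
    rcases max_cases (2 + R i j + R j i) 0 with h | h
    · linarith [h.1]
    · linarith [h.1, hρ.1]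
  have hcomp := compare_max μ (stdg n) h0 _ (fun i j => rfl)
    (fun i => by rw [covariance_self (measurable_pi_apply i).aemeasurable, hv1])
    (fun i => map_gauss_mean _ _ (measurable_pi_apply i) _ (stdg_map i)) stdg_cov ρ hρ.2 hcov
  have hint : ∫ ω, (⨆ i, X i ω) ∂(ℙ : Measure Ω) = ∫ x, (⨆ i, x i) ∂μ := by
    rw [hμ, integral_map hXm'.aemeasurable sup_meas.aestronglyMeasurable]
  rw [hint]
  have hlog3 : (1.02 : ℝ) ≤ log 3 := by
    have h1 : log 3 = log 2 + log (3 / 2) := by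
      rw [← log_mul (by norm_num) (by norm_num)]; norm_num
    have h2 := one_sub_inv_le_log_of_pos (show (0 : ℝ) < 3 / 2 by norm_num)
    have h3 := log_two_gt_d9
    rw [h1]; norm_num at h2 ⊢; linarith
  have hlmax : log 3 ≤ log (max (n : ℝ) 3) := log_le_log (by norm_num) (le_max_right _ _)
  set l := log (log (max (n : ℝ) 3)) with hl
  have hl1 : (1 / 8) ^ 2 ≤ l := by
    have h1 : log 1.02 ≤ l := log_le_log (by norm_num) (hlog3.trans hlmax)
    have h2 := one_sub_inv_le_log_of_pos (show (0 : ℝ) < 1.02 by norm_num)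
    norm_num at h1 h2 ⊢; linarith
  have hls : 1 / 8 ≤ √l := Real.le_sqrt_of_sq_le hl1
  have hσ1 : √(1 - ρ) ≤ 1 := by
    rw [Real.sqrt_le_left (by norm_num)]; linarith [hρ.1]
  have hσ0 : 0 ≤ √(1 - ρ) := Real.sqrt_nonneg _
  have hsplit : √(2 * (1 - ρ) * log n) = √(1 - ρ) * √(2 * log n) := by
    rw [← Real.sqrt_mul (by linarith [hρ.2])]; congr 1; ring
  rw [hsplit]
  have hs2 : √(2 : ℝ) ≤ 2 := by
    rw [Real.sqrt_le_left (by norm_num)]; norm_num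
  rcases Nat.lt_or_ge n 3 with h3 | h3
  · have hn2 : n = 2 := by omega
    have hnn := stdg_max_nonneg μ h0
    have h4 : √(2 * log n) ≤ 2 := by
      rw [Real.sqrt_le_left (by norm_num), hn2]
      have := log_two_lt_d9
      push_cast; linarith
    have h5 : √(1 - ρ) * √(2 * log n) ≤ 2 := by
      nlinarith [Real.sqrt_nonneg (2 * log (n : ℝ))]
    linarith
  · have hmax : max (n : ℝ) 3 = n := max_eq_left (by exact_mod_cast h3)
    have h4 := stdg_max (n := n) h3
    have hl' : log (log (n : ℝ)) = l := by rw [hl, hmax]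
    rw [hl'] at h4
    have h5 : √(2 * log n) - 100 * √l ≤ ∫ x, (⨆ i, x i) ∂(stdg n) := by nlinarith
    have h6 := mul_le_mul_of_nonneg_left h5 hσ0
    have h7 : √(1 - ρ) * (100 * √l) ≤ 100 * √l :=
      mul_le_of_le_one_left (by positivity) hσ1
    linarith
end

section
/- Let ρ₀ ∈ (0,1) be a constant and let X = (X_1,…,X_n) be a centered Gaussian random vector in ℝ^n with var(X_i) = 1 for all i and whose correlation matrix R satisfies R_{ij} ≤ ρ₀ for all i ≠ j. Then there is a universal constant c₀ > 0 such that every median of max_{1≤i≤n} X_i is at least √(2(1−ρ₀)log n) − c₀ √(log log(max{n,3})). -/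
open MeasureTheory ProbabilityTheory Real

/-- `m` is a median of the real random variable `W`. -/
def IsMedian {Ω : Type*} [MeasureSpace Ω] (W : Ω → ℝ) (m : ℝ) : Prop :=
  (1 : ENNReal) / 2 ≤ (ℙ : Measure Ω) {ω | W ω ≤ m} ∧
    (1 : ENNReal) / 2 ≤ (ℙ : Measure Ω) {ω | m ≤ W ω}


namespace MedMax

variable {n : ℕ}

/-- partition function -/
noncomputable def Zs (β : ℝ) (x : Fin n → ℝ) : ℝ := ∑ j, exp (β * x j)
/-- soft max -/
noncomputable def F (β : ℝ) (x : Fin n → ℝ) : ℝ := log (Zs β x) / β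
/-- Gibbs weights -/
noncomputable def p (β : ℝ) (x : Fin n → ℝ) (i : Fin n) : ℝ := exp (β * x i) / Zs β x

lemma Zs_pos [NeZero n] (β : ℝ) (x : Fin n → ℝ) : 0 < Zs β x :=
  Finset.sum_pos (fun _ _ => exp_pos _) ⟨0, Finset.mem_univ _⟩

lemma le_F [NeZero n] {β : ℝ} (hβ : 0 < β) (x : Fin n → ℝ) (i : Fin n) : x i ≤ F β x := by
  rw [F, le_div_iff₀ hβ, le_log_iff_exp_le (Zs_pos β x), mul_comm]
  exact Finset.single_le_sum (f := fun j => exp (β * x j)) (fun _ _ => (exp_pos _).le)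
    (Finset.mem_univ i)

lemma F_le [NeZero n] {β : ℝ} (hβ : 0 < β) (x : Fin n → ℝ) (m : ℝ) (h : ∀ i, x i ≤ m) :
    F β x ≤ m + log n / β := by
  have hn : (0 : ℝ) < n := by exact_mod_cast Nat.pos_of_ne_zero (NeZero.ne n)
  rw [F, div_le_iff₀ hβ, log_le_iff_le_exp (Zs_pos β x), add_mul, div_mul_cancel₀ _ hβ.ne',
    exp_add, exp_log hn, mul_comm _ (n : ℝ), mul_comm m]
  calc Zs β x ≤ ∑ j : Fin n, exp (β * m) := by
        apply Finset.sum_le_sum; intro j _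
        exact exp_le_exp.2 (mul_le_mul_of_nonneg_left (h j) hβ.le)
    _ = _ := by simp

lemma abs_F_le [NeZero n] {β : ℝ} (hβ : 0 < β) (x : Fin n → ℝ) :
    |F β x| ≤ ∑ i, |x i| + log n / β := by
  have hn : (1 : ℝ) ≤ n := by exact_mod_cast Nat.pos_of_ne_zero (NeZero.ne n)
  have hl : 0 ≤ log n / β := div_nonneg (log_nonneg hn) hβ.le
  have hs : ∀ i, |x i| ≤ ∑ i, |x i| := fun i =>
    Finset.single_le_sum (f := fun j => |x j|) (fun _ _ => abs_nonneg _) (Finset.mem_univ i)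
  rw [abs_le]
  constructor
  · have := le_F hβ x 0
    have h2 := neg_abs_le (x 0)
    have := hs 0
    linarith
  · exact F_le hβ x _ fun i => (le_abs_self _).trans (hs i)

lemma p_nonneg [NeZero n] (β : ℝ) (x : Fin n → ℝ) (i : Fin n) : 0 ≤ p β x i :=
  div_nonneg (exp_pos _).le (Zs_pos β x).le

lemma p_sum [NeZero n] (β : ℝ) (x : Fin n → ℝ) : ∑ i, p β x i = 1 := by
  simp only [p]
  rw [← Finset.sum_div]
  exact div_self (Zs_pos β x).ne'

lemma p_le_one [NeZero n] (β : ℝ) (x : Fin n → ℝ) (i : Fin n) : p β x i ≤ 1 := by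
  rw [← p_sum β x]
  exact Finset.single_le_sum (f := fun j => p β x j) (fun _ _ => p_nonneg _ _ _) (Finset.mem_univ i)

lemma continuous_Zs (β : ℝ) : Continuous (Zs (n := n) β) := by
  unfold Zs; fun_prop

lemma continuous_F [NeZero n] (β : ℝ) : Continuous (F (n := n) β) := by
  unfold F
  exact ((continuous_Zs β).log fun x => (Zs_pos β x).ne').div_const β

lemma continuous_p [NeZero n] (β : ℝ) (i : Fin n) : Continuous (fun x : Fin n → ℝ => p β x i) := by
  unfold p
  exact Continuous.div (by fun_prop) (continuous_Zs β) fun x => (Zs_pos β x).ne'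

lemma hasDerivAt_Zs (β : ℝ) (z : ℝ → Fin n → ℝ) (z' : Fin n → ℝ) (t : ℝ)
    (hz : ∀ i, HasDerivAt (fun s => z s i) (z' i) t) :
    HasDerivAt (fun s => Zs β (z s)) (∑ i, exp (β * z t i) * (β * z' i)) t := by
  unfold Zs
  apply HasDerivAt.fun_sum
  intro i _
  exact ((hz i).const_mul β).exp

lemma hasDerivAt_F [NeZero n] {β : ℝ} (hβ : 0 < β) (z : ℝ → Fin n → ℝ) (z' : Fin n → ℝ) (t : ℝ)
    (hz : ∀ i, HasDerivAt (fun s => z s i) (z' i) t) :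
    HasDerivAt (fun s => F β (z s)) (∑ i, p β (z t) i * z' i) t := by
  have h := ((hasDerivAt_Zs β z z' t hz).log (Zs_pos β (z t)).ne').div_const β
  refine h.congr_deriv ?_
  rw [Finset.sum_div, Finset.sum_div]
  apply Finset.sum_congr rfl
  intro i _
  have := (Zs_pos β (z t)).ne'
  unfold p
  field_simp

lemma hasDerivAt_p [NeZero n] (β : ℝ) (z : ℝ → Fin n → ℝ) (z' : Fin n → ℝ) (t : ℝ)
    (hz : ∀ i, HasDerivAt (fun s => z s i) (z' i) t) (i : Fin n) :
    HasDerivAt (fun s => p β (z s) i)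
      (β * p β (z t) i * (z' i - ∑ j, p β (z t) j * z' j)) t := by
  have h := (((hz i).const_mul β).exp).div (hasDerivAt_Zs β z z' t hz) (Zs_pos β (z t)).ne'
  have e : ∑ j, p β (z t) j * z' j = (∑ j, exp (β * z t j) * z' j) / Zs β (z t) := by
    rw [Finset.sum_div]
    apply Finset.sum_congr rfl
    intro j _
    unfold p; ring
  have e2 : ∑ i, exp (β * z t i) * (β * z' i) = β * ∑ j, exp (β * z t j) * z' j := by
    rw [Finset.mul_sum]
    apply Finset.sum_congr rfl
    intro j _
    ring
  refine h.congr_deriv ?_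
  rw [e, e2]
  have := (Zs_pos β (z t)).ne'
  unfold p
  field_simp

/-- Gaussian integration by parts in dimension one. -/
lemma stein (g g' : ℝ → ℝ) (A B : ℝ) (hg : ∀ w, HasDerivAt g (g' w) w) (hA : ∀ w, |g w| ≤ A)
    (hB : ∀ w, |g' w| ≤ B) (hg'm : Measurable g') :
    ∫ w, g w * w ∂(gaussianReal 0 1) = ∫ w, g' w ∂(gaussianReal 0 1) := by
  have hgc : Continuous g := continuous_iff_continuousAt.2 fun w => (hg w).continuousAt
  rw [integral_gaussianReal_eq_integral_smul one_ne_zero,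
    integral_gaussianReal_eq_integral_smul one_ne_zero]
  simp only [smul_eq_mul]
  set f : ℝ → ℝ := gaussianPDFReal 0 1 with hf
  have hfd : ∀ w, HasDerivAt f (- w * f w) w := by
    intro w
    have h : HasDerivAt (fun x : ℝ => (√(2 * π * (1 : NNReal)))⁻¹ * exp (-(x - 0) ^ 2 / (2 * (1 : NNReal))))
      ((√(2 * π * (1 : NNReal)))⁻¹ * (exp (-(w - 0) ^ 2 / (2 * (1 : NNReal))) * (-w))) w := by
      apply HasDerivAt.const_mul
      apply HasDerivAt.exp
      have := (((hasDerivAt_id w).sub_const 0).pow 2).neg.div_const (2 * ((1 : NNReal) : ℝ))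
      refine this.congr_deriv ?_
      simp; ring
    have e : f = fun x : ℝ => (√(2 * π * (1 : NNReal)))⁻¹ * exp (-(x - 0) ^ 2 / (2 * (1 : NNReal))) := by
      ext x; simp [hf, gaussianPDFReal]
    rw [e]
    refine h.congr_deriv ?_
    ring
  have hfi : Integrable f := integrable_gaussianPDFReal 0 1
  have hwfi : Integrable (fun w => w * f w) := by
    have h1 : Integrable (fun w : ℝ => w) (gaussianReal 0 1) :=
      (memLp_id_gaussianReal 1).integrable (by norm_num)
    rw [gaussianReal_of_var_ne_zero 0 one_ne_zero] at h1
    rw [integrable_withDensity_iff_integrable_smul₀'] at h1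
    · refine h1.congr (Filter.Eventually.of_forall fun w => ?_)
      simp [hf, gaussianPDF, ENNReal.toReal_ofReal (gaussianPDFReal_nonneg 0 1 w), mul_comm]
    · exact (measurable_gaussianPDF 0 1).aemeasurable
    · exact Filter.Eventually.of_forall fun w => gaussianPDF_lt_top
  have h := integral_mul_deriv_eq_deriv_mul_of_integrable (u := g) (v := f) (u' := g')
    (v' := fun w => - w * f w) (fun x _ => hg x) (fun x _ => hfd x)
    (by
      have := (hwfi.neg).bdd_mul (f := g) (c := A) hgc.aestronglyMeasurable
        (Filter.Eventually.of_forall hA)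
      refine this.congr (Filter.Eventually.of_forall fun w => ?_)
      simp )
    (hfi.bdd_mul (c := B) hg'm.aestronglyMeasurable (Filter.Eventually.of_forall hB))
    (hfi.bdd_mul (c := A) hgc.aestronglyMeasurable (Filter.Eventually.of_forall hA))
  have e1 : ∫ w, f w * (g w * w) = - ∫ w, g w * (- w * f w) := by
    rw [← integral_neg]; congr 1; ext w; ring
  rw [e1, h, neg_neg]
  congr 1; ext w; ring


structure GV (μ : Measure (Fin n → ℝ)) (S : Fin n → Fin n → ℝ) : Prop where
  symm : ∀ i j, S i j = S j i
  diag : ∀ i, S i i = 1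
  psd : ∀ a : Fin n → ℝ, 0 ≤ ∑ i, ∑ j, a i * S i j * a j
  law : ∀ a : Fin n → ℝ, μ.map (fun x => ∑ i, a i * x i) =
        gaussianReal 0 (Real.toNNReal (∑ i, ∑ j, a i * S i j * a j))

lemma dual_eq (L : StrongDual ℝ (Fin n → ℝ)) : ∃ a : Fin n → ℝ, ∀ x, L x = ∑ i, a i * x i := by
  refine ⟨fun i => L (Pi.single i 1), fun x => ?_⟩
  conv_lhs => rw [pi_eq_sum_univ' x]
  rw [map_sum]
  apply Finset.sum_congr rfl
  intro i _
  rw [map_smul, smul_eq_mul, mul_comm]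

lemma GV.isGaussian {μ : Measure (Fin n → ℝ)} {S} (h : GV μ S) : IsGaussian μ := by
  apply isGaussian_of_map_eq_gaussianReal
  intro L
  obtain ⟨a, ha⟩ := dual_eq L
  refine ⟨0, (∑ i, ∑ j, a i * S i j * a j).toNNReal, ?_⟩
  rw [← h.law a]
  congr 1
  ext x; exact ha x

lemma GV.coord {μ : Measure (Fin n → ℝ)} {S} (h : GV μ S) (i : Fin n) :
    μ.map (fun x => x i) = gaussianReal 0 1 := by
  have := h.law (Pi.single i 1)
  simpa [Pi.single_apply, h.diag] using this

lemma GV.integrable {μ : Measure (Fin n → ℝ)} {S} (h : GV μ S) (i : Fin n) :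
    Integrable (fun x => x i) μ := by
  have h1 : Integrable (fun w : ℝ => w) (gaussianReal 0 1) :=
    (memLp_id_gaussianReal 1).integrable (by norm_num)
  rw [← h.coord i] at h1
  exact h1.comp_measurable (measurable_pi_apply i)

lemma int_abs_gauss : ∫ w, |w| ∂(gaussianReal 0 1) ≤ 1 := by
  have h1 : Integrable (fun w : ℝ => w) (gaussianReal 0 1) :=
    (memLp_id_gaussianReal 1).integrable (by norm_num)
  have h2 : Integrable (fun w : ℝ => w ^ 2) (gaussianReal 0 1) :=
    MemLp.integrable_sq (memLp_id_gaussianReal 2)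
  have hv : ∫ w : ℝ, w ^ 2 ∂(gaussianReal 0 1) = 1 := by
    have := variance_fun_id_gaussianReal (μ := 0) (v := 1)
    rw [variance_of_integral_eq_zero] at this
    · simpa using this
    · exact aemeasurable_id
    · simp
  calc ∫ w, |w| ∂(gaussianReal 0 1) ≤ ∫ w, (1 + w ^ 2) / 2 ∂(gaussianReal 0 1) := by
        apply integral_mono h1.abs (((integrable_const 1).add h2).div_const 2)
        intro w
        simp only [Pi.add_apply]
        nlinarith [sq_nonneg (|w| - 1), sq_abs w]
    _ = 1 := by
        rw [integral_div, integral_add (integrable_const 1) h2, hv]; simp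

lemma GV.int_abs {μ : Measure (Fin n → ℝ)} {S} (h : GV μ S) (i : Fin n) :
    ∫ x, |x i| ∂μ ≤ 1 := by
  have := int_abs_gauss
  rw [← h.coord i, integral_map (measurable_pi_apply i).aemeasurable] at this
  · exact this
  · exact (continuous_abs.measurable).aestronglyMeasurable

lemma GV.int_zero {μ : Measure (Fin n → ℝ)} {S} (h : GV μ S) (i : Fin n) :
    ∫ x, x i ∂μ = 0 := by
  have : ∫ x, x ∂(gaussianReal 0 1) = 0 := integral_id_gaussianReal
  rw [← h.coord i, integral_map (measurable_pi_apply i).aemeasurable] at this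
  · exact this
  · exact measurable_id.aestronglyMeasurable

lemma GV.rot {μ : Measure (Fin n → ℝ)} {S} (h : GV μ S) (θ : ℝ) :
    (μ.prod μ).map (ContinuousLinearMap.rotation θ) = μ.prod μ := by
  have := h.isGaussian
  apply IsGaussian.map_rotation_eq_self_of_forall_strongDual_eq_zero
  intro L
  obtain ⟨a, ha⟩ := dual_eq L
  simp_rw [ha]
  rw [integral_finsetSum]
  · simp [integral_const_mul, h.int_zero]
  · intro i _
    exact (h.integrable i).const_mul _

lemma quad (S : Fin n → Fin n → ℝ) (hs : ∀ i j, S i j = S j i) (hd : ∀ i, S i i = 1)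
    (a : Fin n → ℝ) (i : Fin n) (s : ℝ) :
    ∑ k, ∑ l, (a k - s * (Pi.single i 1 : Fin n → ℝ) k) * S k l * (a l - s * (Pi.single i 1 : Fin n → ℝ) l)
     = ∑ k, ∑ l, a k * S k l * a l - 2 * s * (∑ k, a k * S i k) + s ^ 2 := by
  have : ∀ k l, (a k - s * (Pi.single i 1 : Fin n → ℝ) k) * S k l * (a l - s * (Pi.single i 1 : Fin n → ℝ) l)
    = a k * S k l * a l - s * ((Pi.single i 1 : Fin n → ℝ) k * (a l * S k l))
      - s * (a k * S k l * (Pi.single i 1 : Fin n → ℝ) l)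
      + s ^ 2 * ((Pi.single i 1 : Fin n → ℝ) k * (S k l * (Pi.single i 1 : Fin n → ℝ) l)) := by
    intro k l; ring
  simp_rw [this, Finset.sum_add_distrib, Finset.sum_sub_distrib, ← Finset.mul_sum]
  simp [Pi.single_apply, hd]
  simp_rw [fun k => hs k i]
  ring

lemma GV.decomp {μ : Measure (Fin n → ℝ)} {S} (h : GV μ S) (i : Fin n) :
    (μ.prod (gaussianReal 0 1)).map (fun q j => q.1 j - q.1 i * S i j + q.2 * S i j) = μ := by
  have := h.isGaussian
  have hm : Measurable (fun (q : (Fin n → ℝ) × ℝ) (j : Fin n) =>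
    q.1 j - q.1 i * S i j + q.2 * S i j) := by
    fun_prop
  have : IsProbabilityMeasure ((μ.prod (gaussianReal 0 1)).map
    (fun q j => q.1 j - q.1 i * S i j + q.2 * S i j)) := Measure.isProbabilityMeasure_map hm.aemeasurable
  apply Measure.ext_of_charFunDual
  ext L
  rw [charFunDual_eq_charFun_map_one, charFunDual_eq_charFun_map_one]
  congr 1
  obtain ⟨a, ha⟩ := dual_eq L
  have hL : ⇑L = fun x => ∑ i, a i * x i := funext ha
  rw [hL, h.law, Measure.map_map (by fun_prop) hm]
  set s := ∑ k, a k * S i k with hs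
  have e : ((fun x : Fin n → ℝ => ∑ i, a i * x i) ∘
      fun (q : (Fin n → ℝ) × ℝ) (j : Fin n) => q.1 j - q.1 i * S i j + q.2 * S i j)
    = (fun r : ℝ × ℝ => r.1 + r.2) ∘ Prod.map
      (fun x => ∑ k, (a k - s * (Pi.single i 1 : Fin n → ℝ) k) * x k) (fun w => s * w) := by
    ext q
    simp only [Function.comp, Prod.map]
    have : ∀ k, a k * (q.1 k - q.1 i * S i k + q.2 * S i k)
      = a k * q.1 k - q.1 i * (a k * S i k) + q.2 * (a k * S i k) := by intro k; ring
    simp_rw [this, Finset.sum_add_distrib, Finset.sum_sub_distrib, ← Finset.mul_sum, ← hs,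
      sub_mul, Finset.sum_sub_distrib]
    simp [Pi.single_apply]
    ring
  rw [e, ← Measure.map_map (by fun_prop) (by fun_prop), ← Measure.map_prod_map _ _ (by fun_prop) (by fun_prop),
    h.law, gaussianReal_map_const_mul]
  have := gaussianReal_conv_gaussianReal (m₁ := 0) (m₂ := 0)
    (v₁ := (∑ k, ∑ l, (a k - s * (Pi.single i 1 : Fin n → ℝ) k) * S k l * (a l - s * (Pi.single i 1 : Fin n → ℝ) l)).toNNReal)
    (v₂ := .mk (s ^ 2) (sq_nonneg _) * 1)
  rw [Measure.conv] at this
  simp only [mul_zero]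
  rw [this]
  simp only [add_zero]
  congr 1
  ext
  rw [NNReal.coe_add, Real.coe_toNNReal _ (h.psd _), Real.coe_toNNReal _ (h.psd _), quad S h.symm h.diag, ← hs]
  simp
  ring

end MedMax

namespace MedMax
variable {n : ℕ}

lemma GV.fubini {μ : Measure (Fin n → ℝ)} {S} (h : GV μ S) (i : Fin n) (f : (Fin n → ℝ) → ℝ)
    (hf : Integrable f μ) :
    ∫ x, f x ∂μ = ∫ x, ∫ w, f (fun j => x j - x i * S i j + w * S i j) ∂(gaussianReal 0 1) ∂μ := by
  have := h.isGaussian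
  have hm : Measurable (fun (q : (Fin n → ℝ) × ℝ) (j : Fin n) =>
    q.1 j - q.1 i * S i j + q.2 * S i j) := by
    fun_prop
  have hd := h.decomp i
  have hf' := hf
  rw [← hd] at hf'
  conv_lhs => rw [← hd]
  rw [integral_map hm.aemeasurable hf'.aestronglyMeasurable, integral_prod]
  exact hf'.comp_measurable hm

lemma abs_sum_p_le [NeZero n] (β : ℝ) (x u : Fin n → ℝ) (B : ℝ) (hB : ∀ j, |u j| ≤ B) :
    |∑ j, p β x j * u j| ≤ B := by
  calc |∑ j, p β x j * u j| ≤ ∑ j, |p β x j * u j| := Finset.abs_sum_le_sum_abs _ _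
    _ ≤ ∑ j, p β x j * B := by
        apply Finset.sum_le_sum; intro j _
        rw [abs_mul, abs_of_nonneg (p_nonneg β x j)]
        exact mul_le_mul_of_nonneg_left (hB j) (p_nonneg β x j)
    _ = B := by rw [← Finset.sum_mul, p_sum, one_mul]

lemma abs_p_le [NeZero n] (β : ℝ) (x : Fin n → ℝ) (i : Fin n) : |p β x i| ≤ 1 := by
  rw [abs_of_nonneg (p_nonneg β x i)]; exact p_le_one β x i

lemma abs_der_le [NeZero n] {β : ℝ} (x u : Fin n → ℝ) (B : ℝ) (hB : ∀ j, |u j| ≤ B) (i : Fin n) :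
    |β * p β x i * (u i - ∑ j, p β x j * u j)| ≤ |β| * 1 * (B + B) := by
  rw [abs_mul, abs_mul]
  have h1 := abs_p_le β x i
  have h2 : |u i - ∑ j, p β x j * u j| ≤ B + B :=
    (abs_sub _ _).trans (add_le_add (hB i) (abs_sum_p_le β x u B hB))
  gcongr

lemma GV.ibp [NeZero n] {μ : Measure (Fin n → ℝ)} {S} (h : GV μ S) (i : Fin n) (β c : ℝ)
    (d : Fin n → ℝ) :
    ∫ x, p β (fun j => c * x j + d j) i * x i ∂μ =
      ∫ x, β * c * (p β (fun j => c * x j + d j) i *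
        (S i i - ∑ j, p β (fun j => c * x j + d j) j * S i j)) ∂μ := by
  have := h.isGaussian
  have hlin : Continuous (fun (x : Fin n → ℝ) (j : Fin n) => c * x j + d j) := by fun_prop
  have hpc : ∀ j, Continuous (fun x : Fin n → ℝ => p β (fun j => c * x j + d j) j) := fun j =>
    (continuous_p β j).comp hlin
  set B : ℝ := ∑ j, |c * S i j| with hBdef
  have hB : ∀ j, |c * S i j| ≤ B := fun j =>
    Finset.single_le_sum (f := fun j => |c * S i j|) (fun _ _ => abs_nonneg _) (Finset.mem_univ j)
  have eD : ∀ x : Fin n → ℝ, β * c * (p β x i * (S i i - ∑ j, p β x j * S i j))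
      = β * p β x i * (c * S i i - ∑ j, p β x j * (c * S i j)) := by
    intro x
    have : ∑ j, p β x j * (c * S i j) = c * ∑ j, p β x j * S i j := by
      rw [Finset.mul_sum]; apply Finset.sum_congr rfl; intro j _; ring
    rw [this]; ring
  rw [h.fubini i (fun x => p β (fun j => c * x j + d j) i * x i),
    h.fubini i (fun x => β * c * (p β (fun j => c * x j + d j) i *
        (S i i - ∑ j, p β (fun j => c * x j + d j) j * S i j)))]
  · congr 1
    ext x
    have hz : ∀ w : ℝ, ∀ j, HasDerivAt
      (fun w : ℝ => c * (x j - x i * S i j + w * S i j) + d j) (c * S i j) w := by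
      intro w j
      have := ((((hasDerivAt_id w).mul_const (S i j)).const_add (x j - x i * S i j)).const_mul c).add_const (d j)
      refine this.congr_deriv ?_
      ring
    have hst := stein
      (fun w => p β (fun j => c * (x j - x i * S i j + w * S i j) + d j) i)
      (fun w => β * p β (fun j => c * (x j - x i * S i j + w * S i j) + d j) i *
        (c * S i i - ∑ k, p β (fun j => c * (x j - x i * S i j + w * S i j) + d j) k * (c * S i k)))
      1 (|β| * 1 * (B + B))
      (fun w => hasDerivAt_p β (fun w j => c * (x j - x i * S i j + w * S i j) + d j)
        (fun j => c * S i j) w (hz w) i)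
      (fun w => abs_p_le _ _ _)
      (fun w => abs_der_le _ (fun j => c * S i j) B hB i)
      (by
        have hl : Continuous (fun (w : ℝ) (j : Fin n) =>
            c * (x j - x i * S i j + w * S i j) + d j) := by fun_prop
        have : ∀ k, Continuous (fun w : ℝ =>
            p β (fun j => c * (x j - x i * S i j + w * S i j) + d j) k) := fun k =>
          (continuous_p β k).comp hl
        apply Continuous.measurable
        fun_prop)
    simp only [eD]
    rw [← hst]
    congr 1
    ext w
    simp [h.diag]
  · simp only [eD]
    apply Integrable.of_bound (C := |β| * 1 * (B + B))
    · apply Continuous.aestronglyMeasurable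
      fun_prop
    · exact Filter.Eventually.of_forall fun x => abs_der_le _ (fun j => c * S i j) B hB i
  · exact (h.integrable i).bdd_mul (c := 1) (hpc i).aestronglyMeasurable
      (Filter.Eventually.of_forall fun x => abs_p_le _ _ _)

end MedMax

namespace MedMax
variable {n : ℕ}

/-- interpolation -/
noncomputable def Zi (σ θ : ℝ) (q : (Fin n → ℝ) × (Fin n → ℝ)) : Fin n → ℝ :=
  fun j => cos θ * q.1 j + sin θ * σ * q.2 j

lemma continuous_Zi (σ θ : ℝ) : Continuous (Zi (n := n) σ θ) := by
  unfold Zi; fun_prop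

lemma integrable_fst_abs {μ ν : Measure (Fin n → ℝ)} {S T} (h : GV μ S) (k : GV ν T) (i : Fin n) :
    Integrable (fun q : (Fin n → ℝ) × (Fin n → ℝ) => q.1 i) (μ.prod ν) := by
  have := h.isGaussian
  have := k.isGaussian
  exact (h.integrable i).comp_fst ν

lemma integrable_snd_abs {μ ν : Measure (Fin n → ℝ)} {S T} (h : GV μ S) (k : GV ν T) (i : Fin n) :
    Integrable (fun q : (Fin n → ℝ) × (Fin n → ℝ) => q.2 i) (μ.prod ν) := by
  have := h.isGaussian
  have := k.isGaussian
  exact (k.integrable i).comp_snd μ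

lemma bound_integrable {μ ν : Measure (Fin n → ℝ)} {S T} (h : GV μ S) (k : GV ν T) (s : ℝ) :
    Integrable (fun q : (Fin n → ℝ) × (Fin n → ℝ) => ∑ i, (|q.1 i| + s * |q.2 i|))
      (μ.prod ν) := by
  apply integrable_finsetSum
  intro i _
  exact (integrable_fst_abs h k i).abs.add ((integrable_snd_abs h k i).abs.const_mul s)

lemma integrable_p_fst [NeZero n] {μ ν : Measure (Fin n → ℝ)} {S T} (h : GV μ S) (k : GV ν T)
    (β σ θ : ℝ) (i : Fin n) :
    Integrable (fun q => p β (Zi σ θ q) i * q.1 i) (μ.prod ν) :=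
  (integrable_fst_abs h k i).bdd_mul (c := 1)
    ((continuous_p β i).comp (continuous_Zi σ θ)).aestronglyMeasurable
    (Filter.Eventually.of_forall fun _ => abs_p_le _ _ _)

lemma integrable_p_snd [NeZero n] {μ ν : Measure (Fin n → ℝ)} {S T} (h : GV μ S) (k : GV ν T)
    (β σ θ : ℝ) (i : Fin n) :
    Integrable (fun q => p β (Zi σ θ q) i * q.2 i) (μ.prod ν) :=
  (integrable_snd_abs h k i).bdd_mul (c := 1)
    ((continuous_p β i).comp (continuous_Zi σ θ)).aestronglyMeasurable
    (Filter.Eventually.of_forall fun _ => abs_p_le _ _ _)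

lemma integrable_pp [NeZero n] {μ ν : Measure (Fin n → ℝ)} {S T} (h : GV μ S) (k : GV ν T)
    (β σ θ b : ℝ) (i : Fin n) (U : Fin n → ℝ) :
    Integrable (fun q => b * (p β (Zi σ θ q) i * (U i - ∑ j, p β (Zi σ θ q) j * U j))) (μ.prod ν) := by
  have := h.isGaussian
  have := k.isGaussian
  apply Integrable.const_mul
  have hc : ∀ j, Continuous (fun q => p β (Zi (n := n) σ θ q) j) := fun j =>
    (continuous_p β j).comp (continuous_Zi σ θ)
  have hB : ∀ j, |U j| ≤ ∑ j, |U j| := fun j =>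
    Finset.single_le_sum (f := fun j => |U j|) (fun _ _ => abs_nonneg _) (Finset.mem_univ j)
  apply Integrable.of_bound (C := 1 * (∑ j, |U j| + ∑ j, |U j|))
  · apply Continuous.aestronglyMeasurable
    fun_prop
  · refine Filter.Eventually.of_forall fun q => ?_
    rw [norm_eq_abs, abs_mul]
    have h1 := abs_p_le β (Zi σ θ q) i
    have h2 : |U i - ∑ j, p β (Zi σ θ q) j * U j| ≤ ∑ j, |U j| + ∑ j, |U j| :=
      (abs_sub _ _).trans (add_le_add (hB i) (abs_sum_p_le β _ U _ hB))
    gcongr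

lemma ibp_fst [NeZero n] {μ ν : Measure (Fin n → ℝ)} {S T} (h : GV μ S) (k : GV ν T)
    (β σ θ : ℝ) (i : Fin n) :
    ∫ q, p β (Zi σ θ q) i * q.1 i ∂(μ.prod ν) =
      ∫ q, β * cos θ * (p β (Zi σ θ q) i * (S i i - ∑ j, p β (Zi σ θ q) j * S i j)) ∂(μ.prod ν) := by
  have := h.isGaussian
  have := k.isGaussian
  rw [integral_prod_symm _ (integrable_p_fst h k β σ θ i),
    integral_prod_symm _ (integrable_pp h k β σ θ _ i (S i))]
  congr 1
  ext y
  exact h.ibp i β (cos θ) (fun j => sin θ * σ * y j)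

lemma ibp_snd [NeZero n] {μ ν : Measure (Fin n → ℝ)} {S T} (h : GV μ S) (k : GV ν T)
    (β σ θ : ℝ) (i : Fin n) :
    ∫ q, p β (Zi σ θ q) i * q.2 i ∂(μ.prod ν) =
      ∫ q, β * (sin θ * σ) * (p β (Zi σ θ q) i * (T i i - ∑ j, p β (Zi σ θ q) j * T i j)) ∂(μ.prod ν) := by
  have := h.isGaussian
  have := k.isGaussian
  rw [integral_prod _ (integrable_p_snd h k β σ θ i),
    integral_prod _ (integrable_pp h k β σ θ _ i (T i))]
  congr 1
  ext x
  have := k.ibp i β (sin θ * σ) (fun j => cos θ * x j)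
  have e : ∀ y : Fin n → ℝ, Zi σ θ (x, y) = fun j => sin θ * σ * y j + cos θ * x j := by
    intro y; ext j; simp only [Zi]; ring
  simp only [e]
  exact this

lemma hasDerivAt_Zi (σ θ : ℝ) (q : (Fin n → ℝ) × (Fin n → ℝ)) (j : Fin n) :
    HasDerivAt (fun θ => Zi σ θ q j) (- sin θ * q.1 j + cos θ * σ * q.2 j) θ := by
  have := ((hasDerivAt_cos θ).mul_const (q.1 j)).add
    (((hasDerivAt_sin θ).mul_const σ).mul_const (q.2 j))
  exact this

lemma integrable_F [NeZero n] {μ ν : Measure (Fin n → ℝ)} {S T} (h : GV μ S) (k : GV ν T)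
    {β : ℝ} (hβ : 0 < β) (σ θ : ℝ) :
    Integrable (fun q => F β (Zi σ θ q)) (μ.prod ν) := by
  have := h.isGaussian
  have := k.isGaussian
  refine Integrable.mono' ((bound_integrable h k |σ|).add (integrable_const (log n / β)))
    ((continuous_F β).comp (continuous_Zi σ θ)).aestronglyMeasurable
    (Filter.Eventually.of_forall fun q => ?_)
  refine (abs_F_le hβ _).trans ?_
  simp only [Pi.add_apply]
  gcongr with i
  unfold Zi
  refine (abs_add_le _ _).trans ?_
  rw [abs_mul, abs_mul, abs_mul]
  have h1 := abs_cos_le_one θ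
  have h2 := abs_sin_le_one θ
  calc _ ≤ 1 * |q.1 i| + 1 * |σ| * |q.2 i| := by gcongr
    _ = _ := by ring

lemma abs_D_le [NeZero n] (β σ θ : ℝ) (q : (Fin n → ℝ) × (Fin n → ℝ)) :
    |∑ i, p β (Zi σ θ q) i * (- sin θ * q.1 i + cos θ * σ * q.2 i)|
      ≤ ∑ i, (|q.1 i| + |σ| * |q.2 i|) := by
  refine (Finset.abs_sum_le_sum_abs _ _).trans ?_
  apply Finset.sum_le_sum
  intro i _
  rw [abs_mul]
  have h0 : |- sin θ * q.1 i + cos θ * σ * q.2 i| ≤ |q.1 i| + |σ| * |q.2 i| := by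
    refine (abs_add_le _ _).trans ?_
    rw [abs_mul, abs_mul, abs_mul, abs_neg]
    have h1 := abs_cos_le_one θ
    have h2 := abs_sin_le_one θ
    calc _ ≤ 1 * |q.1 i| + 1 * |σ| * |q.2 i| := by gcongr
      _ = _ := by ring
  calc _ ≤ 1 * (|q.1 i| + |σ| * |q.2 i|) := by
        gcongr; exact abs_p_le _ _ _
    _ = _ := one_mul _

lemma hasDerivAt_phi [NeZero n] {μ ν : Measure (Fin n → ℝ)} {S T} (h : GV μ S) (k : GV ν T)
    {β : ℝ} (hβ : 0 < β) (σ θ : ℝ) :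
    HasDerivAt (fun θ => ∫ q, F β (Zi σ θ q) ∂(μ.prod ν))
      (∫ q, ∑ i, p β (Zi σ θ q) i * (- sin θ * q.1 i + cos θ * σ * q.2 i) ∂(μ.prod ν)) θ := by
  refine (hasDerivAt_integral_of_dominated_loc_of_deriv_le (s := Set.univ)
    (bound := fun q => ∑ i, (|q.1 i| + |σ| * |q.2 i|)) (μ := μ.prod ν)
    (F := fun θ q => F β (Zi σ θ q))
    (F' := fun θ q => ∑ i, p β (Zi σ θ q) i * (- sin θ * q.1 i + cos θ * σ * q.2 i))
    Filter.univ_mem ?_ (integrable_F h k hβ σ θ) ?_ ?_ (bound_integrable h k |σ|) ?_).2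
  · exact Filter.Eventually.of_forall fun θ =>
      ((continuous_F β).comp (continuous_Zi σ θ)).aestronglyMeasurable
  · have hc : ∀ j, Continuous (fun q => p β (Zi (n := n) σ θ q) j) := fun j =>
      (continuous_p β j).comp (continuous_Zi σ θ)
    apply Continuous.aestronglyMeasurable
    fun_prop
  · exact Filter.Eventually.of_forall fun q θ _ => abs_D_le β σ θ q
  · exact Filter.Eventually.of_forall fun q θ _ =>
      hasDerivAt_F hβ (fun θ => Zi σ θ q) _ θ fun j => hasDerivAt_Zi σ θ q j

lemma key_ineq [NeZero n] (β ρ : ℝ) (z : Fin n → ℝ) (S T : Fin n → Fin n → ℝ)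
    (hS : ∀ i, S i i = 1) (hSρ : ∀ i j, i ≠ j → S i j ≤ ρ)
    (hT : ∀ i j, T i j = if i = j then 1 else 0) :
    (1 - ρ) * (∑ i, p β z i * (T i i - ∑ j, p β z j * T i j))
      ≤ ∑ i, p β z i * (S i i - ∑ j, p β z j * S i j) := by
  rw [Finset.mul_sum]
  apply Finset.sum_le_sum
  intro i _
  have h1 : ∑ j, p β z j * T i j = p β z i := by simp [hT]
  have h2 : ∑ j, p β z j * S i j ≤ ∑ j, (ρ * p β z j + (1 - ρ) * (p β z j * T i j)) := by
    apply Finset.sum_le_sum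
    intro j _
    by_cases hij : i = j
    · subst hij; rw [hS, hT]; simp only [if_true]; linarith
    · have := mul_le_mul_of_nonneg_left (hSρ i j hij) (p_nonneg β z j)
      rw [hT, if_neg hij]; linarith
  rw [Finset.sum_add_distrib, ← Finset.mul_sum, ← Finset.mul_sum, p_sum, h1] at h2
  rw [h1, hS, hT, if_pos rfl, mul_left_comm]
  apply mul_le_mul_of_nonneg_left _ (p_nonneg β z i)
  linarith

lemma comparison [NeZero n] {μ ν : Measure (Fin n → ℝ)} {S T} (h : GV μ S) (k : GV ν T)
    {β : ℝ} (hβ : 0 < β) (ρ : ℝ) (hρ : ρ < 1) (hSρ : ∀ i j, i ≠ j → S i j ≤ ρ)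
    (hT : ∀ i j, T i j = if i = j then 1 else 0) :
    ∫ y, F β (fun j => √(1 - ρ) * y j) ∂ν ≤ ∫ x, F β x ∂μ := by
  have := h.isGaussian
  have := k.isGaussian
  set σ := √(1 - ρ) with hσ
  have hσ2 : σ * σ = 1 - ρ := mul_self_sqrt (by linarith)
  have hd := hasDerivAt_phi h k hβ σ
  have hanti : AntitoneOn (fun θ => ∫ q, F β (Zi σ θ q) ∂(μ.prod ν)) (Set.Icc 0 (π / 2)) := by
    apply antitoneOn_of_deriv_nonpos (convex_Icc _ _)
    · exact fun θ _ => (hd θ).continuousAt.continuousWithinAt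
    · exact fun θ _ => (hd θ).differentiableAt.differentiableWithinAt
    · intro θ hθ
      rw [interior_Icc] at hθ
      rw [(hd θ).deriv]
      have hs : 0 ≤ sin θ := (sin_pos_of_pos_of_lt_pi hθ.1 (by linarith [hθ.2, pi_pos])).le
      have hc : 0 ≤ cos θ := (cos_pos_of_mem_Ioo ⟨by linarith [hθ.1, pi_pos], hθ.2⟩).le
      have e1 : ∀ q : (Fin n → ℝ) × (Fin n → ℝ),
          ∑ i, p β (Zi σ θ q) i * (- sin θ * q.1 i + cos θ * σ * q.2 i)
          = ∑ i, (- sin θ * (p β (Zi σ θ q) i * q.1 i)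
            + cos θ * σ * (p β (Zi σ θ q) i * q.2 i)) := by
        intro q; apply Finset.sum_congr rfl; intro i _; ring
      simp_rw [e1]
      have e2 : ∫ q, ∑ i, (- sin θ * (p β (Zi σ θ q) i * q.1 i)
            + cos θ * σ * (p β (Zi σ θ q) i * q.2 i)) ∂(μ.prod ν)
          = ∫ q, ∑ i, (- sin θ * (β * cos θ * (p β (Zi σ θ q) i * (S i i - ∑ j, p β (Zi σ θ q) j * S i j)))
            + cos θ * σ * (β * (sin θ * σ) * (p β (Zi σ θ q) i * (T i i - ∑ j, p β (Zi σ θ q) j * T i j)))) ∂(μ.prod ν) := by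
        rw [integral_finsetSum, integral_finsetSum]
        · apply Finset.sum_congr rfl
          intro i _
          rw [integral_add ((integrable_p_fst h k β σ θ i).const_mul _)
            ((integrable_p_snd h k β σ θ i).const_mul _),
            integral_add ((integrable_pp h k β σ θ _ i (S i)).const_mul _)
            ((integrable_pp h k β σ θ _ i (T i)).const_mul _)]
          rw [integral_const_mul, integral_const_mul, ibp_fst h k, ibp_snd h k,
            ← integral_const_mul, ← integral_const_mul]
        · intro i _
          exact ((integrable_pp h k β σ θ _ i (S i)).const_mul _).add
            ((integrable_pp h k β σ θ _ i (T i)).const_mul _)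
        · intro i _
          exact ((integrable_p_fst h k β σ θ i).const_mul _).add
            ((integrable_p_snd h k β σ θ i).const_mul _)
      rw [e2]
      apply integral_nonpos
      intro q
      have hk := key_ineq β ρ (Zi σ θ q) S T h.diag hSρ hT
      have e3 : ∑ i, (- sin θ * (β * cos θ * (p β (Zi σ θ q) i * (S i i - ∑ j, p β (Zi σ θ q) j * S i j)))
            + cos θ * σ * (β * (sin θ * σ) * (p β (Zi σ θ q) i * (T i i - ∑ j, p β (Zi σ θ q) j * T i j))))
          = β * sin θ * cos θ * ((1 - ρ) * (∑ i, p β (Zi σ θ q) i * (T i i - ∑ j, p β (Zi σ θ q) j * T i j))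
            - ∑ i, p β (Zi σ θ q) i * (S i i - ∑ j, p β (Zi σ θ q) j * S i j)) := by
        rw [Finset.mul_sum, ← Finset.sum_sub_distrib, Finset.mul_sum]
        apply Finset.sum_congr rfl
        intro i _
        rw [← hσ2]; ring
      simp only [Pi.zero_apply]
      rw [e3]
      exact mul_nonpos_of_nonneg_of_nonpos (by positivity) (by linarith)
  have h0 := hanti (a := 0) (b := π / 2) ⟨le_rfl, by positivity⟩ ⟨by positivity, le_rfl⟩ (by positivity)
  have z1 : ∀ q : (Fin n → ℝ) × (Fin n → ℝ), Zi σ 0 q = q.1 := by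
    intro q; ext j; simp [Zi]
  have z2 : ∀ q : (Fin n → ℝ) × (Fin n → ℝ), Zi σ (π / 2) q = fun j => σ * q.2 j := by
    intro q; ext j; simp [Zi]
  simp only [z1, z2] at h0
  rw [integral_fun_fst (μ := μ) (ν := ν) (fun x => F β x),
    integral_fun_snd (μ := μ) (ν := ν) (fun y => F β (fun j => σ * y j))] at h0
  simpa using h0

end MedMax

namespace MedMax
variable {n : ℕ}

lemma GV.integrable_F {μ : Measure (Fin n → ℝ)} {S} [NeZero n] (h : GV μ S)
    {β : ℝ} (hβ : 0 < β) (σ : ℝ) :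
    Integrable (fun x => F β (fun j => σ * x j)) μ := by
  have := h.isGaussian
  have hl : Continuous (fun (x : Fin n → ℝ) (j : Fin n) => σ * x j) := by fun_prop
  refine Integrable.mono' (g := fun x => ∑ i, |σ * x i| + log n / β) ?_
    ((continuous_F β).comp hl).aestronglyMeasurable
    (Filter.Eventually.of_forall fun q => abs_F_le hβ _)
  exact (integrable_finsetSum _ fun i _ => ((h.integrable i).const_mul σ).abs).add
    (integrable_const _)

/-- derivative of the soft max along the rotation -/
noncomputable def D (β θ : ℝ) (q : (Fin n → ℝ) × (Fin n → ℝ)) : ℝ :=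
    ∑ i, p β (Zi 1 θ q) i * (- sin θ * q.1 i + cos θ * 1 * q.2 i)

lemma continuous_D [NeZero n] (β : ℝ) :
    Continuous (fun r : ((Fin n → ℝ) × (Fin n → ℝ)) × ℝ => D β r.2 r.1) := by
  have hlin : Continuous (fun r : ((Fin n → ℝ) × (Fin n → ℝ)) × ℝ => Zi (n := n) 1 r.2 r.1) := by
    unfold Zi; fun_prop
  have hp : ∀ i, Continuous (fun r : ((Fin n → ℝ) × (Fin n → ℝ)) × ℝ => p β (Zi 1 r.2 r.1) i) :=
    fun i => (continuous_p β i).comp hlin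
  unfold D
  fun_prop

lemma conc_path [NeZero n] {β : ℝ} (hβ : 0 < β) (q : (Fin n → ℝ) × (Fin n → ℝ)) :
    |F β q.2 - F β q.1| ≤ ∫ θ in Set.Ioc 0 (π / 2), |D β θ q| := by
  have hle : (0 : ℝ) ≤ π / 2 := by positivity
  have hder : ∀ θ : ℝ, HasDerivAt (fun θ => F β (Zi 1 θ q)) (D β θ q) θ := by
    intro θ
    unfold D
    exact hasDerivAt_F hβ (fun θ => Zi 1 θ q) _ θ fun j => hasDerivAt_Zi 1 θ q j
  have hcq : Continuous (fun θ : ℝ => D β θ q) := by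
    have hlin : Continuous (fun θ : ℝ => Zi (n := n) 1 θ q) := by
      unfold Zi; fun_prop
    have hp : ∀ i, Continuous (fun θ : ℝ => p β (Zi 1 θ q) i) :=
      fun i => (continuous_p β i).comp hlin
    unfold D
    fun_prop
  have h3 := intervalIntegral.integral_eq_sub_of_hasDerivAt (a := 0) (b := π / 2)
    (fun θ _ => hder θ) (hcq.intervalIntegrable _ _)
  have z1 : Zi 1 0 q = q.1 := by ext j; simp [Zi]
  have z2 : Zi 1 (π / 2) q = q.2 := by ext j; simp [Zi]
  rw [z1, z2] at h3
  rw [← h3, ← intervalIntegral.integral_of_le hle]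
  exact intervalIntegral.abs_integral_le_integral_abs hle

lemma conc_slice [NeZero n] {μ : Measure (Fin n → ℝ)} {S} (h : GV μ S) (β θ : ℝ) :
    ∫ q, |D β θ q| ∂(μ.prod μ) ≤ 1 := by
  have := h.isGaussian
  have hpc : ∀ i, Continuous (fun q : (Fin n → ℝ) × (Fin n → ℝ) => p β q.1 i) := fun i =>
    (continuous_p β i).comp continuous_fst
  set H : (Fin n → ℝ) × (Fin n → ℝ) → ℝ := fun q => |∑ i, p β q.1 i * q.2 i| with hH
  have hHc : Continuous H := by simp only [hH]; fun_prop
  have e1 : ∀ q, |D β θ q| = H (ContinuousLinearMap.rotation θ q) := by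
    intro q
    have : Zi 1 θ q = cos θ • q.1 + sin θ • q.2 := by ext j; simp [Zi]
    simp only [hH, D, ContinuousLinearMap.rotation_apply, this]
    simp
  simp_rw [e1]
  rw [← integral_map (φ := ⇑(ContinuousLinearMap.rotation θ)) (by fun_prop) hHc.aestronglyMeasurable, h.rot θ]
  have hpi : ∀ i, Integrable (fun x : Fin n → ℝ => p β x i) μ := fun i =>
    Integrable.of_bound (C := 1) (continuous_p β i).aestronglyMeasurable
      (Filter.Eventually.of_forall fun x => abs_p_le β x i)
  have hgi : ∀ i, Integrable (fun q : (Fin n → ℝ) × (Fin n → ℝ) => p β q.1 i * |q.2 i|) (μ.prod μ) :=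
    fun i => (hpi i).mul_prod (h.integrable i).abs
  calc ∫ q, H q ∂(μ.prod μ) ≤ ∫ q, ∑ i, p β q.1 i * |q.2 i| ∂(μ.prod μ) := by
        apply integral_mono_of_nonneg (Filter.Eventually.of_forall fun q => abs_nonneg _)
          (integrable_finsetSum _ fun i _ => hgi i)
        refine Filter.Eventually.of_forall fun q => ?_
        refine (Finset.abs_sum_le_sum_abs _ _).trans (le_of_eq ?_)
        apply Finset.sum_congr rfl
        intro i _
        rw [abs_mul, abs_of_nonneg (p_nonneg β q.1 i)]
    _ = ∑ i, (∫ x, p β x i ∂μ) * ∫ y, |y i| ∂μ := by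
        rw [integral_finsetSum _ fun i _ => hgi i]
        apply Finset.sum_congr rfl
        intro i _
        exact integral_prod_mul (μ := μ) (ν := μ) (fun x : Fin n → ℝ => p β x i) (fun y => |y i|)
    _ ≤ ∑ i, (∫ x, p β x i ∂μ) * 1 := by
        apply Finset.sum_le_sum
        intro i _
        exact mul_le_mul_of_nonneg_left (h.int_abs i) (integral_nonneg fun x => p_nonneg β x i)
    _ = 1 := by
        simp only [mul_one]
        rw [← integral_finsetSum _ fun i _ => hpi i]
        simp [p_sum]

lemma conc [NeZero n] {μ : Measure (Fin n → ℝ)} {S} (h : GV μ S) {β : ℝ} (hβ : 0 < β) :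
    ∫ q, |F β q.2 - F β q.1| ∂(μ.prod μ) ≤ π / 2 := by
  have := h.isGaussian
  have hDc := continuous_D (n := n) β
  have hb := conc_path (n := n) hβ
  have hin := conc_slice h β
  have hle : (0 : ℝ) ≤ π / 2 := by positivity
  have hDi : Integrable (fun r : ((Fin n → ℝ) × (Fin n → ℝ)) × ℝ => |D β r.2 r.1|)
      ((μ.prod μ).prod (volume.restrict (Set.Ioc 0 (π / 2)))) := by
    apply Integrable.abs
    refine Integrable.mono' ((bound_integrable h h |1|).comp_fst _) hDc.aestronglyMeasurable
      (Filter.Eventually.of_forall fun r => abs_D_le β 1 r.2 r.1)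
  calc ∫ q, |F β q.2 - F β q.1| ∂(μ.prod μ)
      ≤ ∫ q, (∫ θ in Set.Ioc 0 (π / 2), |D β θ q|) ∂(μ.prod μ) :=
        integral_mono_of_nonneg (Filter.Eventually.of_forall fun q => abs_nonneg _)
          hDi.integral_prod_left (Filter.Eventually.of_forall hb)
    _ = ∫ θ in Set.Ioc 0 (π / 2), ∫ q, |D β θ q| ∂(μ.prod μ) :=
        integral_integral_swap (f := fun q θ => |D β θ q|) hDi
    _ ≤ ∫ θ in Set.Ioc 0 (π / 2), (1 : ℝ) := by
        apply integral_mono hDi.integral_prod_right (integrable_const _)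
        exact hin
    _ = π / 2 := by simp [hle]

/-- A quantile of order one half is not far below the mean. -/
lemma median_ge [NeZero n] {μ : Measure (Fin n → ℝ)} {S} (h : GV μ S) {β : ℝ} (hβ : 0 < β) (m : ℝ)
    (hm : 1 / 2 ≤ μ.real {x | F β x ≤ m}) : ∫ x, F β x ∂μ - π ≤ m := by
  have := h.isGaussian
  have hc := conc h hβ
  have hFi : Integrable (fun x => F β x) μ := by simpa using h.integrable_F hβ 1
  have hi : Integrable (fun q : (Fin n → ℝ) × (Fin n → ℝ) => |F β q.2 - F β q.1|) (μ.prod μ) :=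
    ((hFi.comp_snd μ).sub (hFi.comp_fst μ)).abs
  rw [integral_prod _ hi] at hc
  set E := ∫ x, F β x ∂μ with hE
  by_contra! hlt
  have hms : MeasurableSet {x : Fin n → ℝ | F β x ≤ m} :=
    measurableSet_le (continuous_F β).measurable measurable_const
  have hge : ∀ x, Set.indicator {x : Fin n → ℝ | F β x ≤ m} (fun _ => E - m) x
      ≤ ∫ y, |F β y - F β x| ∂μ := by
    intro x
    by_cases hx : F β x ≤ m
    · rw [Set.indicator_of_mem (by exact hx)]
      calc E - m ≤ E - F β x := by linarith
        _ = ∫ y, (F β y - F β x) ∂μ := by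
            rw [integral_sub hFi (integrable_const _)]; simp [hE]
        _ ≤ _ := integral_mono (hFi.sub (integrable_const _)) (hFi.sub (integrable_const _)).abs
            fun y => le_abs_self _
    · rw [Set.indicator_of_notMem (by exact hx)]
      exact integral_nonneg fun _ => abs_nonneg _
  have h2 := integral_mono ((integrable_const (E - m)).indicator hms) hi.integral_prod_left hge
  rw [integral_indicator hms, setIntegral_const, smul_eq_mul] at h2
  have h3 := h2.trans hc
  have h4 : 1 / 2 * (E - m) ≤ π / 2 := le_trans (by
    apply mul_le_mul_of_nonneg_right hm; linarith [pi_pos]) h3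
  linarith

end MedMax
namespace MedMax
variable {n : ℕ}

lemma psd_of_law [NeZero n] (μ : Measure (Fin n → ℝ)) (S : Fin n → Fin n → ℝ)
    (hs : ∀ i j, S i j = S j i) (hd : ∀ i, S i i = 1)
    (law : ∀ a : Fin n → ℝ, μ.map (fun x => ∑ i, a i * x i) =
        gaussianReal 0 (Real.toNNReal (∑ i, ∑ j, a i * S i j * a j))) (a : Fin n → ℝ) :
    0 ≤ ∑ i, ∑ j, a i * S i j * a j := by
  by_contra! hneg
  set Q := ∑ i, ∑ j, a i * S i j * a j with hQ
  set B := ∑ k, a k * S 0 k with hB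
  obtain ⟨s, hs0, hsQ⟩ : ∃ s : ℝ, s ≠ 0 ∧ Q - 2 * s * B + s ^ 2 ≤ 0 := by
    have hk : 0 < √(-Q) := sqrt_pos.2 (by linarith)
    have hk2 : √(-Q) ^ 2 = -Q := sq_sqrt (by linarith)
    rcases le_total 0 B with h | h
    · refine ⟨√(-Q), hk.ne', ?_⟩
      rw [hk2]; nlinarith [mul_nonneg hk.le h]
    · refine ⟨-√(-Q), neg_ne_zero.2 hk.ne', ?_⟩
      rw [neg_sq, hk2]; nlinarith [mul_nonneg hk.le (neg_nonneg.2 h)]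
  have hm : ∀ b : Fin n → ℝ, Measurable (fun x : Fin n → ℝ => ∑ i, b i * x i) := fun b => by fun_prop
  have h1 : ∀ᵐ x ∂μ, ∑ i, a i * x i = 0 := by
    have := law a
    rw [Real.toNNReal_of_nonpos hneg.le, gaussianReal_zero_var] at this
    have h0 : ∀ᵐ y ∂(μ.map (fun x => ∑ i, a i * x i)), y = 0 := by
      rw [this]; simp [ae_dirac_eq]
    exact ae_of_ae_map (hm a).aemeasurable h0
  have h2 := law (fun k => a k - s * (Pi.single 0 1 : Fin n → ℝ) k)
  have h3 := law (fun k => 0 - s * (Pi.single 0 1 : Fin n → ℝ) k)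
  rw [quad S hs hd, Real.toNNReal_of_nonpos hsQ] at h2
  rw [quad S hs hd (fun _ => 0)] at h3
  have h4 : μ.map (fun x => ∑ k, (a k - s * (Pi.single 0 1 : Fin n → ℝ) k) * x k)
      = μ.map (fun x => ∑ k, (0 - s * (Pi.single 0 1 : Fin n → ℝ) k) * x k) := by
    apply Measure.map_congr
    filter_upwards [h1] with x hx
    simp only [sub_mul, Finset.sum_sub_distrib, hx, zero_mul, Finset.sum_const_zero]
  rw [h2, h3, gaussianReal_ext_iff] at h4
  have h5 := h4.2.symm
  rw [Real.toNNReal_eq_zero] at h5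
  simp at h5
  have := sq_nonneg s
  exact hs0 (pow_eq_zero_iff (two_ne_zero) |>.1 (le_antisymm (by simpa using h5) this))

lemma gv_pi : GV (Measure.pi (fun _ : Fin n => gaussianReal 0 1)) (fun i j => if i = j then 1 else 0) := by
  refine ⟨fun i j => by simp [eq_comm], fun i => by simp, fun a => ?_, fun a => ?_⟩
  · simp only [mul_ite, mul_one, mul_zero, ite_mul, zero_mul, Finset.sum_ite_eq, Finset.mem_univ, if_true]
    exact Finset.sum_nonneg fun i _ => mul_self_nonneg _
  · have hm : Measurable (fun x : Fin n → ℝ => ∑ i, a i * x i) := by fun_prop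
    have : IsProbabilityMeasure ((Measure.pi (fun _ : Fin n => gaussianReal 0 1)).map
        (fun x => ∑ i, a i * x i)) := Measure.isProbabilityMeasure_map hm.aemeasurable
    apply Measure.ext_of_charFun
    ext t
    rw [charFun_apply_real, charFun_gaussianReal, integral_map hm.aemeasurable]
    · have e : ∀ x : Fin n → ℝ, Complex.exp (t * ((∑ i, a i * x i : ℝ) : ℂ) * Complex.I)
        = ∏ i, Complex.exp ((t * a i : ℝ) * x i * Complex.I) := by
        intro x
        rw [← Complex.exp_sum]
        congr 1
        push_cast
        rw [Finset.mul_sum, Finset.sum_mul]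
        apply Finset.sum_congr rfl
        intro i _; ring
      simp_rw [e]
      rw [integral_fintype_prod_eq_prod (f := fun i (y : ℝ) => Complex.exp ((t * a i : ℝ) * y * Complex.I))]
      simp_rw [← charFun_apply_real, charFun_gaussianReal, ← Complex.exp_sum]
      congr 1
      simp only [mul_ite, mul_one, mul_zero, ite_mul, zero_mul, Finset.sum_ite_eq, Finset.mem_univ, if_true]
      rw [Real.coe_toNNReal _ (Finset.sum_nonneg fun i _ => mul_self_nonneg _)]
      push_cast
      simp
      rw [Finset.sum_mul, Finset.sum_div]
      apply Finset.sum_congr rfl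
      intro i _; ring
    · apply Continuous.aestronglyMeasurable
      fun_prop

lemma tail_lower (s : ℝ) (hs : 2 ≤ s) :
    exp (-(s - 1) ^ 2 / 2) / 3 ≤ (gaussianReal 0 1).real (Set.Ici (s - 2)) := by
  have h1 : (gaussianReal 0 1).real (Set.Icc (s - 2) (s - 1)) ≤ (gaussianReal 0 1).real (Set.Ici (s - 2)) :=
    measureReal_mono Set.Icc_subset_Ici_self
  refine le_trans ?_ h1
  rw [measureReal_def, gaussianReal_apply_eq_integral 0 one_ne_zero, ENNReal.toReal_ofReal
    (integral_nonneg fun x => gaussianPDFReal_nonneg _ _ _)]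
  have h2 : ∫ x in Set.Icc (s - 2) (s - 1), exp (-(s - 1) ^ 2 / 2) / 3 ≤
      ∫ x in Set.Icc (s - 2) (s - 1), gaussianPDFReal 0 1 x := by
    apply setIntegral_mono_on
    · exact integrableOn_const (by simp)
    · exact (integrable_gaussianPDFReal 0 1).integrableOn
    · exact measurableSet_Icc
    · intro x hx
      rw [gaussianPDFReal, div_eq_inv_mul]
      have hpi : √(2 * π * ((1 : NNReal) : ℝ)) ≤ 3 := by
        rw [sqrt_le_left (by norm_num)]
        have := pi_lt_d2
        push_cast
        linarith
      have hpi0 : 0 < √(2 * π * ((1 : NNReal) : ℝ)) := by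
        apply sqrt_pos.2; push_cast; positivity
      have h3 : x ^ 2 ≤ (s - 1) ^ 2 := by
        apply pow_le_pow_left₀ <;> linarith [hx.1, hx.2]
      refine mul_le_mul (inv_anti₀ hpi0 hpi) (exp_le_exp.2 ?_) (exp_pos _).le (by positivity)
      push_cast
      rw [sub_zero, mul_one]
      linarith
  refine le_trans (le_of_eq ?_) h2
  rw [setIntegral_const]
  simp [measureReal_def]
  norm_num

lemma max_lower [NeZero n] {β : ℝ} (hβ : 0 < β) (σ : ℝ) (hσ : 0 ≤ σ) :
    σ * (√(2 * log n) - 6) ≤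
      ∫ y, F β (fun j => σ * y j) ∂(Measure.pi (fun _ : Fin n => gaussianReal 0 1)) := by
  set ν := Measure.pi (fun _ : Fin n => gaussianReal 0 1) with hν
  set s := √(2 * log n) with hs
  have k : GV ν _ := gv_pi
  have hFi := k.integrable_F hβ σ
  have hn : (1 : ℝ) ≤ n := by exact_mod_cast Nat.pos_of_ne_zero (NeZero.ne n)
  rcases lt_or_ge s 2 with h2 | h2
  · have h1 : ∫ y, σ * y 0 ∂ν ≤ ∫ y, F β (fun j => σ * y j) ∂ν :=
      integral_mono ((k.integrable 0).const_mul σ) hFi fun y => le_F hβ (fun j => σ * y j) 0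
    rw [integral_const_mul, k.int_zero] at h1
    have : σ * (s - 6) ≤ 0 := mul_nonpos_of_nonneg_of_nonpos hσ (by linarith)
    linarith
  · set t := s - 2 with ht
    set A : Set (Fin n → ℝ) := Set.pi Set.univ (fun _ => Set.Iio t) with hA
    have hAm : MeasurableSet A := MeasurableSet.univ_pi fun _ => measurableSet_Iio
    have hpt : ∀ y : Fin n → ℝ, σ * (t - A.indicator (fun _ => t) y - |y 0|) ≤ F β (fun j => σ * y j) := by
      intro y
      by_cases hy : y ∈ A
      · rw [Set.indicator_of_mem hy]
        refine le_trans ?_ (le_F hβ (fun j => σ * y j) 0)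
        apply mul_le_mul_of_nonneg_left _ hσ
        linarith [neg_abs_le (y 0)]
      · rw [Set.indicator_of_notMem hy]
        simp only [hA, Set.mem_univ_pi, Set.mem_Iio, not_forall, not_lt] at hy
        obtain ⟨i, hi⟩ := hy
        refine le_trans ?_ (le_F hβ (fun j => σ * y j) i)
        apply mul_le_mul_of_nonneg_left _ hσ
        linarith [abs_nonneg (y 0)]
    have hii : Integrable (A.indicator (fun _ => t)) ν := (integrable_const t).indicator hAm
    have hgi : Integrable (fun y : Fin n → ℝ => t - A.indicator (fun _ => t) y) ν :=
      (integrable_const t).sub hii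
    have h1 := integral_mono ((hgi.sub (k.integrable 0).abs).const_mul σ) hFi hpt
    refine le_trans ?_ h1
    simp only [Pi.sub_apply]
    rw [integral_const_mul, integral_sub hgi (k.integrable 0).abs, integral_sub (integrable_const t) hii,
      integral_indicator hAm, setIntegral_const]
    apply mul_le_mul_of_nonneg_left _ hσ
    simp only [integral_const, probReal_univ, smul_eq_mul, one_mul]
    have hab := k.int_abs 0
    set q := (gaussianReal 0 1).real (Set.Ici t) with hq
    have hνA : ν.real A = (1 - q) ^ n := by
      rw [measureReal_def, hν, hA, Measure.pi_pi]
      simp only [Finset.prod_const, Finset.card_univ, Fintype.card_fin, ENNReal.toReal_pow]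
      congr 1
      rw [← measureReal_def, ← Set.compl_Ici, probReal_compl_eq_one_sub measurableSet_Ici]
    have hq1 : q ≤ 1 := measureReal_le_one
    have htail := tail_lower s h2
    have hs2 : s ^ 2 = 2 * log n := sq_sqrt (by have := log_nonneg hn; positivity)
    have hnexp : (n : ℝ) = exp (s ^ 2 / 2) := by
      rw [hs2, mul_div_cancel_left₀ _ (two_ne_zero), exp_log (by linarith)]
    have hnq : s / 3 ≤ n * q := by
      calc s / 3 ≤ exp (s - 1 / 2) / 3 := by
            have := add_one_le_exp (s - 1 / 2); linarith
        _ = n * (exp (-(s - 1) ^ 2 / 2) / 3) := by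
            rw [hnexp, ← mul_div_assoc, ← exp_add]; congr 2; ring
        _ ≤ n * q := by gcongr
    have hp1 : (1 - q) ^ n ≤ exp (-(n * q)) := by
      calc (1 - q) ^ n ≤ (exp (-q)) ^ n := by
            apply pow_le_pow_left₀ (by linarith)
            linarith [add_one_le_exp (-q)]
        _ = _ := by rw [← exp_nat_mul]; congr 1; ring
    have hp2 : exp (-(n * q)) ≤ exp (-(s / 3)) := exp_le_exp.2 (by linarith)
    have hp3 : s * exp (-(s / 3)) ≤ 3 := by
      rw [exp_neg, ← div_eq_mul_inv, div_le_iff₀ (exp_pos _)]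
      have := add_one_le_exp (s / 3); linarith
    have hp4 : (1 - q) ^ n * t ≤ 3 := by
      have hpow : 0 ≤ (1 - q) ^ n := pow_nonneg (by linarith) n
      calc (1 - q) ^ n * t ≤ (1 - q) ^ n * s := by gcongr; linarith
        _ ≤ exp (-(s / 3)) * s := by gcongr; exact hp1.trans hp2
        _ ≤ 3 := by rw [mul_comm]; exact hp3
    rw [hνA]
    linarith

end MedMax

open MedMax

theorem lower_bound_on_median_of_max :
    ∃ c₀ : ℝ, 0 < c₀ ∧
      ∀ (Ω : Type) [MeasureSpace Ω], IsProbabilityMeasure (ℙ : Measure Ω) →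
        ∀ (n : ℕ), 2 ≤ n →
          ∀ (X : Fin n → Ω → ℝ) (R : Matrix (Fin n) (Fin n) ℝ) (ρ₀ : ℝ),
            ρ₀ ∈ Set.Ioo (0 : ℝ) 1 →
            IsCenteredGaussianVec X R →
            (∀ i j, i ≠ j → R i j ≤ ρ₀) →
            ∀ m : ℝ, IsMedian (fun ω => ⨆ i, X i ω) m →
              Real.sqrt (2 * (1 - ρ₀) * Real.log n)
                  - c₀ * Real.sqrt (Real.log (Real.log (max (n : ℝ) 3)))
                ≤ m := by
  have hl3 : 1 < log 3 := by
    rw [lt_log_iff_exp_lt (by norm_num)]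
    linarith [exp_one_lt_d9]
  have hll3 : 0 < log (log 3) := log_pos hl3
  refine ⟨11 / √(log (log 3)), by positivity, ?_⟩
  intro Ω _ hP n hn X R ρ hρ hX hR m hm
  obtain ⟨hXm, hRd, hlaw⟩ := hX
  have : NeZero n := ⟨by omega⟩
  have hXmeas : Measurable (fun ω i => X i ω) := measurable_pi_iff.2 hXm
  set μ : Measure (Fin n → ℝ) := (ℙ : Measure Ω).map (fun ω i => X i ω) with hμ
  set S : Fin n → Fin n → ℝ := fun i j => (R i j + R j i) / 2 with hS
  have hSs : ∀ i j, S i j = S j i := fun i j => by simp only [hS]; ring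
  have hSd : ∀ i, S i i = 1 := fun i => by simp only [hS, hRd]; norm_num
  have hQ : ∀ a : Fin n → ℝ, ∑ i, ∑ j, a i * S i j * a j = ∑ i, ∑ j, a i * R i j * a j := by
    intro a
    have e : ∑ i, ∑ j, a i * S i j * a j
        = (∑ i, ∑ j, a i * R i j * a j + ∑ i, ∑ j, a j * R j i * a i) / 2 := by
      rw [← Finset.sum_add_distrib, Finset.sum_div]
      apply Finset.sum_congr rfl; intro i _
      rw [← Finset.sum_add_distrib, Finset.sum_div]
      apply Finset.sum_congr rfl; intro j _
      simp only [hS]; ring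
    rw [e, Finset.sum_comm (f := fun i j => a j * R j i * a i)]
    ring
  have hSlaw : ∀ a : Fin n → ℝ, μ.map (fun x => ∑ i, a i * x i) =
        gaussianReal 0 (Real.toNNReal (∑ i, ∑ j, a i * S i j * a j)) := by
    intro a
    rw [hQ, ← hlaw a, hμ, Measure.map_map (by fun_prop) hXmeas]
    rfl
  have h : GV μ S := ⟨hSs, hSd, psd_of_law μ S hSs hSd hSlaw, hSlaw⟩
  have hSρ : ∀ i j, i ≠ j → S i j ≤ ρ := fun i j hij => by
    have h1 := hR i j hij
    have h2 := hR j i hij.symm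
    simp only [hS]; linarith
  have hn2 : (2 : ℝ) ≤ n := by exact_mod_cast hn
  set β := log n with hβdef
  have hβ : 0 < β := log_pos (by linarith)
  have hcomp := comparison h (gv_pi (n := n)) hβ ρ hρ.2 hSρ (fun i j => rfl)
  have hmax := max_lower (n := n) hβ (√(1 - ρ)) (sqrt_nonneg _)
  have hmed : 1 / 2 ≤ μ.real {x | F β x ≤ m + 1} := by
    have hms : MeasurableSet {x : Fin n → ℝ | F β x ≤ m + 1} :=
      measurableSet_le (continuous_F β).measurable measurable_const
    have h1 : (1 : ENNReal) / 2 ≤ μ {x | F β x ≤ m + 1} := by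
      refine hm.1.trans ?_
      rw [hμ, Measure.map_apply hXmeas hms]
      apply measure_mono
      intro ω hω
      simp only [Set.mem_ofPred_eq] at hω
      have h2 := F_le hβ (fun i => X i ω) m fun i => (le_ciSup (Set.finite_range _).bddAbove i).trans hω
      rw [← hβdef, div_self hβ.ne'] at h2
      exact h2
    have := h.isGaussian
    have h3 := ENNReal.toReal_mono (measure_ne_top μ _) h1
    simpa [measureReal_def] using h3
  have hfin := median_ge h hβ (m + 1) hmed
  have hσ1 : √(1 - ρ) ≤ 1 := by
    rw [sqrt_le_left (by norm_num)]; linarith [hρ.1]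
  have hprod : √(2 * (1 - ρ) * log n) = √(1 - ρ) * √(2 * log n) := by
    rw [← sqrt_mul (by linarith [hρ.2])]; congr 1; ring
  have hc : 11 ≤ 11 / √(log (log 3)) * √(log (log (max (n : ℝ) 3))) := by
    have hmono : √(log (log 3)) ≤ √(log (log (max (n : ℝ) 3))) := by
      apply sqrt_le_sqrt
      apply log_le_log (by linarith)
      exact log_le_log (by norm_num) (le_max_right _ _)
    have hpos : 0 < √(log (log 3)) := sqrt_pos.2 hll3
    calc (11 : ℝ) = 11 / √(log (log 3)) * √(log (log 3)) := by field_simp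
      _ ≤ _ := by gcongr
  rw [hprod]
  have := pi_lt_d2
  rw [mul_sub] at hmax
  linarith
end

section
/- Fix constants δ₀, ρ₀ ∈ (0,1) and set α₀ = (1−ρ₀)(1−δ₀)²/ρ₀ and β₀ = (1−ρ₀)(1−δ₀)/ρ₀. Then there exists a constant C > 0 depending only on (δ₀, ρ₀) such that for every n ≥ 2 and every centered Gaussian vector X = (X_1,…,X_n) with var(X_i) = 1 for all i and correlation matrix R satisfying R_{ij} ≤ ρ₀ for all i ≠ j, one has P(max_{1≤i≤n} X_i ≤ δ₀ √(2(1−ρ₀)log n)) ≤ C · n^{−α₀} · (log n)^{(β₀−1)/2}. -/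
open MeasureTheory ProbabilityTheory Real

lemma hasDerivAt_gaussianPDFReal_zero (v : NNReal) (hv : v ≠ 0) (x : ℝ) :
    HasDerivAt (gaussianPDFReal 0 v) (-(x / v) * gaussianPDFReal 0 v x) x := by
  have hv' : (v : ℝ) ≠ 0 := by exact_mod_cast hv
  unfold gaussianPDFReal
  have h1 : HasDerivAt (fun x : ℝ => -(x - 0) ^ 2 / (2 * (v : ℝ))) (-(x / v)) x := by
    have := ((((hasDerivAt_id x).sub_const 0).pow 2).neg).div_const (2 * (v : ℝ))
    convert! this using 1
    simp
    field_simp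
  have := (h1.exp).const_mul ((√(2 * π * v))⁻¹)
  convert! this using 1
  ring

/-- One-dimensional Gaussian integration by parts. -/
lemma gauss_stein (v : NNReal) (k k' : ℝ → ℝ) (B : ℝ) (hk : ∀ x, HasDerivAt k (k' x) x)
    (hB : ∀ x, |k x| ≤ B) (hB' : ∀ x, |k' x| ≤ B) (hk'm : Measurable k') :
    ∫ x, x * k x ∂(gaussianReal 0 v) = v * ∫ x, k' x ∂(gaussianReal 0 v) := by
  by_cases hv : v = 0
  · subst hv; simp
  have hv' : (v : ℝ) ≠ 0 := by exact_mod_cast hv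
  have hkm : Measurable k := (continuous_iff_continuousAt.2 fun x => (hk x).continuousAt).measurable
  have hid : Integrable (fun x : ℝ => x * k x) (gaussianReal 0 v) := by
    have h1 : Integrable (fun x : ℝ => x) (gaussianReal 0 v) :=
      memLp_one_iff_integrable.1 (memLp_id_gaussianReal' 1 (by simp))
    exact h1.mul_bdd (c := B) hkm.aestronglyMeasurable (by simpa using .of_forall hB)
  have hid' : Integrable k' (gaussianReal 0 v) :=
    Integrable.of_bound hk'm.aestronglyMeasurable B (by simpa using .of_forall hB')
  have hid0 : Integrable k (gaussianReal 0 v) :=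
    Integrable.of_bound hkm.aestronglyMeasurable B (by simpa using .of_forall hB)
  have conv : ∀ f : ℝ → ℝ, Integrable f (gaussianReal 0 v) →
      Integrable (fun x => f x * gaussianPDFReal 0 v x) := by
    intro f hf
    rw [gaussianReal_of_var_ne_zero _ hv,
      integrable_withDensity_iff_integrable_smul' (measurable_gaussianPDF 0 v)
        (by simp [gaussianPDF_lt_top])] at hf
    refine hf.congr (.of_forall fun x => ?_)
    simp [toReal_gaussianPDF, mul_comm]
  rw [integral_gaussianReal_eq_integral_smul hv, integral_gaussianReal_eq_integral_smul hv]
  have key := integral_mul_deriv_eq_deriv_mul_of_integrable (u := k) (u' := k')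
    (v := gaussianPDFReal 0 v) (v' := fun x => -(x / v) * gaussianPDFReal 0 v x)
    (fun x _ => hk x) (fun x _ => hasDerivAt_gaussianPDFReal_zero v hv x) ?_ (conv _ hid') (conv _ hid0)
  · have e1 : ∫ x, k x * (-(x / v) * gaussianPDFReal 0 v x) =
        -(v : ℝ)⁻¹ * ∫ x, gaussianPDFReal 0 v x • (x * k x) := by
      rw [← integral_const_mul]; congr 1; ext x; simp; ring
    rw [e1] at key
    have e2 : ∫ x, gaussianPDFReal 0 v x • k' x = ∫ x, k' x * gaussianPDFReal 0 v x := by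
      congr 1; ext x; simp; ring
    rw [e2]
    field_simp at key
    linarith
  · refine ((conv _ hid).const_mul (-(v : ℝ)⁻¹)).congr (.of_forall fun x => ?_)
    simp; ring

/-- Multivariate Gaussian integration by parts. -/
lemma gauss_ibp {Ω : Type*} [MeasurableSpace Ω] {P : Measure Ω} {ι : Type*} [Fintype ι]
    (U : Ω → ℝ) (Z : ι → Ω → ℝ)
    (hG : HasGaussianLaw (fun ω => (U ω, fun i => Z i ω)) P)
    (hU : ∫ ω, U ω ∂P = 0)
    (h : (ι → ℝ) → ℝ) (D : (ι → ℝ) → ι → ℝ) (B : ℝ)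
    (hh : ∀ (c w : ι → ℝ) (x : ℝ),
      HasDerivAt (fun s : ℝ => h (s • c + w)) (∑ j, c j * D (x • c + w) j) x)
    (hB : ∀ z, |h z| ≤ B) (hDB : ∀ z j, |D z j| ≤ B)
    (hm : Measurable h) (hDm : ∀ j, Measurable (fun z => D z j)) :
    ∫ ω, U ω * h (fun i => Z i ω) ∂P =
      ∑ j, cov[U, Z j; P] * ∫ ω, D (fun i => Z i ω) j ∂P := by
  have hP := hG.isProbabilityMeasure
  have hUg : HasGaussianLaw U P := hG.fst
  have hZg : HasGaussianLaw (fun ω i => Z i ω) P := hG.snd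
  have hZj : ∀ j, HasGaussianLaw (Z j) P := fun j => hZg.eval j
  have hU2 : MemLp U 2 P := hUg.memLp_two
  have hZ2 : ∀ j, MemLp (Z j) 2 P := fun j => (hZj j).memLp_two
  have hUm : AEMeasurable U P := hUg.aemeasurable
  have hZm : AEMeasurable (fun ω i => Z i ω) P := hZg.aemeasurable
  set v : ℝ := Var[U; P] with hv
  have hv0 : 0 ≤ v := variance_nonneg U P
  by_cases hvz : v = 0
  · have _ := trivial
    have hU0 : U =ᵐ[P] 0 := by
      have := ae_eq_integral_of_variance_eq_zero hU2 hvz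
      rw [hU] at this
      exact this
    have h1 : ∫ ω, U ω * h (fun i => Z i ω) ∂P = 0 := by
      rw [integral_eq_zero_of_ae]
      filter_upwards [hU0] with ω hω
      simp [hω]
    have h2 : ∀ j, cov[U, Z j; P] = 0 := by
      intro j
      rw [covariance, integral_eq_zero_of_ae]
      filter_upwards [hU0] with ω hω
      simp [hω, hU]
    simp [h1, h2]
  set c : ι → ℝ := fun j => cov[U, Z j; P] / v with hc
  set W : ι → Ω → ℝ := fun j ω => Z j ω - c j * U ω with hW
  have hUW : HasGaussianLaw (fun ω => (U ω, fun j => W j ω)) P := by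
    let L : (ℝ × (ι → ℝ)) →L[ℝ] (ℝ × (ι → ℝ)) :=
      (ContinuousLinearMap.fst ℝ ℝ (ι → ℝ)).prod
        (ContinuousLinearMap.snd ℝ ℝ (ι → ℝ) -
          (ContinuousLinearMap.fst ℝ ℝ (ι → ℝ)).smulRight c)
    have := hG.map_fun L
    convert! this using 2 with ω
    simp [L, hW]
    ext j
    simp [mul_comm]
  have hWg : HasGaussianLaw (fun ω j => W j ω) P := hUW.snd
  have hWm : AEMeasurable (fun ω j => W j ω) P := hWg.aemeasurable
  have hind : IndepFun U (fun ω j => W j ω) P := by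
    have hUW' : HasGaussianLaw (fun ω => ((fun _ : Unit => U ω), fun j => W j ω)) P := by
      let L : (ℝ × (ι → ℝ)) →L[ℝ] ((Unit → ℝ) × (ι → ℝ)) :=
        (ContinuousLinearMap.pi fun _ => ContinuousLinearMap.fst ℝ ℝ (ι → ℝ)).prod
          (ContinuousLinearMap.snd ℝ ℝ (ι → ℝ))
      exact hUW.map_fun L
    have := HasGaussianLaw.indepFun_of_covariance_eval (X := fun _ : Unit => U) (Y := W) hUW' ?_
    · exact this.comp (φ := fun f : Unit → ℝ => f ()) (ψ := id) (by fun_prop) measurable_id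
    · intro _ j
      have : W j = Z j - fun ω => c j * U ω := rfl
      rw [this, covariance_sub_right hU2 (hZ2 j) (hU2.const_mul (c j)),
        covariance_const_mul_right, covariance_self hUm, ← hv, hc]
      field_simp
      simp
  have hlaw : P.map (fun ω => (U ω, fun j => W j ω)) =
      (gaussianReal 0 v.toNNReal).prod (P.map (fun ω j => W j ω)) := by
    rw [(indepFun_iff_map_prod_eq_prod_map_map hUm hWm).1 hind, hUg.map_eq_gaussianReal, hU]
  have hWP : IsProbabilityMeasure (P.map (fun ω j => W j ω)) := Measure.isProbabilityMeasure_map hWm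
  have hZW : ∀ ω, (fun i => Z i ω) = U ω • c + fun j => W j ω := by
    intro ω; ext j; simp [hW]; ring
  have hmeas : Measurable (fun p : ℝ × (ι → ℝ) => p.1 • c + p.2) := by fun_prop
  have eq1 : ∫ ω, U ω * h (fun i => Z i ω) ∂P =
      ∫ w, ∫ x, x * h (x • c + w) ∂(gaussianReal 0 v.toNNReal) ∂(P.map (fun ω j => W j ω)) := by
    rw [← integral_prod_symm (f := fun p : ℝ × (ι → ℝ) => p.1 * h (p.1 • c + p.2)), ← hlaw,
      integral_map (hUm.prodMk hWm)]
    · simp_rw [hZW]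
    · exact (measurable_fst.mul (hm.comp hmeas)).aestronglyMeasurable
    · have h1 : Integrable (fun x : ℝ => x) (gaussianReal 0 v.toNNReal) :=
        memLp_one_iff_integrable.1 (memLp_id_gaussianReal' 1 (by simp))
      refine (h1.comp_fst (P.map (fun ω j => W j ω))).mul_bdd (c := B)
        (hm.comp hmeas).aestronglyMeasurable ?_
      exact .of_forall fun p => by simpa using hB _
  have hDi : ∀ j, ∫ ω, D (fun i => Z i ω) j ∂P = 
      ∫ w, ∫ x, D (x • c + w) j ∂(gaussianReal 0 v.toNNReal) ∂(P.map (fun ω j => W j ω)) := by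
    intro j
    rw [← integral_prod_symm (f := fun p : ℝ × (ι → ℝ) => D (p.1 • c + p.2) j), ← hlaw,
      integral_map (hUm.prodMk hWm)]
    · simp_rw [hZW]
    · exact ((hDm j).comp hmeas).aestronglyMeasurable
    · refine Integrable.of_bound ((hDm j).comp hmeas).aestronglyMeasurable B ?_
      exact .of_forall fun p => by simpa using hDB _ _
  have hDint : ∀ j w, Integrable (fun x : ℝ => D (x • c + w) j) (gaussianReal 0 v.toNNReal) := by
    intro j w
    refine Integrable.of_bound ((hDm j).comp (by fun_prop)).aestronglyMeasurable B ?_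
    exact .of_forall fun p => by simpa using hDB _ _
  have hB0 : 0 ≤ B := (abs_nonneg _).trans (hB 0)
  have stein : ∀ w, ∫ x, x * h (x • c + w) ∂(gaussianReal 0 v.toNNReal) =
      ∑ j, (v * c j) * ∫ x, D (x • c + w) j ∂(gaussianReal 0 v.toNNReal) := by
    intro w
    rw [gauss_stein v.toNNReal (fun x => h (x • c + w)) (fun x => ∑ j, c j * D (x • c + w) j)
      (B + ∑ j, |c j| * B) (fun x => hh c w x), Real.coe_toNNReal v hv0, integral_finsetSum,
      Finset.mul_sum]
    · refine Finset.sum_congr rfl fun j _ => ?_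
      rw [integral_const_mul]; ring
    · intro j _
      exact (hDint j w).const_mul _
    · intro x
      have : 0 ≤ ∑ j, |c j| * B := Finset.sum_nonneg fun j _ => by positivity
      linarith [hB (x • c + w)]
    · intro x
      have : |∑ j, c j * D (x • c + w) j| ≤ ∑ j, |c j| * B := by
        refine (Finset.abs_sum_le_sum_abs _ _).trans (Finset.sum_le_sum fun j _ => ?_)
        rw [abs_mul]
        exact mul_le_mul_of_nonneg_left (hDB _ _) (abs_nonneg _)
      linarith
    · refine Finset.measurable_sum _ fun j _ => ?_
      exact ((hDm j).comp (by fun_prop)).const_mul _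
  rw [eq1]
  simp_rw [stein, hDi]
  rw [integral_finsetSum]
  · refine Finset.sum_congr rfl fun j _ => ?_
    rw [integral_const_mul]
    congr 1
    simp [hc]; field_simp
  · intro j _
    refine Integrable.const_mul ?_ _
    have : Integrable (fun p : ℝ × (ι → ℝ) => D (p.1 • c + p.2) j)
        ((gaussianReal 0 v.toNNReal).prod (P.map (fun ω j => W j ω))) := by
      refine Integrable.of_bound ((hDm j).comp hmeas).aestronglyMeasurable B ?_
      exact .of_forall fun p => by simpa using hDB _ _
    exact this.integral_prod_right

lemma abs_prod_le_pow_card {ι : Type*} [Fintype ι] (s : Finset ι) (f : ι → ℝ) (B : ℝ)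
    (hB1 : 1 ≤ B) (hf : ∀ k, |f k| ≤ B) : |∏ k ∈ s, f k| ≤ B ^ Fintype.card ι := by
  rw [Finset.abs_prod]
  calc ∏ k ∈ s, |f k| ≤ ∏ k ∈ s, B := Finset.prod_le_prod (fun _ _ => abs_nonneg _) fun k _ => hf k
    _ = B ^ s.card := by simp
    _ ≤ B ^ Fintype.card ι := pow_le_pow_right₀ hB1 (Finset.card_le_univ s)

lemma gauss_ibp_prod {Ω : Type*} [MeasurableSpace Ω] {P : Measure Ω} {ι : Type*} [Fintype ι]
    [DecidableEq ι] (U : Ω → ℝ) (Z : ι → Ω → ℝ)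
    (hG : HasGaussianLaw (fun ω => (U ω, fun i => Z i ω)) P)
    (hU : ∫ ω, U ω ∂P = 0)
    (q q' : ι → ℝ → ℝ) (B : ℝ) (hB1 : 1 ≤ B)
    (hq : ∀ k x, HasDerivAt (q k) (q' k x) x)
    (hB : ∀ k x, |q k x| ≤ B) (hB' : ∀ k x, |q' k x| ≤ B)
    (hm' : ∀ k, Measurable (q' k)) :
    ∫ ω, U ω * ∏ k, q k (Z k ω) ∂P =
      ∑ j, cov[U, Z j; P] *
        ∫ ω, q' j (Z j ω) * ∏ k ∈ Finset.univ.erase j, q k (Z k ω) ∂P := by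
  have hm : ∀ k, Measurable (q k) := fun k =>
    (continuous_iff_continuousAt.2 fun x => (hq k x).continuousAt).measurable
  refine gauss_ibp U Z hG hU (fun z => ∏ k, q k (z k))
    (fun z j => q' j (z j) * ∏ k ∈ Finset.univ.erase j, q k (z k)) (B * B ^ Fintype.card ι)
    ?_ ?_ ?_ ?_ ?_
  · intro c w x
    have h1 : ∀ k ∈ (Finset.univ : Finset ι), HasDerivAt (fun s : ℝ => q k ((s • c + w) k))
        (q' k ((x • c + w) k) * c k) x := by
      intro k _
      have h2 : HasDerivAt (fun s : ℝ => (s • c + w) k) (c k) x := by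
        simpa using ((hasDerivAt_id x).mul_const (c k)).add_const (w k)
      exact (hq k _).comp x h2
    have := HasDerivAt.fun_finsetProd h1
    convert! this using 1
    refine Finset.sum_congr rfl fun j _ => ?_
    simp only [smul_eq_mul]; ring
  · intro z
    refine (abs_prod_le_pow_card Finset.univ _ B hB1 fun k => hB k (z k)).trans ?_
    have : 0 ≤ B ^ Fintype.card ι := by positivity
    nlinarith
  · intro z j
    rw [abs_mul]
    exact mul_le_mul (hB' _ _) (abs_prod_le_pow_card _ _ B hB1 fun k => hB k (z k))
      (abs_nonneg _) (by positivity)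
  · exact Finset.measurable_prod _ fun k _ => (hm k).comp (measurable_pi_apply k)
  · intro j
    exact ((hm' j).comp (measurable_pi_apply j)).mul
      (Finset.measurable_prod _ fun k _ => (hm k).comp (measurable_pi_apply k))

/-- Smooth version of the Slepian inequality for products of decreasing functions. -/
lemma slepian_smooth {Ω : Type*} [MeasurableSpace Ω] {P : Measure Ω} {ι : Type*} [Fintype ι]
    [DecidableEq ι] (X Y : ι → Ω → ℝ)
    (hG : HasGaussianLaw (fun ω => ((fun i => X i ω), fun i => Y i ω)) P)
    (hX0 : ∀ i, ∫ ω, X i ω ∂P = 0) (hY0 : ∀ i, ∫ ω, Y i ω ∂P = 0)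
    (hXY : ∀ i j, cov[X i, Y j; P] = 0)
    (hdiag : ∀ i, cov[X i, X i; P] = cov[Y i, Y i; P])
    (hle : ∀ i j, i ≠ j → cov[X i, X j; P] ≤ cov[Y i, Y j; P])
    (g g' g'' : ℝ → ℝ) (B : ℝ) (hB1 : 1 ≤ B)
    (hg : ∀ x, HasDerivAt g (g' x) x) (hg' : ∀ x, HasDerivAt g' (g'' x) x)
    (hg''m : Measurable g'') (hg0 : ∀ x, 0 ≤ g x) (hg1 : ∀ x, g x ≤ 1)
    (hg'0 : ∀ x, g' x ≤ 0) (hg'B : ∀ x, |g' x| ≤ B) (hg''B : ∀ x, |g'' x| ≤ B) :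
    ∫ ω, ∏ i, g (X i ω) ∂P ≤ ∫ ω, ∏ i, g (Y i ω) ∂P := by
  have hP := hG.isProbabilityMeasure
  have hXg : ∀ i, HasGaussianLaw (X i) P := fun i => hG.fst.eval i
  have hYg : ∀ i, HasGaussianLaw (Y i) P := fun i => hG.snd.eval i
  have hX2 : ∀ i, MemLp (X i) 2 P := fun i => (hXg i).memLp_two
  have hY2 : ∀ i, MemLp (Y i) 2 P := fun i => (hYg i).memLp_two
  have hXi : ∀ i, Integrable (X i) P := fun i => (hXg i).integrable
  have hYi : ∀ i, Integrable (Y i) P := fun i => (hYg i).integrable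
  have hXm : ∀ i, AEMeasurable (X i) P := fun i => (hXg i).aemeasurable
  have hYm : ∀ i, AEMeasurable (Y i) P := fun i => (hYg i).aemeasurable
  have hgm : Measurable g := (continuous_iff_continuousAt.2 fun x => (hg x).continuousAt).measurable
  have hg'm : Measurable g' :=
    (continuous_iff_continuousAt.2 fun x => (hg' x).continuousAt).measurable
  have hgB : ∀ x, |g x| ≤ B := fun x => by rw [abs_of_nonneg (hg0 x)]; linarith [hg1 x]
  set Z : ℝ → ι → Ω → ℝ := fun θ i ω => cos θ * X i ω + sin θ * Y i ω with hZ
  set U : ℝ → ι → Ω → ℝ := fun θ i ω => -sin θ * X i ω + cos θ * Y i ω with hU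
  have hZm : ∀ θ i, AEMeasurable (Z θ i) P := fun θ i =>
    ((hXm i).const_mul _).add ((hYm i).const_mul _)
  have hUm : ∀ θ i, AEMeasurable (U θ i) P := fun θ i =>
    ((hXm i).const_mul _).add ((hYm i).const_mul _)
  have hUi : ∀ θ i, Integrable (U θ i) P := fun θ i =>
    ((hXi i).const_mul _).add ((hYi i).const_mul _)
  set F' : ℝ → Ω → ℝ := fun θ ω =>
    ∑ i, (∏ k ∈ Finset.univ.erase i, g (Z θ k ω)) * (g' (Z θ i ω) * U θ i ω) with hF'
  have hprodm : ∀ θ (s : Finset ι), AEMeasurable (fun ω => ∏ k ∈ s, g (Z θ k ω)) P := fun θ s =>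
    Finset.aemeasurable_fun_prod _ fun k _ => hgm.comp_aemeasurable (hZm θ k)
  have hprodB : ∀ θ (s : Finset ι) ω, |∏ k ∈ s, g (Z θ k ω)| ≤ 1 := by
    intro θ s ω
    rw [Finset.abs_prod]
    refine Finset.prod_le_one (fun _ _ => abs_nonneg _) fun k _ => ?_
    rw [abs_of_nonneg (hg0 _)]; exact hg1 _
  have hterm : ∀ θ i ω, |(∏ k ∈ Finset.univ.erase i, g (Z θ k ω)) * (g' (Z θ i ω) * U θ i ω)|
      ≤ B * (|X i ω| + |Y i ω|) := by
    intro θ i ω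
    rw [abs_mul, abs_mul]
    have h1 : |U θ i ω| ≤ |X i ω| + |Y i ω| := by
      simp only [hU]
      refine (abs_add_le _ _).trans (add_le_add ?_ ?_)
      · rw [abs_mul, abs_neg]
        exact mul_le_of_le_one_left (abs_nonneg _) (abs_sin_le_one θ)
      · rw [abs_mul]
        exact mul_le_of_le_one_left (abs_nonneg _) (abs_cos_le_one θ)
    calc _ ≤ 1 * (B * (|X i ω| + |Y i ω|)) := by
          refine mul_le_mul (hprodB θ _ ω) ?_ (by positivity) zero_le_one
          exact mul_le_mul (hg'B _) h1 (abs_nonneg _) (by linarith)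
      _ = _ := one_mul _
  have htermm : ∀ θ i, AEStronglyMeasurable
      (fun ω => (∏ k ∈ Finset.univ.erase i, g (Z θ k ω)) * (g' (Z θ i ω) * U θ i ω)) P :=
    fun θ i => ((hprodm θ _).mul
      ((hg'm.comp_aemeasurable (hZm θ i)).mul (hUm θ i))).aestronglyMeasurable
  have htermi : ∀ θ i, Integrable
      (fun ω => (∏ k ∈ Finset.univ.erase i, g (Z θ k ω)) * (g' (Z θ i ω) * U θ i ω)) P := by
    intro θ i
    refine Integrable.mono' (((hXi i).abs.add (hYi i).abs).const_mul B) (htermm θ i) ?_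
    exact .of_forall fun ω => by rw [Real.norm_eq_abs]; exact hterm θ i ω
  have hder : ∀ θ, HasDerivAt (fun θ => ∫ ω, ∏ i, g (Z θ i ω) ∂P) (∫ ω, F' θ ω ∂P) θ := by
    intro θ
    refine (hasDerivAt_integral_of_dominated_loc_of_deriv_le (s := Set.univ)
      (bound := fun ω => ∑ i, B * (|X i ω| + |Y i ω|)) Filter.univ_mem ?_ ?_ ?_ ?_ ?_ ?_).2
    · exact .of_forall fun θ => (hprodm θ _).aestronglyMeasurable
    · exact Integrable.of_bound (hprodm θ _).aestronglyMeasurable 1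
        (.of_forall fun ω => by rw [Real.norm_eq_abs]; exact hprodB θ Finset.univ ω)
    · exact Finset.aestronglyMeasurable_fun_sum _ fun i _ => htermm θ i
    · refine .of_forall fun ω θ _ => ?_
      rw [Real.norm_eq_abs]
      exact (Finset.abs_sum_le_sum_abs _ _).trans (Finset.sum_le_sum fun i _ => hterm θ i ω)
    · exact integrable_finsetSum _ fun i _ => ((hXi i).abs.add (hYi i).abs).const_mul B
    · refine .of_forall fun ω θ _ => ?_
      have h1 : ∀ k ∈ (Finset.univ : Finset ι), HasDerivAt (fun θ : ℝ => g (Z θ k ω))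
          (g' (Z θ k ω) * U θ k ω) θ := by
        intro k _
        have h2 : HasDerivAt (fun θ : ℝ => Z θ k ω) (U θ k ω) θ :=
          ((hasDerivAt_cos θ).mul_const _).add ((hasDerivAt_sin θ).mul_const _)
        exact (hg _).comp θ h2
      exact HasDerivAt.fun_finsetProd h1
  have hnonneg : ∀ θ ∈ Set.Icc 0 (π / 2), 0 ≤ ∫ ω, F' θ ω ∂P := by
    intro θ hθ
    have hs : 0 ≤ sin θ := sin_nonneg_of_nonneg_of_le_pi hθ.1 (by linarith [hθ.2, pi_pos])
    have hc : 0 ≤ cos θ := cos_nonneg_of_neg_pi_div_two_le_of_le (by linarith [hθ.1, pi_pos]) hθ.2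
    simp only [hF']
    rw [integral_finsetSum _ fun i _ => htermi θ i]
    refine Finset.sum_nonneg fun i _ => ?_
    have hGi : HasGaussianLaw (fun ω => (U θ i ω, fun k => Z θ k ω)) P := by
      let L : ((ι → ℝ) × (ι → ℝ)) →L[ℝ] (ℝ × (ι → ℝ)) :=
        ((-sin θ) • ((ContinuousLinearMap.proj i).comp (ContinuousLinearMap.fst ℝ (ι → ℝ) (ι → ℝ)))
          + (cos θ) • ((ContinuousLinearMap.proj i).comp
              (ContinuousLinearMap.snd ℝ (ι → ℝ) (ι → ℝ)))).prod
        ((cos θ) • (ContinuousLinearMap.fst ℝ (ι → ℝ) (ι → ℝ))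
          + (sin θ) • (ContinuousLinearMap.snd ℝ (ι → ℝ) (ι → ℝ)))
      exact hG.map_fun L
    have hU0 : ∫ ω, U θ i ω ∂P = 0 := by
      simp only [hU]
      rw [integral_add ((hXi i).const_mul _) ((hYi i).const_mul _), integral_const_mul,
        integral_const_mul, hX0, hY0]
      simp
    have hcov : ∀ j, cov[U θ i, Z θ j; P] =
        sin θ * cos θ * (cov[Y i, Y j; P] - cov[X i, X j; P]) := by
      intro j
      have e1 : U θ i = (fun ω => -sin θ * X i ω) + (fun ω => cos θ * Y i ω) := rfl
      have e2 : Z θ j = (fun ω => cos θ * X j ω) + (fun ω => sin θ * Y j ω) := rfl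
      have m1 := (hX2 i).const_mul (-sin θ)
      have m2 := (hY2 i).const_mul (cos θ)
      have m3 := (hX2 j).const_mul (cos θ)
      have m4 := (hY2 j).const_mul (sin θ)
      rw [e1, e2, covariance_add_left m1 m2 (m3.add m4), covariance_add_right m1 m3 m4,
        covariance_add_right m2 m3 m4]
      simp only [covariance_const_mul_left, covariance_const_mul_right, hXY,
        covariance_comm (Y i) (X j)]
      ring
    have hibp := gauss_ibp_prod (U θ i) (Z θ) hGi hU0
      (Function.update (fun _ => g) i g') (Function.update (fun _ => g') i g'') B hB1 ?_ ?_ ?_ ?_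
    · have e : ∀ ω, (∏ k ∈ Finset.univ.erase i, g (Z θ k ω)) * (g' (Z θ i ω) * U θ i ω) =
          U θ i ω * ∏ k, Function.update (fun _ => g) i g' k (Z θ k ω) := by
        intro ω
        rw [← Finset.mul_prod_erase Finset.univ _ (Finset.mem_univ i)]
        have : ∏ k ∈ Finset.univ.erase i, Function.update (fun _ => g) i g' k (Z θ k ω) =
            ∏ k ∈ Finset.univ.erase i, g (Z θ k ω) := by
          refine Finset.prod_congr rfl fun k hk => ?_
          rw [Function.update_of_ne (Finset.ne_of_mem_erase hk)]
        rw [this, Function.update_self]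
        ring
      simp_rw [e]
      rw [hibp]
      refine Finset.sum_nonneg fun j _ => ?_
      rw [hcov]
      by_cases hij : j = i
      · subst hij
        simp [hdiag]
      · refine mul_nonneg (mul_nonneg (mul_nonneg hs hc)
          (sub_nonneg.2 (hle i j (Ne.symm hij)))) (integral_nonneg fun ω => ?_)
        rw [Function.update_of_ne hij]
        rw [← Finset.mul_prod_erase (Finset.univ.erase j) _
          (Finset.mem_erase.2 ⟨Ne.symm hij, Finset.mem_univ i⟩), Function.update_self, ← mul_assoc]
        refine mul_nonneg (mul_nonneg_of_nonpos_of_nonpos (hg'0 _) (hg'0 _))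
          (Finset.prod_nonneg fun k hk => ?_)
        rw [Function.update_of_ne (Finset.ne_of_mem_erase hk)]
        exact hg0 _
    · intro k x
      by_cases hk : k = i
      · subst hk; simpa using hg' x
      · simpa [hk] using hg x
    · intro k x
      by_cases hk : k = i
      · subst hk; simpa using hg'B x
      · simpa [hk] using hgB x
    · intro k x
      by_cases hk : k = i
      · subst hk; simpa using hg''B x
      · simpa [hk] using hg'B x
    · intro k
      by_cases hk : k = i
      · subst hk; simpa using hg''m
      · simpa [hk] using hg'm
  have hmono : MonotoneOn (fun θ => ∫ ω, ∏ i, g (Z θ i ω) ∂P) (Set.Icc 0 (π / 2)) := by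
    refine monotoneOn_of_deriv_nonneg (convex_Icc _ _)
      (fun θ _ => (hder θ).continuousAt.continuousWithinAt)
      (fun θ _ => (hder θ).differentiableAt.differentiableWithinAt) fun θ hθ => ?_
    rw [(hder θ).deriv]
    exact hnonneg θ (interior_subset hθ)
  have := hmono (Set.left_mem_Icc.2 (by positivity)) (Set.right_mem_Icc.2 (by positivity))
    (show (0 : ℝ) ≤ π / 2 by positivity)
  simpa [hZ] using this

lemma tendsto_sigmoid_prod {Ω : Type*} [MeasurableSpace Ω] {P : Measure Ω}
    [IsProbabilityMeasure P] {ι : Type*} [Fintype ι] (X : ι → Ω → ℝ)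
    (hXm : ∀ i, Measurable (X i)) (t : ℝ) (hXt : ∀ i, P {ω | X i ω = t} = 0) :
    Filter.Tendsto (fun k : ℕ => ∫ ω, ∏ i, sigmoid (k * (t - X i ω)) ∂P) Filter.atTop
      (nhds (P.real {ω | ∀ i, X i ω ≤ t})) := by
  have hms : MeasurableSet {ω | ∀ i, X i ω ≤ t} := by
    rw [Set.ofPred_forall]
    exact MeasurableSet.iInter fun i => measurableSet_le (hXm i) measurable_const
  rw [← integral_indicator_one hms]
  refine tendsto_integral_of_dominated_convergence (fun _ => 1) ?_ (integrable_const _) ?_ ?_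
  · intro k
    refine Measurable.aestronglyMeasurable (Finset.measurable_fun_prod _ fun i _ => ?_)
    exact continuous_sigmoid.measurable.comp ((measurable_const.sub (hXm i)).const_mul _)
  · refine fun k => .of_forall fun ω => ?_
    rw [Real.norm_eq_abs, Finset.abs_prod]
    refine Finset.prod_le_one (fun _ _ => abs_nonneg _) fun i _ => ?_
    rw [abs_of_nonneg (sigmoid_nonneg _)]; exact sigmoid_le_one _
  · have h1 : ∀ᵐ ω ∂P, ∀ i, X i ω ≠ t := by
      rw [ae_all_iff]
      intro i
      rw [ae_iff]
      simpa using hXt i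
    filter_upwards [h1] with ω hω
    have h2 : ∀ i, Filter.Tendsto (fun k : ℕ => sigmoid (k * (t - X i ω))) Filter.atTop
        (nhds (if X i ω ≤ t then 1 else 0)) := by
      intro i
      rcases lt_or_gt_of_ne (hω i) with h | h
      · rw [if_pos h.le]
        exact tendsto_sigmoid_atTop.comp
          (tendsto_natCast_atTop_atTop.atTop_mul_const (sub_pos.2 h))
      · rw [if_neg (not_le.2 h)]
        exact tendsto_sigmoid_atBot.comp
          (tendsto_natCast_atTop_atTop.atTop_mul_const_of_neg (sub_neg.2 h))
    have h3 := tendsto_finsetProd Finset.univ fun i _ => h2 i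
    convert! h3 using 2
    by_cases hall : ∀ i, X i ω ≤ t
    · simp [hall]
    · have : ω ∉ {ω | ∀ i, X i ω ≤ t} := hall
      rw [Set.indicator_of_notMem this]
      push Not at hall
      obtain ⟨i, hi⟩ := hall
      exact (Finset.prod_eq_zero (Finset.mem_univ i) (if_neg (not_le.2 hi))).symm

/-- The Slepian inequality. -/
lemma slepian {Ω : Type*} [MeasurableSpace Ω] {P : Measure Ω} {ι : Type*} [Fintype ι]
    (X Y : ι → Ω → ℝ) (hXm : ∀ i, Measurable (X i)) (hYm : ∀ i, Measurable (Y i))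
    (hG : HasGaussianLaw (fun ω => ((fun i => X i ω), fun i => Y i ω)) P)
    (hX0 : ∀ i, ∫ ω, X i ω ∂P = 0) (hY0 : ∀ i, ∫ ω, Y i ω ∂P = 0)
    (hXY : ∀ i j, cov[X i, Y j; P] = 0)
    (hdiag : ∀ i, cov[X i, X i; P] = cov[Y i, Y i; P])
    (hle : ∀ i j, i ≠ j → cov[X i, X j; P] ≤ cov[Y i, Y j; P])
    (t : ℝ) (hXt : ∀ i, P {ω | X i ω = t} = 0) (hYt : ∀ i, P {ω | Y i ω = t} = 0) :
    P {ω | ∀ i, X i ω ≤ t} ≤ P {ω | ∀ i, Y i ω ≤ t} := by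
  classical
  have hP := hG.isProbabilityMeasure
  have h := le_of_tendsto_of_tendsto' (tendsto_sigmoid_prod X hXm t hXt)
    (tendsto_sigmoid_prod Y hYm t hYt) fun k => ?_
  · exact (ENNReal.toReal_le_toReal (measure_ne_top _ _) (measure_ne_top _ _)).1 h
  have hb0 : ∀ y, 0 ≤ sigmoid y * (1 - sigmoid y) := fun y =>
    mul_nonneg (sigmoid_nonneg _) (sub_nonneg.2 (sigmoid_le_one _))
  have hb1 : ∀ y, sigmoid y * (1 - sigmoid y) ≤ 1 := fun y =>
    mul_le_one₀ (sigmoid_le_one _) (sub_nonneg.2 (sigmoid_le_one _))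
      (by linarith [sigmoid_nonneg y])
  have hin : ∀ x : ℝ, HasDerivAt (fun x : ℝ => (k : ℝ) * (t - x)) (-(k : ℝ)) x := by
    intro x
    simpa using ((hasDerivAt_id x).const_sub t).const_mul (k : ℝ)
  have hs : ∀ x : ℝ, HasDerivAt (fun x : ℝ => sigmoid ((k : ℝ) * (t - x)))
      (sigmoid ((k : ℝ) * (t - x)) * (1 - sigmoid ((k : ℝ) * (t - x))) * -(k : ℝ)) x := fun x =>
    (hasDerivAt_sigmoid _).comp x (hin x)
  refine slepian_smooth X Y hG hX0 hY0 hXY hdiag hle (fun x => sigmoid (k * (t - x)))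
    (fun x => sigmoid ((k : ℝ) * (t - x)) * (1 - sigmoid ((k : ℝ) * (t - x))) * -(k : ℝ))
    (fun x => sigmoid ((k : ℝ) * (t - x)) * (1 - sigmoid ((k : ℝ) * (t - x))) *
      (1 - 2 * sigmoid ((k : ℝ) * (t - x))) * (k : ℝ) ^ 2)
    (1 + k + k ^ 2) ?_ hs ?_ ?_ ?_ ?_ ?_ ?_ ?_
  · have : (0 : ℝ) ≤ k := by positivity
    nlinarith
  · intro x
    have := ((hs x).mul ((hs x).const_sub 1)).mul_const (-(k : ℝ))
    convert! this using 1
    ring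
  · have hm : Measurable fun x : ℝ => sigmoid ((k : ℝ) * (t - x)) :=
      continuous_sigmoid.measurable.comp (by fun_prop)
    fun_prop
  · exact fun x => sigmoid_nonneg _
  · exact fun x => sigmoid_le_one _
  · intro x
    have := hb0 ((k : ℝ) * (t - x))
    have hk : (0 : ℝ) ≤ k := by positivity
    nlinarith
  · intro x
    have hk : (0 : ℝ) ≤ k := by positivity
    rw [abs_mul, abs_neg, abs_of_nonneg (hb0 _), abs_of_nonneg hk]
    nlinarith [hb1 ((k : ℝ) * (t - x)), hb0 ((k : ℝ) * (t - x))]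
  · intro x
    have hk : (0 : ℝ) ≤ k := by positivity
    have h2 : |1 - 2 * sigmoid ((k : ℝ) * (t - x))| ≤ 1 := by
      rw [abs_le]
      constructor <;> linarith [sigmoid_nonneg ((k : ℝ) * (t - x)), sigmoid_le_one ((k : ℝ) * (t - x))]
    rw [abs_mul, abs_mul, abs_of_nonneg (hb0 _), abs_of_nonneg (sq_nonneg (k : ℝ))]
    have h3 : sigmoid ((k : ℝ) * (t - x)) * (1 - sigmoid ((k : ℝ) * (t - x))) *
        |1 - 2 * sigmoid ((k : ℝ) * (t - x))| ≤ 1 :=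
      mul_le_one₀ (hb1 _) (abs_nonneg _) h2
    nlinarith [sq_nonneg (k : ℝ)]

lemma gauss_tail_lower (a u : ℝ) (ha : 1 ≤ a) (hu : u ≤ a) :
    (√(2 * π))⁻¹ * exp (-3 / 2) / a * exp (-u ^ 2 / 2) ≤ (gaussianReal 0 1).real (Set.Ioi u) := by
  have ha0 : 0 < a := by linarith
  have hsub : (gaussianReal 0 1).real (Set.Ioc u (u + 1 / a)) ≤
      (gaussianReal 0 1).real (Set.Ioi u) :=
    measureReal_mono Set.Ioc_subset_Ioi_self
  refine le_trans ?_ hsub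
  rw [measureReal_def, gaussianReal_apply_eq_integral 0 one_ne_zero, ENNReal.toReal_ofReal
    (setIntegral_nonneg measurableSet_Ioc fun x _ => gaussianPDFReal_nonneg _ _ _)]
  have h1 := setIntegral_ge_of_const_le_real (μ := volume) (s := Set.Ioc u (u + 1 / a))
    (f := gaussianPDFReal 0 1) (c := (√(2 * π))⁻¹ * exp (-3 / 2) * exp (-u ^ 2 / 2))
    measurableSet_Ioc (by simp) ?_ (integrable_gaussianPDFReal 0 1).integrableOn
  · refine le_trans (le_of_eq ?_) h1
    rw [measureReal_def, Real.volume_Ioc, ENNReal.toReal_ofReal (by simp; positivity)]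
    field_simp
    ring
  · intro x hx
    simp only [gaussianPDFReal, NNReal.coe_one, mul_one]
    rw [mul_assoc, ← exp_add]
    refine mul_le_mul_of_nonneg_left (exp_le_exp.2 ?_) (by positivity)
    obtain ⟨h, rfl⟩ : ∃ h, x = u + h := ⟨x - u, by ring⟩
    have hh0 : 0 < h := by linarith [hx.1]
    have hh1 : h * a ≤ 1 := by
      have : h ≤ 1 / a := by linarith [hx.2]
      rwa [le_div_iff₀ ha0] at this
    have hh2 : h ≤ 1 := by nlinarith
    nlinarith [mul_le_mul_of_nonneg_left hu hh0.le]

lemma exp_neg_le_rpow (m x : ℝ) (hm : 0 < m) (hx : 0 < x) : exp (-x) ≤ m ^ m * x ^ (-m) := by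
  have h1 : x / m ≤ exp (x / m) := by linarith [add_one_le_exp (x / m)]
  have h2 : (x / m) ^ m ≤ exp x := by
    calc (x / m) ^ m ≤ exp (x / m) ^ m := rpow_le_rpow (by positivity) h1 hm.le
      _ = exp x := by rw [← exp_mul]; congr 1; field_simp
  have h3 : (x / m) ^ m = (m ^ m * x ^ (-m))⁻¹ := by
    rw [div_rpow hx.le hm.le, rpow_neg hx.le]
    have : 0 < x ^ m := by positivity
    have : 0 < m ^ m := by positivity
    field_simp
  rw [exp_neg]
  rw [h3] at h2
  have := inv_anti₀ (by positivity) h2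
  simpa using this

lemma gauss_cdf_pow_le (m a u : ℝ) (n : ℕ) (hm : 0 < m) (ha : 1 ≤ a) (hu : u ≤ a)
    (hn : (n : ℝ) = exp (a ^ 2 / 2)) :
    (gaussianReal 0 1).real (Set.Iic u) ^ n ≤
      m ^ m * ((√(2 * π))⁻¹ * exp (-3 / 2)) ^ (-m) * a ^ m * exp (m * (u ^ 2 - a ^ 2) / 2) := by
  have ha0 : 0 < a := by linarith
  set c : ℝ := (√(2 * π))⁻¹ * exp (-3 / 2) with hc
  have hc0 : 0 < c := by positivity
  have h1 : (gaussianReal 0 1).real (Set.Iic u) = 1 - (gaussianReal 0 1).real (Set.Ioi u) := by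
    rw [← Set.compl_Iic, probReal_compl_eq_one_sub measurableSet_Iic]; ring
  have h2 := gauss_tail_lower a u ha hu
  rw [← hc] at h2
  have h3 : (gaussianReal 0 1).real (Set.Iic u) ≤ exp (-(c / a * exp (-u ^ 2 / 2))) := by
    rw [h1]
    have := add_one_le_exp (-(c / a * exp (-u ^ 2 / 2)))
    linarith
  calc (gaussianReal 0 1).real (Set.Iic u) ^ n ≤ exp (-(c / a * exp (-u ^ 2 / 2))) ^ n :=
        pow_le_pow_left₀ measureReal_nonneg h3 n
    _ = exp (-(c / a * exp ((a ^ 2 - u ^ 2) / 2))) := by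
        rw [← exp_nat_mul, hn]
        congr 1
        rw [show (a ^ 2 - u ^ 2) / 2 = a ^ 2 / 2 + -u ^ 2 / 2 by ring, exp_add]; ring
    _ ≤ m ^ m * (c / a * exp ((a ^ 2 - u ^ 2) / 2)) ^ (-m) :=
        exp_neg_le_rpow m _ hm (by positivity)
    _ = _ := by
        rw [mul_rpow (by positivity) (by positivity), div_rpow hc0.le ha0.le, ← exp_mul,
          rpow_neg ha0.le, div_inv_eq_mul]
        rw [show (a ^ 2 - u ^ 2) / 2 * -m = m * (u ^ 2 - a ^ 2) / 2 by ring]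
        ring

lemma gauss_mixture_bound (δ v : ℝ) (hδ0 : 0 < δ) (hδ1 : δ < 1) (hv : 0 < v) :
    ∃ C : ℝ, 0 < C ∧ ∀ (a : ℝ) (n : ℕ), 1 ≤ a → (n : ℝ) = exp (a ^ 2 / 2) →
      ∫⁻ u, (gaussianReal 0 1 (Set.Iic u)) ^ n ∂(gaussianReal (δ * a) v.toNNReal) ≤
        ENNReal.ofReal (C * exp (-((1 - δ) ^ 2 / v * (a ^ 2 / 2))) * a ^ ((1 - δ) / v - 1)) := by
  set β : ℝ := (1 - δ) / v with hβ
  have hβ0 : 0 < β := div_pos (by linarith) hv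
  have hβv : β < 1 / v := by rw [hβ]; gcongr; linarith
  obtain ⟨m, hm1, hm2⟩ := exists_between hβv
  have hm0 : 0 < m := by linarith
  have hmβ : 0 < m - β := by linarith
  have hmv : m * v < 1 := by rwa [lt_div_iff₀ hv] at hm2
  set K : ℝ := m ^ m * ((√(2 * π))⁻¹ * exp (-3 / 2)) ^ (-m) with hK
  have hK0 : 0 < K := by positivity
  set s : ℝ := (√(2 * π * v))⁻¹ with hs
  have hs0 : 0 < s := by positivity
  refine ⟨s * (K / (m - β)) + s * (1 / β), by positivity, fun a n ha hn => ?_⟩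
  have ha0 : 0 < a := by linarith
  have hvn : v.toNNReal ≠ 0 := by simpa using hv
  have hvc : ((v.toNNReal : NNReal) : ℝ) = v := Real.coe_toNNReal v hv.le
  set E : ℝ := exp (-((1 - δ) ^ 2 / v * (a ^ 2 / 2))) with hE
  set u₀ : ℝ := a - log a / a with hu₀
  have hu₀a : u₀ ≤ a := by
    have : 0 ≤ log a / a := div_nonneg (log_nonneg ha) ha0.le
    linarith
  have hmeasF : Measurable fun u : ℝ => (gaussianReal 0 1 (Set.Iic u)) ^ n := by
    refine Measurable.pow_const ?_ n
    exact Monotone.measurable fun x y hxy => measure_mono (Set.Iic_subset_Iic.2 hxy)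
  have hFreal : ∀ u : ℝ, (gaussianReal 0 1 (Set.Iic u)) ^ n =
      ENNReal.ofReal ((gaussianReal 0 1).real (Set.Iic u) ^ n) := by
    intro u
    rw [ENNReal.ofReal_pow measureReal_nonneg, ofReal_measureReal]
  rw [gaussianReal_of_var_ne_zero _ hvn,
    lintegral_withDensity_eq_lintegral_mul _ (measurable_gaussianPDF _ _) hmeasF,
    ← lintegral_add_compl _ (measurableSet_Iic (a := u₀)), Set.compl_Iic]
  have hpdf : ∀ u, gaussianPDFReal (δ * a) v.toNNReal u = s * exp (-(u - δ * a) ^ 2 / (2 * v)) := by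
    intro u; simp only [gaussianPDFReal, hvc, hs]
  have hpoint : ∀ u, (gaussianPDF (δ * a) v.toNNReal * fun u => (gaussianReal 0 1 (Set.Iic u)) ^ n) u
      = ENNReal.ofReal (s * exp (-(u - δ * a) ^ 2 / (2 * v)) *
        (gaussianReal 0 1).real (Set.Iic u) ^ n) := by
    intro u
    rw [Pi.mul_apply, hFreal, gaussianPDF, hpdf, ← ENNReal.ofReal_mul (by positivity)]
  simp_rw [hpoint]
  have hb1 : ∀ u, s * exp (-(u - δ * a) ^ 2 / (2 * v)) * (gaussianReal 0 1).real (Set.Iic u) ^ n ≤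
      s * E * exp (β * a ^ 2) * exp (-(β * a) * u) := by
    intro u
    have h1 : (gaussianReal 0 1).real (Set.Iic u) ^ n ≤ 1 :=
      pow_le_one₀ measureReal_nonneg measureReal_le_one
    have h2 : exp (-(u - δ * a) ^ 2 / (2 * v)) ≤ E * exp (β * a ^ 2) * exp (-(β * a) * u) := by
      rw [hE, ← exp_add, ← exp_add]
      refine exp_le_exp.2 ?_
      rw [hβ, ← sub_nonneg]
      have : -((1 - δ) ^ 2 / v * (a ^ 2 / 2)) + (1 - δ) / v * a ^ 2 + -((1 - δ) / v * a) * u -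
          -(u - δ * a) ^ 2 / (2 * v) = (u - a) ^ 2 / (2 * v) := by field_simp; ring
      rw [this]; positivity
    calc _ ≤ s * exp (-(u - δ * a) ^ 2 / (2 * v)) * 1 :=
          mul_le_mul_of_nonneg_left h1 (by positivity)
      _ ≤ s * (E * exp (β * a ^ 2) * exp (-(β * a) * u)) * 1 := by gcongr
      _ = _ := by ring
  have hb2 : ∀ u ∈ Set.Iic u₀,
      s * exp (-(u - δ * a) ^ 2 / (2 * v)) * (gaussianReal 0 1).real (Set.Iic u) ^ n ≤
      s * K * a ^ m * E * exp (-((m - β) * a ^ 2)) * exp (((m - β) * a) * u) := by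
    intro u hu
    have h1 := gauss_cdf_pow_le m a u n hm0 ha (le_trans hu hu₀a) hn
    rw [← hK] at h1
    have h2 : exp (-(u - δ * a) ^ 2 / (2 * v)) * exp (m * (u ^ 2 - a ^ 2) / 2) ≤
        E * exp (-((m - β) * a ^ 2)) * exp (((m - β) * a) * u) := by
      rw [hE, ← exp_add, ← exp_add, ← exp_add]
      refine exp_le_exp.2 ?_
      rw [hβ, ← sub_nonneg]
      have : -((1 - δ) ^ 2 / v * (a ^ 2 / 2)) + -((m - (1 - δ) / v) * a ^ 2) +
          (m - (1 - δ) / v) * a * u - (-(u - δ * a) ^ 2 / (2 * v) + m * (u ^ 2 - a ^ 2) / 2) =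
          (1 - m * v) * (u - a) ^ 2 / (2 * v) := by field_simp; ring
      rw [this]
      have : 0 < 1 - m * v := by linarith
      positivity
    calc _ ≤ s * exp (-(u - δ * a) ^ 2 / (2 * v)) *
            (K * a ^ m * exp (m * (u ^ 2 - a ^ 2) / 2)) :=
          mul_le_mul_of_nonneg_left h1 (by positivity)
      _ = s * K * a ^ m * (exp (-(u - δ * a) ^ 2 / (2 * v)) * exp (m * (u ^ 2 - a ^ 2) / 2)) := by
          ring
      _ ≤ s * K * a ^ m * (E * exp (-((m - β) * a ^ 2)) * exp (((m - β) * a) * u)) := by gcongr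
      _ = _ := by ring
  have hau₀ : a * u₀ = a ^ 2 - log a := by rw [hu₀]; field_simp
  have hI1 : ∫⁻ u in Set.Iic u₀, ENNReal.ofReal (s * exp (-(u - δ * a) ^ 2 / (2 * v)) *
        (gaussianReal 0 1).real (Set.Iic u) ^ n) ≤
      ENNReal.ofReal (s * (K / (m - β)) * E * a ^ (β - 1)) := by
    calc _ ≤ ∫⁻ u in Set.Iic u₀, ENNReal.ofReal
          (s * K * a ^ m * E * exp (-((m - β) * a ^ 2)) * exp (((m - β) * a) * u)) :=
          setLIntegral_mono' measurableSet_Iic fun u hu => ENNReal.ofReal_le_ofReal (hb2 u hu)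
      _ = ENNReal.ofReal (∫ u in Set.Iic u₀,
          (s * K * a ^ m * E * exp (-((m - β) * a ^ 2)) * exp (((m - β) * a) * u))) := by
          rw [ofReal_integral_eq_lintegral_ofReal]
          · exact (integrableOn_exp_mul_Iic (by positivity) u₀).const_mul _
          · exact .of_forall fun u => by positivity
      _ = _ := by
          rw [integral_const_mul, integral_exp_mul_Iic (by positivity)]
          congr 1
          have e1 : exp ((m - β) * a * u₀) = exp ((m - β) * a ^ 2) * a ^ (-(m - β)) := by
            rw [mul_assoc, hau₀, rpow_def_of_pos ha0, ← exp_add]; congr 1; ring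
          have e2 : a ^ m * a ^ (-(m - β)) = a ^ β := by rw [← rpow_add ha0]; congr 1; ring
          rw [e1, rpow_sub_one ha0.ne', exp_neg, ← e2]
          field_simp
  have hI2 : ∫⁻ u in Set.Ioi u₀, ENNReal.ofReal (s * exp (-(u - δ * a) ^ 2 / (2 * v)) *
        (gaussianReal 0 1).real (Set.Iic u) ^ n) ≤
      ENNReal.ofReal (s * (1 / β) * E * a ^ (β - 1)) := by
    have hneg : -(β * a) < 0 := by have : 0 < β * a := by positivity
                                   linarith
    calc _ ≤ ∫⁻ u in Set.Ioi u₀, ENNReal.ofReal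
          (s * E * exp (β * a ^ 2) * exp (-(β * a) * u)) :=
          setLIntegral_mono' measurableSet_Ioi fun u _ => ENNReal.ofReal_le_ofReal (hb1 u)
      _ = ENNReal.ofReal (∫ u in Set.Ioi u₀,
          (s * E * exp (β * a ^ 2) * exp (-(β * a) * u))) := by
          rw [ofReal_integral_eq_lintegral_ofReal]
          · exact (integrableOn_exp_mul_Ioi hneg u₀).const_mul _
          · exact .of_forall fun u => by positivity
      _ = _ := by
          rw [integral_const_mul, integral_exp_mul_Ioi hneg]
          congr 1
          have e1 : exp (-(β * a) * u₀) = (exp (β * a ^ 2))⁻¹ * a ^ β := by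
            rw [show -(β * a) * u₀ = -(β * (a * u₀)) by ring, hau₀, rpow_def_of_pos ha0, ← exp_neg,
              ← exp_add]; congr 1; ring
          rw [e1, rpow_sub_one ha0.ne']
          field_simp
  refine (add_le_add hI1 hI2).trans (le_of_eq ?_)
  rw [← ENNReal.ofReal_add (by positivity) (by positivity)]
  congr 1
  ring

lemma vec_hasGaussianLaw {Ω : Type*} [MeasureSpace Ω] {n : ℕ}
    {X : Fin n → Ω → ℝ} {R : Matrix (Fin n) (Fin n) ℝ} (h : IsCenteredGaussianVec X R) :
    HasGaussianLaw (fun ω i => X i ω) (ℙ : Measure Ω) where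
  isGaussian_map := by
    refine isGaussian_of_map_eq_gaussianReal fun L =>
      ⟨0, (∑ i, ∑ j, L (Pi.single i 1) * R i j * L (Pi.single j 1)).toNNReal, ?_⟩
    rw [Measure.map_map (by fun_prop) (measurable_pi_lambda _ h.1),
      ← h.2.2 (fun i => L (Pi.single i 1))]
    congr 1
    funext ω
    simp only [Function.comp]
    conv_lhs => rw [← Finset.univ_sum_single (fun i => X i ω)]
    rw [map_sum]
    refine Finset.sum_congr rfl fun i _ => ?_
    have : (Pi.single i (X i ω) : Fin n → ℝ) = X i ω • Pi.single i 1 := by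
      rw [← Pi.single_smul]; simp
    rw [this, map_smul, smul_eq_mul, mul_comm]

lemma vec_law {Ω : Type*} [MeasureSpace Ω] {n : ℕ}
    {X : Fin n → Ω → ℝ} {R : Matrix (Fin n) (Fin n) ℝ} (h : IsCenteredGaussianVec X R)
    (i : Fin n) : Measure.map (X i) (ℙ : Measure Ω) = gaussianReal 0 1 := by
  have := h.2.2 (Pi.single i 1)
  simpa [Pi.single_apply, h.2.1 i] using this

lemma vec_mean {Ω : Type*} [MeasureSpace Ω] {n : ℕ}
    {X : Fin n → Ω → ℝ} {R : Matrix (Fin n) (Fin n) ℝ} (h : IsCenteredGaussianVec X R)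
    (i : Fin n) : ∫ ω, X i ω ∂(ℙ : Measure Ω) = 0 := by
  have h1 : ∫ x, x ∂(Measure.map (X i) (ℙ : Measure Ω)) = ∫ ω, X i ω ∂(ℙ : Measure Ω) :=
    integral_map (h.1 i).aemeasurable (by fun_prop)
  rw [← h1, vec_law h i, integral_id_gaussianReal]

lemma vec_var {Ω : Type*} [MeasureSpace Ω] {n : ℕ}
    {X : Fin n → Ω → ℝ} {R : Matrix (Fin n) (Fin n) ℝ} (h : IsCenteredGaussianVec X R)
    (i : Fin n) : cov[X i, X i; (ℙ : Measure Ω)] = 1 := by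
  rw [covariance_self (h.1 i).aemeasurable]
  have h1 := variance_map (μ := (ℙ : Measure Ω)) (X := fun x : ℝ => x) (Y := X i) (by fun_prop) (h.1 i).aemeasurable
  rw [vec_law h i, variance_fun_id_gaussianReal] at h1
  simpa [Function.comp_def] using h1.symm

lemma vec_cov {Ω : Type*} [MeasureSpace Ω] {n : ℕ}
    {X : Fin n → Ω → ℝ} {R : Matrix (Fin n) (Fin n) ℝ} (h : IsCenteredGaussianVec X R)
    {ρ : ℝ} (hρ : 0 < ρ) {i j : Fin n} (h1 : R i j ≤ ρ) (h2 : R j i ≤ ρ) :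
    cov[X i, X j; (ℙ : Measure Ω)] ≤ ρ := by
  have hg := vec_hasGaussianLaw h
  have hP := hg.isProbabilityMeasure
  have hi : MemLp (X i) 2 (ℙ : Measure Ω) := (hg.eval i).memLp_two
  have hj : MemLp (X j) 2 (ℙ : Measure Ω) := (hg.eval j).memLp_two
  have hl := h.2.2 (Pi.single i 1 + Pi.single j 1)
  have hs : (∑ k, ∑ l, (Pi.single i 1 + Pi.single j 1 : Fin n → ℝ) k * R k l *
      (Pi.single i 1 + Pi.single j 1 : Fin n → ℝ) l) = 2 + R i j + R j i := by
    simp [Pi.single_apply, add_mul, mul_add, Finset.sum_add_distrib, h.2.1]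
    ring
  have hf : (fun ω => ∑ k, (Pi.single i 1 + Pi.single j 1 : Fin n → ℝ) k * X k ω) =
      X i + X j := by
    funext ω
    simp [Pi.single_apply, add_mul, Finset.sum_add_distrib]
  rw [hs, hf] at hl
  have hv := variance_map (μ := (ℙ : Measure Ω)) (X := fun x : ℝ => x) (Y := X i + X j)
    (by fun_prop) ((h.1 i).add (h.1 j)).aemeasurable
  rw [hl, variance_fun_id_gaussianReal] at hv
  have e : (fun x : ℝ => x) ∘ (X i + X j) = X i + X j := rfl
  rw [e, variance_add hi hj, ← covariance_self (h.1 i).aemeasurable,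
    ← covariance_self (h.1 j).aemeasurable, vec_var h, vec_var h, Real.coe_toNNReal'] at hv
  have : max (2 + R i j + R j i) 0 ≤ 2 + 2 * ρ := max_le (by linarith) (by linarith)
  linarith

lemma pi_gauss_law (n : ℕ) : IsGaussian (Measure.pi (fun _ : Fin n => gaussianReal 0 1)) := by
  have h1 : iIndepFun (fun (i : Fin n) (ω : Fin n → ℝ) => (id (ω i) : ℝ))
      (Measure.pi (fun _ : Fin n => gaussianReal 0 1)) :=
    iIndepFun_pi (X := fun _ => id) (fun _ => aemeasurable_id)
  have h0 : ∀ i : Fin n, HasGaussianLaw (fun ω : Fin n → ℝ => (id (ω i) : ℝ))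
      (Measure.pi (fun _ : Fin n => gaussianReal 0 1)) := by
    intro i
    refine ⟨?_⟩
    have h3 := (measurePreserving_eval (fun _ : Fin n => gaussianReal 0 1) i).map_eq
    change IsGaussian (Measure.map (Function.eval i) (Measure.pi fun _ : Fin n => gaussianReal 0 1))
    rw [h3]
    infer_instance
  have h2 := (iIndepFun.hasGaussianLaw h0 h1).isGaussian_map
  simpa using h2

/-- standard Gaussian measure on `ℝ × ℝⁿ` -/
noncomputable def stdQ (n : ℕ) : Measure (ℝ × (Fin n → ℝ)) :=
  (gaussianReal 0 1).prod (Measure.pi fun _ : Fin n => gaussianReal 0 1)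

instance (n : ℕ) : IsGaussian (stdQ n) := by
  have := pi_gauss_law n
  unfold stdQ
  infer_instance

/-- the equicorrelated family -/
noncomputable def eqY (s c : ℝ) {n : ℕ} (i : Fin n) (p : ℝ × (Fin n → ℝ)) : ℝ :=
  s * p.1 + c * p.2 i

lemma eqY_law (s c : ℝ) (n : ℕ) :
    HasGaussianLaw (fun p (i : Fin n) => eqY s c i p) (stdQ n) := by
  have h := (IsGaussian.hasGaussianLaw_id (μ := stdQ n)).map_fun
    (ContinuousLinearMap.pi (fun i : Fin n => s • ContinuousLinearMap.fst ℝ ℝ (Fin n → ℝ)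
      + c • ((ContinuousLinearMap.proj (R := ℝ) (φ := fun _ : Fin n => ℝ) i).comp
        (ContinuousLinearMap.snd ℝ ℝ (Fin n → ℝ)))))
  exact h

lemma stdQ_fst_map (n : ℕ) : (stdQ n).map (fun p => p.1) = gaussianReal 0 1 :=
  measurePreserving_fst.map_eq

lemma stdQ_snd_map (n : ℕ) (i : Fin n) :
    (stdQ n).map (fun p => p.2 i) = gaussianReal 0 1 :=
  ((measurePreserving_eval (fun _ : Fin n => gaussianReal 0 1) i).comp
    (measurePreserving_snd (μ := gaussianReal 0 1)
      (ν := Measure.pi fun _ : Fin n => gaussianReal 0 1))).map_eq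

lemma law_mean {Ω : Type*} [MeasurableSpace Ω] {P : Measure Ω} {f : Ω → ℝ} (hf : Measurable f)
    (h : P.map f = gaussianReal 0 1) : ∫ ω, f ω ∂P = 0 := by
  have h1 : ∫ x, x ∂(Measure.map f P) = ∫ ω, f ω ∂P :=
    integral_map hf.aemeasurable (by fun_prop)
  rw [← h1, h, integral_id_gaussianReal]

lemma law_var {Ω : Type*} [MeasurableSpace Ω] {P : Measure Ω} {f : Ω → ℝ} (hf : Measurable f)
    (h : P.map f = gaussianReal 0 1) : cov[f, f; P] = 1 := by
  rw [covariance_self hf.aemeasurable]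
  have h1 := variance_map (μ := P) (X := fun x : ℝ => x) (Y := f) (by fun_prop) hf.aemeasurable
  rw [h, variance_fun_id_gaussianReal] at h1
  simpa [Function.comp_def] using h1.symm

lemma law_memLp {Ω : Type*} [MeasurableSpace Ω] {P : Measure Ω} {f : Ω → ℝ} (hf : Measurable f)
    (h : P.map f = gaussianReal 0 1) : MemLp f 2 P := by
  have : HasGaussianLaw f P := ⟨by rw [h]; infer_instance⟩
  exact this.memLp_two

lemma eqY_meas (s c : ℝ) {n : ℕ} (i : Fin n) : Measurable (eqY s c i) := by
  unfold eqY; fun_prop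

lemma eqY_mean (s c : ℝ) (n : ℕ) (i : Fin n) : ∫ p, eqY s c i p ∂(stdQ n) = 0 := by
  have h1 := law_memLp (by fun_prop) (stdQ_fst_map n)
  have h2 := law_memLp (by fun_prop) (stdQ_snd_map n i)
  unfold eqY
  rw [integral_add ((h1.integrable one_le_two).const_mul _)
    ((h2.integrable one_le_two).const_mul _), integral_const_mul, integral_const_mul,
    law_mean (by fun_prop) (stdQ_fst_map n), law_mean (by fun_prop) (stdQ_snd_map n i)]
  simp

lemma eqY_cov (s c : ℝ) (n : ℕ) (i j : Fin n) :
    cov[eqY s c i, eqY s c j; stdQ n] = s ^ 2 + if i = j then c ^ 2 else 0 := by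
  have h1 := law_memLp (by fun_prop) (stdQ_fst_map n)
  have h2 := fun i => law_memLp (by fun_prop) (stdQ_snd_map n i)
  have hG : MemLp (fun x : ℝ => x) 2 (gaussianReal 0 1) :=
    law_memLp measurable_id Measure.map_id
  have hz : ∀ i, cov[fun p : ℝ × (Fin n → ℝ) => p.1, fun p => p.2 i; stdQ n] = 0 := fun i =>
    covariance_fst_snd_prod (X := fun x : ℝ => x) (Y := fun x : Fin n → ℝ => x i) hG
      (law_memLp (by fun_prop) (measurePreserving_eval (fun _ : Fin n => gaussianReal 0 1) i).map_eq)
  have hz2 : ∀ i, cov[fun p => p.2 i, fun p : ℝ × (Fin n → ℝ) => p.1; stdQ n] = 0 := fun i => by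
    rw [covariance_comm, hz]
  have hij : cov[fun p : ℝ × (Fin n → ℝ) => p.2 i, fun p => p.2 j; stdQ n]
      = if i = j then 1 else 0 := by
    split_ifs with e
    · subst e
      exact law_var (by fun_prop) (stdQ_snd_map n i)
    · refine IndepFun.covariance_eq_zero ?_ (h2 i) (h2 j)
      have h3 : iIndepFun (fun (i : Fin n) (ω : Fin n → ℝ) => (id (ω i) : ℝ))
        (Measure.pi (fun _ : Fin n => gaussianReal 0 1)) :=
        iIndepFun_pi (X := fun _ => id) (fun _ => aemeasurable_id)
      have h4 := h3.indepFun e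
      rw [indepFun_iff_measure_inter_preimage_eq_mul] at h4 ⊢
      intro S T hS hT
      have key : ∀ A : Set (Fin n → ℝ), MeasurableSet A → stdQ n (Prod.snd ⁻¹' A) =
          Measure.pi (fun _ : Fin n => gaussianReal 0 1) A := fun A hA =>
        (measurePreserving_snd (μ := gaussianReal 0 1)
          (ν := Measure.pi fun _ : Fin n => gaussianReal 0 1)).measure_preimage
          hA.nullMeasurableSet
      have hA : ∀ (i : Fin n) (S : Set ℝ), MeasurableSet S →
        MeasurableSet ((fun ω : Fin n → ℝ => id (ω i)) ⁻¹' S) := fun i S hS =>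
          (measurable_pi_apply i) hS
      have := h4 S T hS hT
      rw [← key _ (hA i S hS), ← key _ (hA j T hT), ← key _ ((hA i S hS).inter (hA j T hT))] at this
      exact this
  have e : ∀ i : Fin n, eqY s c i = (fun p : ℝ × (Fin n → ℝ) => s * p.1) + fun p => c * p.2 i :=
    fun i => rfl
  rw [e i, e j, covariance_add_left (h1.const_mul _) ((h2 i).const_mul _)
      ((h1.const_mul _).add ((h2 j).const_mul _)),
    covariance_add_right (h1.const_mul _) (h1.const_mul _) ((h2 j).const_mul _),
    covariance_add_right ((h2 i).const_mul _) (h1.const_mul _) ((h2 j).const_mul _)]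
  simp only [covariance_const_mul_left, covariance_const_mul_right, hz, hz2, hij,
    law_var measurable_fst (stdQ_fst_map n)]
  split_ifs <;> ring

lemma law_no_atom {Ω : Type*} [MeasurableSpace Ω] {P : Measure Ω} {f : Ω → ℝ} (hf : Measurable f)
    (h : HasGaussianLaw f P) (h1 : cov[f, f; P] = 1) (t : ℝ) : P {ω | f ω = t} = 0 := by
  have h2 := h.map_eq_gaussianReal
  rw [← covariance_self hf.aemeasurable, h1] at h2
  have h3 : P {ω | f ω = t} = P.map f {t} := by
    rw [Measure.map_apply hf (measurableSet_singleton t)]; rfl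
  have : NullSingletonClass (gaussianReal (∫ ω, f ω ∂P) (1 : ℝ).toNNReal) :=
    nullSingletonClass_gaussianReal (by simp)
  rw [h3, h2, measure_singleton]

lemma slepian_stdQ {Ω : Type*} [MeasureSpace Ω] {n : ℕ}
    {X : Fin n → Ω → ℝ} {R : Matrix (Fin n) (Fin n) ℝ} (h : IsCenteredGaussianVec X R)
    {ρ : ℝ} (hρ0 : 0 < ρ) (hρ1 : ρ < 1) (hR : ∀ i j, i ≠ j → R i j ≤ ρ) (t : ℝ) :
    (ℙ : Measure Ω) {ω | ∀ i, X i ω ≤ t} ≤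
      stdQ n {p | ∀ i, eqY (√ρ) (√(1 - ρ)) i p ≤ t} := by
  have hg := vec_hasGaussianLaw h
  have hP := hg.isProbabilityMeasure
  set s := √ρ with hs
  set c := √(1 - ρ) with hc
  have hs2 : s ^ 2 = ρ := Real.sq_sqrt hρ0.le
  have hc2 : c ^ 2 = 1 - ρ := Real.sq_sqrt (by linarith)
  have mf : MeasurePreserving Prod.fst ((ℙ : Measure Ω).prod (stdQ n)) ℙ := measurePreserving_fst
  have ms : MeasurePreserving Prod.snd ((ℙ : Measure Ω).prod (stdQ n)) (stdQ n) :=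
    measurePreserving_snd
  have hXv : Measurable (fun ω i => X i ω) := measurable_pi_lambda _ h.1
  have hYv : Measurable (fun p (i : Fin n) => eqY s c i p) :=
    measurable_pi_lambda _ (fun i => eqY_meas s c i)
  have covX : ∀ i j, cov[fun p : Ω × (ℝ × (Fin n → ℝ)) => X i p.1, fun p => X j p.1;
      (ℙ : Measure Ω).prod (stdQ n)] = cov[X i, X j; ℙ] := by
    intro i j
    have := covariance_map_fun (μ := (ℙ : Measure Ω).prod (stdQ n)) (Z := Prod.fst)
      (X := X i) (Y := X j) (h.1 i).aestronglyMeasurable (h.1 j).aestronglyMeasurable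
      measurable_fst.aemeasurable
    rw [mf.map_eq] at this
    exact this.symm
  have covY : ∀ i j, cov[fun p : Ω × (ℝ × (Fin n → ℝ)) => eqY s c i p.2, fun p => eqY s c j p.2;
      (ℙ : Measure Ω).prod (stdQ n)] = cov[eqY s c i, eqY s c j; stdQ n] := by
    intro i j
    have := covariance_map_fun (μ := (ℙ : Measure Ω).prod (stdQ n)) (Z := Prod.snd)
      (X := eqY s c i) (Y := eqY s c j) (eqY_meas s c i).aestronglyMeasurable
      (eqY_meas s c j).aestronglyMeasurable
      measurable_snd.aemeasurable
    rw [ms.map_eq] at this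
    exact this.symm
  have gX : HasGaussianLaw (fun (p : Ω × (ℝ × (Fin n → ℝ))) (i : Fin n) => X i p.1)
      ((ℙ : Measure Ω).prod (stdQ n)) := by
    refine ⟨?_⟩
    have := hg.isGaussian_map
    rw [← mf.map_eq, Measure.map_map hXv measurable_fst] at this
    exact this
  have gY : HasGaussianLaw (fun (p : Ω × (ℝ × (Fin n → ℝ))) (i : Fin n) => eqY s c i p.2)
      ((ℙ : Measure Ω).prod (stdQ n)) := by
    refine ⟨?_⟩
    have := (eqY_law s c n).isGaussian_map
    rw [← ms.map_eq, Measure.map_map hYv measurable_snd] at this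
    exact this
  have hind : IndepFun (fun (p : Ω × (ℝ × (Fin n → ℝ))) (i : Fin n) => X i p.1)
      (fun p i => eqY s c i p.2) ((ℙ : Measure Ω).prod (stdQ n)) :=
    indepFun_prod hXv hYv
  have vX : ∀ i, cov[fun p : Ω × (ℝ × (Fin n → ℝ)) => X i p.1, fun p => X i p.1;
      (ℙ : Measure Ω).prod (stdQ n)] = 1 := fun i => by rw [covX, vec_var h]
  have vY : ∀ i, cov[fun p : Ω × (ℝ × (Fin n → ℝ)) => eqY s c i p.2, fun p => eqY s c i p.2;
      (ℙ : Measure Ω).prod (stdQ n)] = 1 := fun i => by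
    rw [covY, eqY_cov, hs2, if_pos rfl, hc2]; ring
  have mX : ∀ i, Measurable (fun p : Ω × (ℝ × (Fin n → ℝ)) => X i p.1) := fun i =>
    (h.1 i).comp measurable_fst
  have mY : ∀ i, Measurable (fun p : Ω × (ℝ × (Fin n → ℝ)) => eqY s c i p.2) := fun i =>
    (eqY_meas s c i).comp measurable_snd
  have main := slepian (P := (ℙ : Measure Ω).prod (stdQ n))
    (fun i p => X i p.1) (fun i p => eqY s c i p.2) mX mY
    (hind.hasGaussianLaw gX gY)
    (fun i => by
      have := integral_map (μ := (ℙ : Measure Ω).prod (stdQ n)) (φ := Prod.fst) (f := X i)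
        measurable_fst.aemeasurable (h.1 i).aestronglyMeasurable
      rw [mf.map_eq, vec_mean h] at this
      exact this.symm)
    (fun i => by
      have := integral_map (μ := (ℙ : Measure Ω).prod (stdQ n)) (φ := Prod.snd) (f := eqY s c i)
        measurable_snd.aemeasurable (eqY_meas s c i).aestronglyMeasurable
      rw [ms.map_eq, eqY_mean] at this
      exact this.symm)
    (fun i j => covariance_fst_snd_prod (hg.eval i).memLp_two ((eqY_law s c n).eval j).memLp_two)
    (fun i => by rw [vX, vY])
    (fun i j hij => by
      rw [covX, covY, eqY_cov, hs2, if_neg hij, add_zero]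
      exact vec_cov h hρ0 (hR i j hij) (hR j i hij.symm))
    t
    (fun i => law_no_atom (mX i) (gX.eval i) (vX i) t)
    (fun i => law_no_atom (mY i) (gY.eval i) (vY i) t)
  have sX : MeasurableSet {ω | ∀ i, X i ω ≤ t} := by
    rw [Set.ofPred_forall]
    exact MeasurableSet.iInter fun i => measurableSet_le (h.1 i) measurable_const
  have sY : MeasurableSet {p : ℝ × (Fin n → ℝ) | ∀ i, eqY s c i p ≤ t} := by
    rw [Set.ofPred_forall]
    exact MeasurableSet.iInter fun i => measurableSet_le (eqY_meas s c i) measurable_const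
  have e1 := mf.measure_preimage sX.nullMeasurableSet
  have e2 := ms.measure_preimage sY.nullMeasurableSet
  rw [← e1, ← e2]
  exact main

lemma stdQ_prob {n : ℕ} {s c : ℝ} (hc : 0 < c) (m : ℝ) :
    stdQ n {p | ∀ i, eqY s c i p ≤ c * m} =
      ∫⁻ u, (gaussianReal 0 1 (Set.Iic u)) ^ n ∂(gaussianReal m ((s / c) ^ 2).toNNReal) := by
  have sY : MeasurableSet {p : ℝ × (Fin n → ℝ) | ∀ i, eqY s c i p ≤ c * m} := by
    rw [Set.ofPred_forall]
    exact MeasurableSet.iInter fun i => measurableSet_le (eqY_meas s c i) measurable_const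
  have hmap : gaussianReal m ((s / c) ^ 2).toNNReal =
      (gaussianReal 0 1).map (fun z => m - s / c * z) := by
    have h1 := gaussianReal_map_const_mul (μ := 0) (v := 1) (s / c)
    have h2 := gaussianReal_map_const_sub (μ := s / c * 0) (v := NNReal.mk ((s / c) ^ 2) (sq_nonneg _) * 1) m
    rw [← h1, Measure.map_map (by fun_prop) (by fun_prop)] at h2
    have e : NNReal.mk ((s / c) ^ 2) (sq_nonneg _) * 1 = ((s / c) ^ 2).toNNReal := by
      rw [mul_one]
      ext
      simp [Real.coe_toNNReal _ (sq_nonneg (s / c))]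
    rw [e] at h2
    simpa [Function.comp_def] using h2.symm
  have hmeas : Measurable (fun u : ℝ => (gaussianReal 0 1 (Set.Iic u)) ^ n) := by
    refine Measurable.pow_const ?_ n
    exact Monotone.measurable (fun a b hab => measure_mono (Set.Iic_subset_Iic.2 hab))
  rw [hmap, lintegral_map hmeas (by fun_prop), stdQ, Measure.prod_apply sY]
  refine lintegral_congr fun z => ?_
  have : Prod.mk z ⁻¹' {p : ℝ × (Fin n → ℝ) | ∀ i, eqY s c i p ≤ c * m} =
      Set.univ.pi (fun _ : Fin n => Set.Iic (m - s / c * z)) := by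
    ext g
    simp only [Set.mem_preimage, Set.mem_ofPred_eq, Set.mem_pi, Set.mem_univ, true_imp_iff,
      Set.mem_Iic, eqY]
    refine forall_congr' fun i => ?_
    rw [le_sub_iff_add_le, ← mul_le_mul_iff_right₀ (b := g i + s / c * z) hc]
    have : c * (g i + s / c * z) = s * z + c * g i := by field_simp; ring
    rw [this]
  rw [this, Measure.pi_pi]
  simp

theorem sharp_lower_tail_upper_bound (δ₀ ρ₀ : ℝ)
    (hδ : δ₀ ∈ Set.Ioo (0 : ℝ) 1) (hρ : ρ₀ ∈ Set.Ioo (0 : ℝ) 1) :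
    ∃ C : ℝ, 0 < C ∧
      ∀ (Ω : Type) [MeasureSpace Ω], IsProbabilityMeasure (ℙ : Measure Ω) →
        ∀ (n : ℕ), 2 ≤ n →
          ∀ (X : Fin n → Ω → ℝ) (R : Matrix (Fin n) (Fin n) ℝ),
            IsCenteredGaussianVec X R →
            (∀ i j, i ≠ j → R i j ≤ ρ₀) →
            (ℙ : Measure Ω) {ω | (⨆ i, X i ω)
                ≤ δ₀ * Real.sqrt (2 * (1 - ρ₀) * Real.log n)}
              ≤ ENNReal.ofReal
                  (C * (n : ℝ) ^ (-((1 - ρ₀) * (1 - δ₀) ^ 2 / ρ₀))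
                    * Real.log n ^ (((1 - ρ₀) * (1 - δ₀) / ρ₀ - 1) / 2)) := by
  obtain ⟨hδ0, hδ1⟩ := hδ
  obtain ⟨hρ0, hρ1⟩ := hρ
  have h1ρ : 0 < 1 - ρ₀ := by linarith
  obtain ⟨C, hC, hbound⟩ := gauss_mixture_bound δ₀ (ρ₀ / (1 - ρ₀)) hδ0 hδ1 (by positivity)
  refine ⟨C * 2 ^ (((1 - ρ₀) * (1 - δ₀) / ρ₀ - 1) / 2), by positivity, ?_⟩
  intro Ω _ _ n hn X R hX hR
  have hn2 : (2 : ℝ) ≤ n := by exact_mod_cast hn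
  have hn0 : (0 : ℝ) < n := by linarith
  have hlog : 1 / 2 ≤ Real.log n := by
    have h1 : Real.log 2 ≤ Real.log n := Real.log_le_log (by norm_num) hn2
    have := Real.log_two_gt_d9
    linarith
  have hlog0 : 0 < Real.log n := by linarith
  set a := √(2 * Real.log n) with ha
  have ha2 : a ^ 2 = 2 * Real.log n := Real.sq_sqrt (by linarith)
  have ha1 : 1 ≤ a := by
    rw [ha]; exact Real.one_le_sqrt.2 (by linarith)
  have hna : (n : ℝ) = exp (a ^ 2 / 2) := by
    rw [ha2, mul_div_cancel_left₀ _ (two_ne_zero), Real.exp_log hn0]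
  have hb := hbound a n ha1 hna
  have ht : δ₀ * √(2 * (1 - ρ₀) * Real.log n) = √(1 - ρ₀) * (δ₀ * a) := by
    rw [show 2 * (1 - ρ₀) * Real.log n = (1 - ρ₀) * (2 * Real.log n) by ring,
      Real.sqrt_mul h1ρ.le]
    ring
  have hv : (√ρ₀ / √(1 - ρ₀)) ^ 2 = ρ₀ / (1 - ρ₀) := by
    rw [div_pow, Real.sq_sqrt hρ0.le, Real.sq_sqrt h1ρ.le]
  have h1 := slepian_stdQ hX hρ0 hρ1 hR (√(1 - ρ₀) * (δ₀ * a))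
  rw [stdQ_prob (Real.sqrt_pos.2 h1ρ), hv] at h1
  rw [ht]
  refine le_trans (measure_mono ?_) ((h1.trans hb).trans (ENNReal.ofReal_le_ofReal (le_of_eq ?_)))
  · intro ω hω i
    exact (le_ciSup (Set.finite_range (fun i => X i ω)).bddAbove i).trans hω
  · have e1 : exp (-((1 - δ₀) ^ 2 / (ρ₀ / (1 - ρ₀)) * (a ^ 2 / 2))) =
        (n : ℝ) ^ (-((1 - ρ₀) * (1 - δ₀) ^ 2 / ρ₀)) := by
      rw [Real.rpow_def_of_pos hn0, ha2]
      congr 1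
      field_simp
    have e2 : a ^ ((1 - δ₀) / (ρ₀ / (1 - ρ₀)) - 1) =
        2 ^ (((1 - ρ₀) * (1 - δ₀) / ρ₀ - 1) / 2) *
          Real.log n ^ (((1 - ρ₀) * (1 - δ₀) / ρ₀ - 1) / 2) := by
      rw [← Real.mul_rpow (by norm_num) hlog0.le, ha, Real.sqrt_eq_rpow,
        ← Real.rpow_mul (by linarith)]
      congr 1
      field_simp
    rw [e1, e2]
    ring
end
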